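/- arXiv:2604.20120 — 2 statements merged into one kernel-verified Lean document; each statement's English description precedes it below -/
import Mathlib

section
/- The geometric Ramsey number R_EC(3,1;3,1) equals 8. That is: (a) for every set X of 8 points in the plane in general position and every 2-coloring of the unordered pairs (edges) of distinct points of X, there exist three points of X, all three of whose connecting edges have the same color, whose interior-point count with respect to X is at most 1; and (b) there exists a set of 7 points in the plane in general position with a 2-coloring of its edges admitting no such monochromatic triangle. -/
/-!
Lower bound: an explicit set of seven points, two-coloured so that its four monochromatic
triangles each contain two further points. All orientations of these points are integer
determinants, so this is a finite check (`exists_seven`).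

Upper bound: by Goodman's theorem every two-colouring of `K₆` has at least two monochromatic
triangles (`two_le_countP_isMono`). Let a colouring of eight points be a counterexample, so that
every monochromatic triangle is heavy, meaning that it has at least two interior points. Then any
six of the points span at least two heavy monochromatic triangles.

What is used of the position of the points is their order type. Let `0` be the lexicographically
smallest point, which is a vertex of the convex hull, and let `1, …, 7` be the other points sorted
by angle around it (`exists_labelling`). Then `0 j k` is counterclockwise for `j < k`, and for
`0 < i < j < k < l` the orientations of `ijk, ijl, ikl, jkl` change sign at most once. The latter
holds because any three of the four determinants satisfy a linear relation whose coefficients are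
determinants at the vertex `0` (`noTwoChanges_of_relation`). These conditions, together with the
heaviness of the monochromatic triangles, form the structure `Bad`.

That no colouring satisfies `Bad` is shown by the tree `cert`, which branches on orientations of
triples and on colours of edges. In almost every leaf the known facts leave at most one possibly
heavy, possibly monochromatic triangle among six of the labels, against Goodman's bound. The
checker `check` is proved correct in `check_sound` and evaluated on `cert` in the kernel
(`check_cert`).
-/

/-- A finite point set in the plane is in general position if no three
distinct points of it are collinear. -/
def GenPos (X : Finset (ℝ × ℝ)) : Prop :=
  ∀ p ∈ X, ∀ q ∈ X, ∀ r ∈ X, p ≠ q → p ≠ r → q ≠ r →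
    ¬ Collinear ℝ ({p, q, r} : Set (ℝ × ℝ))

/-- A finite point set is in convex position if none of its points lies in the
convex hull of the remaining ones. -/
def ConvexPos (C : Finset (ℝ × ℝ)) : Prop :=
  ∀ p ∈ C, p ∉ convexHull ℝ ((C : Set (ℝ × ℝ)) \ {p})

/-- The number of points of `X` lying in the convex hull of `C` but not
belonging to `C` (the interior-point count of `C` with respect to `X`). -/
noncomputable def intCount (X C : Finset (ℝ × ℝ)) : ℕ :=
  (((X : Set (ℝ × ℝ)) ∩ convexHull ℝ (C : Set (ℝ × ℝ))) \ (C : Set (ℝ × ℝ))).ncard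

/-- Cross product / orientation determinant of the triple `(p, q, r)`. -/
def cross (p q r : ℝ × ℝ) : ℝ :=
  (q.1 - p.1) * (r.2 - p.2) - (q.2 - p.2) * (r.1 - p.1)

/-- `r` and `s` lie strictly on opposite sides of the line through `p` and `q`. -/
def OppSides (p q r s : ℝ × ℝ) : Prop :=
  cross p q r * cross p q s < 0

/-- The number of points of `X`, other than `p, q, r, s`, lying in the region
`conv {p,q,r} ∪ conv {p,q,s}` of the quadrilateral with diagonal `pq`. -/
noncomputable def quadCount (X : Finset (ℝ × ℝ)) (p q r s : ℝ × ℝ) : ℕ :=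
  (((X : Set (ℝ × ℝ)) ∩
      (convexHull ℝ ({p, q, r} : Set (ℝ × ℝ)) ∪ convexHull ℝ ({p, q, s} : Set (ℝ × ℝ)))) \
    ({p, q, r, s} : Set (ℝ × ℝ))).ncard

namespace RamseyEC

/-! ### Two monochromatic triangles in every two-coloured `K₆` -/

/-- The twenty triples of a list of six labels. -/
def triplesOf (a b c d e f : ℕ) : List (ℕ × ℕ × ℕ) :=
  [(a, b, c), (a, b, d), (a, b, e), (a, b, f), (a, c, d), (a, c, e), (a, c, f), (a, d, e),
   (a, d, f), (a, e, f), (b, c, d), (b, c, e), (b, c, f), (b, d, e), (b, d, f), (b, e, f),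
   (c, d, e), (c, d, f), (c, e, f), (d, e, f)]

/-- The triangle `t = (a, b, c)` is monochromatic for the colouring `red`. Only the values
`red a b` with `a < b` are ever used, so no symmetry is required. -/
def isMono (red : ℕ → ℕ → Bool) (t : ℕ × ℕ × ℕ) : Bool :=
  (red t.1 t.2.1 == red t.1 t.2.2) && (red t.1 t.2.1 == red t.2.1 t.2.2)

lemma cast_isMono (red : ℕ → ℕ → Bool) (a b c : ℕ) :
    ((if isMono red (a, b, c) = true then 1 else 0 : ℕ) : ℤ) =
      1 - (red a b).toNat - (red a c).toNat - (red b c).toNat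
        + (red a b).toNat * (red a c).toNat + (red a b).toNat * (red b c).toNat
        + (red a c).toNat * (red b c).toNat := by
  cases h₁ : red a b <;> cases h₂ : red a c <;> cases h₃ : red b c <;> simp [isMono, h₁, h₂, h₃]

lemma toNat_sq (x : Bool) : (x.toNat : ℤ) * x.toNat = x.toNat := by cases x <;> rfl

lemma two_three (s : ℤ) : 0 ≤ (s - 2) * (s - 3) := by
  rcases le_or_gt s 2 with h | h <;> nlinarith

/-- Goodman's bound for six points. If `s` is the red degree of a vertex, then the number of
monochromatic triangles equals `2 + ½ ∑ (s - 2) (s - 3)`, the sum being over the six vertices. -/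
lemma two_le_countP_isMono (red : ℕ → ℕ → Bool) (a b c d e f : ℕ) :
    2 ≤ (triplesOf a b c d e f).countP (isMono red) := by
  rw [← Nat.cast_le (α := ℤ)]
  simp only [triplesOf, List.countP_cons, List.countP_nil, Nat.cast_add, Nat.cast_zero,
    cast_isMono]
  rw [Nat.cast_ofNat]
  generalize hab : (((red a b).toNat : ℕ) : ℤ) = ab
  generalize hac : (((red a c).toNat : ℕ) : ℤ) = ac
  generalize had : (((red a d).toNat : ℕ) : ℤ) = ad
  generalize hae : (((red a e).toNat : ℕ) : ℤ) = ae
  generalize haf : (((red a f).toNat : ℕ) : ℤ) = af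
  generalize hbc : (((red b c).toNat : ℕ) : ℤ) = bc
  generalize hbd : (((red b d).toNat : ℕ) : ℤ) = bd
  generalize hbe : (((red b e).toNat : ℕ) : ℤ) = be
  generalize hbf : (((red b f).toNat : ℕ) : ℤ) = bf
  generalize hcd : (((red c d).toNat : ℕ) : ℤ) = cd
  generalize hce : (((red c e).toNat : ℕ) : ℤ) = ce
  generalize hcf : (((red c f).toNat : ℕ) : ℤ) = cf
  generalize hde : (((red d e).toNat : ℕ) : ℤ) = de
  generalize hdf : (((red d f).toNat : ℕ) : ℤ) = df
  generalize hef : (((red e f).toNat : ℕ) : ℤ) = ef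
  have qab := toNat_sq (red a b); rw [hab] at qab
  have qac := toNat_sq (red a c); rw [hac] at qac
  have qad := toNat_sq (red a d); rw [had] at qad
  have qae := toNat_sq (red a e); rw [hae] at qae
  have qaf := toNat_sq (red a f); rw [haf] at qaf
  have qbc := toNat_sq (red b c); rw [hbc] at qbc
  have qbd := toNat_sq (red b d); rw [hbd] at qbd
  have qbe := toNat_sq (red b e); rw [hbe] at qbe
  have qbf := toNat_sq (red b f); rw [hbf] at qbf
  have qcd := toNat_sq (red c d); rw [hcd] at qcd
  have qce := toNat_sq (red c e); rw [hce] at qce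
  have qcf := toNat_sq (red c f); rw [hcf] at qcf
  have qde := toNat_sq (red d e); rw [hde] at qde
  have qdf := toNat_sq (red d f); rw [hdf] at qdf
  have qef := toNat_sq (red e f); rw [hef] at qef
  linarith [two_three (ab + ac + ad + ae + af), two_three (ab + bc + bd + be + bf),
    two_three (ac + bc + cd + ce + cf), two_three (ad + bd + cd + de + df),
    two_three (ae + be + ce + de + ef), two_three (af + bf + cf + df + ef)]

/-! ### Labelled counterexamples -/

/-- The oriented triple `t` has orientation `s`, where `pos x y z` means that `x, y, z` is a
counterclockwise triple; a negative triple is one that is counterclockwise after exchanging its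
last two labels. -/
def Sgn (pos : ℕ → ℕ → ℕ → Prop) (s : Bool) (t : ℕ × ℕ × ℕ) : Prop :=
  match s with
  | true => pos t.1 t.2.1 t.2.2
  | false => pos t.1 t.2.2 t.2.1

/-- Along the triples `X, Y, Z` the orientation does not change twice. -/
def NoTwoChanges (pos : ℕ → ℕ → ℕ → Prop) (X Y Z : ℕ × ℕ × ℕ) : Prop :=
  ∀ s, Sgn pos s X → Sgn pos (!s) Y → ¬ Sgn pos s Z

/-- `d` is in the triangle `a b c`, expressed by orientations only: the triples `abc`, `abd`,
`bcd`, `cad` do not have opposite orientations. -/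
def InTri (pos : ℕ → ℕ → ℕ → Prop) (a b c d : ℕ) : Prop :=
  ¬ ((pos a b c ∨ pos a b d ∨ pos b c d ∨ pos c a d) ∧
     (pos a c b ∨ pos b a d ∨ pos c b d ∨ pos a c d))

/-- The combinatorial data of eight labelled points and a colouring in which every monochromatic
triangle has at least two interior points. The point `0` is a vertex of the convex hull, and the
others are labelled in counterclockwise order as seen from it. -/
structure Bad (pos : ℕ → ℕ → ℕ → Prop) (red : ℕ → ℕ → Bool) : Prop where
  cyc : ∀ x y z, pos x y z → pos y z x
  asymm : ∀ x y z, pos x y z → ¬ pos x z y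
  total : ∀ i j k, i < j → j < k → k < 8 → pos i j k ∨ pos i k j
  zero : ∀ j k, 0 < j → j < k → k < 8 → pos 0 j k
  quad₁ : ∀ i j k l, 0 < i → i < j → j < k → k < l → l < 8 →
    NoTwoChanges pos (i, j, k) (i, j, l) (i, k, l)
  quad₂ : ∀ i j k l, 0 < i → i < j → j < k → k < l → l < 8 →
    NoTwoChanges pos (i, j, k) (i, j, l) (j, k, l)
  quad₃ : ∀ i j k l, 0 < i → i < j → j < k → k < l → l < 8 →
    NoTwoChanges pos (i, j, k) (i, k, l) (j, k, l)
  quad₄ : ∀ i j k l, 0 < i → i < j → j < k → k < l → l < 8 →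
    NoTwoChanges pos (i, j, l) (i, k, l) (j, k, l)
  heavy : ∀ a b c, a < b → b < c → c < 8 → isMono red (a, b, c) = true →
    ∃ d e, d < 8 ∧ e < 8 ∧ d ≠ e ∧ (d ≠ a ∧ d ≠ b ∧ d ≠ c) ∧ (e ≠ a ∧ e ≠ b ∧ e ≠ c) ∧
      InTri pos a b c d ∧ InTri pos a b c e

/-! ### The certificate checker -/

/-- Bit `n` of `K`. This form evaluates faster in the kernel than `Nat.testBit`. -/
def bit (K n : ℕ) : Bool := Nat.ble 1 (Nat.land (Nat.shiftRight K n) 1)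

/-- The number with octal digits `x y z`. -/
def idx (x y z : ℕ) : ℕ := Nat.add (Nat.mul (Nat.add (Nat.mul x 8) y) 8) z

/-- A bit set `K` of orientation facts contains the fact that `x y z` is counterclockwise. -/
def known (K x y z : ℕ) : Bool := bit K (idx x y z)

/-- Adds to `K` the fact that `x y z` is counterclockwise, with its cyclic rotations. -/
def learn (K x y z : ℕ) : ℕ :=
  K ||| 1 <<< idx x y z ||| 1 <<< idx y z x ||| 1 <<< idx z x y

/-- The fact that `t` has orientation `s` is in `K`. -/
def knownS (K : ℕ) (s : Bool) (t : ℕ × ℕ × ℕ) : Bool :=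
  match s with
  | true => known K t.1 t.2.1 t.2.2
  | false => known K t.1 t.2.2 t.2.1

/-- Adds to `K` the fact that `t` has orientation `s`. -/
def learnS (K : ℕ) (s : Bool) (t : ℕ × ℕ × ℕ) : ℕ :=
  match s with
  | true => learn K t.1 t.2.1 t.2.2
  | false => learn K t.1 t.2.2 t.2.1

/-- Unit propagation for the rule that `X, Y, Z` do not have the orientations `s, !s, s`. -/
def infer (K : ℕ) (s : Bool) (X Y Z : ℕ × ℕ × ℕ) : ℕ :=
  let K := cond (knownS K s X && knownS K (!s) Y) (learnS K (!s) Z) K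
  let K := cond (knownS K s X && knownS K s Z) (learnS K s Y) K
  cond (knownS K (!s) Y && knownS K s Z) (learnS K (!s) X) K

def inferBoth (K : ℕ) (X Y Z : ℕ × ℕ × ℕ) : ℕ :=
  infer (infer K true X Y Z) false X Y Z

/-- Unit propagation for the four rules `NoTwoChanges` attached to `i < j < k < l`. -/
def closeQuad (K i j k l : ℕ) : ℕ :=
  let K := inferBoth K (i, j, k) (i, j, l) (i, k, l)
  let K := inferBoth K (i, j, k) (i, j, l) (j, k, l)
  let K := inferBoth K (i, j, k) (i, k, l) (j, k, l)
  inferBoth K (i, j, l) (i, k, l) (j, k, l)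

/-- The facts in `K` refute `InTri` for the point `d` and the triangle `a b c`. -/
def outside (K a b c d : ℕ) : Bool :=
  (known K a b c || known K a b d || known K b c d || known K c a d) &&
  (known K a c b || known K b a d || known K c b d || known K a c d)

/-- The labels that are not vertices of `a b c` and may still lie in that triangle. -/
def inner (K a b c : ℕ) : List ℕ :=
  [0, 1, 2, 3, 4, 5, 6, 7].filter fun d =>
    !(Nat.beq d a || Nat.beq d b || Nat.beq d c || outside K a b c d)

/-- The facts in `K` force the triangle `a b c` to have at most one interior point. -/
def light (K a b c : ℕ) : Bool := Nat.ble (inner K a b c).length 1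

/-- A bit set `E` of colour facts contains the fact that the edge `a b` is red. -/
def isRed (E a b : ℕ) : Bool := bit E (Nat.add (Nat.mul 8 a) b)

/-- A bit set `E` of colour facts contains the fact that the edge `a b` is not red. -/
def isBlue (E a b : ℕ) : Bool := bit E (Nat.add 64 (Nat.add (Nat.mul 8 a) b))

/-- The facts in `E` give two edges of the triangle `a b c` different colours. -/
def bichrom (E a b c : ℕ) : Bool :=
  (isRed E a b || isRed E a c || isRed E b c) && (isBlue E a b || isBlue E a c || isBlue E b c)

/-- The facts in `E` give all edges of the triangle `a b c` the same colour. -/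
def monochrom (E a b c : ℕ) : Bool :=
  (isRed E a b && isRed E a c && isRed E b c) || (isBlue E a b && isBlue E a c && isBlue E b c)

/-- The list is increasing with all entries below `8`. -/
def incr (l : List ℕ) : Bool :=
  match l with
  | [] => true
  | a :: l => (match l with
    | [] => Nat.blt a 8
    | b :: _ => Nat.blt a b) && incr l

/-- Among the six labels other than `x` and `y`, at most one triangle is neither known to be
bichromatic nor known to have at most one interior point. -/
def sixOK (K E x y : ℕ) : Bool :=
  match [0, 1, 2, 3, 4, 5, 6, 7].filter (fun d => !(Nat.beq d x || Nat.beq d y)) with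
  | [a, b, c, d, e, f] => incr [a, b, c, d, e, f] &&
      Nat.ble ((triplesOf a b c d e f).countP fun t =>
        !(bichrom E t.1 t.2.1 t.2.2) && !(light K t.1 t.2.1 t.2.2)) 1
  | _ => false

/-- Refutation trees for `Bad`:
* `tri i j k P N` branches on the orientation of `i j k`, with `P` for counterclockwise;
* `edge a b R B` branches on the colour of the edge `a b`, with `R` for red;
* `quad i j k l C` propagates along `i < j < k < l` and goes on with `C`;
* `six x y` closes a branch by Goodman's bound for the six labels other than `x` and `y`;
* `mono a b c` closes a branch in which `a b c` is monochromatic with at most one interior point. -/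
inductive Cert where
  | tri (i j k : ℕ) (P N : Cert)
  | edge (a b : ℕ) (R B : Cert)
  | quad (i j k l : ℕ) (C : Cert)
  | six (x y : ℕ)
  | mono (a b c : ℕ)

/-- `check K E t` verifies that the tree `t` refutes the orientation facts `K` together with the
colour facts `E`. -/
def check (K E : ℕ) (t : Cert) : Bool :=
  match t with
  | .tri i j k P N => incr [i, j, k] && (check (learn K i j k) E P && check (learn K i k j) E N)
  | .edge a b R B => incr [a, b] && (check K (E ||| 1 <<< (8 * a + b)) R &&
      check K (E ||| 1 <<< (64 + (8 * a + b))) B)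
  | .quad i j k l C => incr [0, i, j, k, l] && check (closeQuad K i j k l) E C
  | .six x y => sixOK K E x y
  | .mono a b c => incr [a, b, c] && (monochrom E a b c && light K a b c)

/-- The pairs `j < k` of labels in `1, …, 7`. -/
def pairs : List (ℕ × ℕ) :=
  [(1, 2), (1, 3), (1, 4), (1, 5), (1, 6), (1, 7), (2, 3), (2, 4), (2, 5), (2, 6), (2, 7),
   (3, 4), (3, 5), (3, 6), (3, 7), (4, 5), (4, 6), (4, 7), (5, 6), (5, 7), (6, 7)]

/-- The facts that `0 j k` is counterclockwise for `0 < j < k < 8`. -/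
def K0 : ℕ := pairs.foldl (fun K t => learn K 0 t.1 t.2) 0

/-! ### Soundness of the checker -/

section Soundness

variable {pos : ℕ → ℕ → ℕ → Prop} {red : ℕ → ℕ → Bool}

lemma bit_eq (K n : ℕ) : bit K n = K.testBit n := by
  have h : Nat.land (Nat.shiftRight K n) 1 = (K >>> n) % 2 := Nat.and_one_is_mod _
  rw [bit, h, Nat.testBit_eq_decide_div_mod_eq, Nat.shiftRight_eq_div_pow, Bool.eq_iff_iff,
    Nat.ble_eq, decide_eq_true_iff]
  omega

lemma idx_eq (x y z : ℕ) : idx x y z = (x * 8 + y) * 8 + z := rfl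

/-- All facts in `K` are true. The fact stored in bit `n` concerns the octal digits of `n`. -/
def OrientInv (pos : ℕ → ℕ → ℕ → Prop) (K : ℕ) : Prop :=
  ∀ n, K.testBit n = true → pos (n / 64) (n / 8 % 8) (n % 8)

/-- All colour facts in `E` are true. -/
def ColInv (red : ℕ → ℕ → Bool) (E : ℕ) : Prop :=
  ∀ n, E.testBit n = true → red (n % 64 / 8) (n % 8) = decide (n < 64)

lemma pos_of_known {K x y z : ℕ} (h : OrientInv pos K) (hy : y < 8) (hz : z < 8)
    (hk : known K x y z = true) : pos x y z := by
  rw [known, bit_eq, idx_eq] at hk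
  have := h _ hk
  rwa [show ((x * 8 + y) * 8 + z) / 64 = x by omega,
    show ((x * 8 + y) * 8 + z) / 8 % 8 = y by omega,
    show ((x * 8 + y) * 8 + z) % 8 = z by omega] at this

lemma orientInv_bit {K x y z : ℕ} (h : OrientInv pos K) (hy : y < 8) (hz : z < 8)
    (hp : pos x y z) : OrientInv pos (K ||| 1 <<< idx x y z) := by
  intro n hn
  rw [Nat.testBit_or, Bool.or_eq_true, Nat.one_shiftLeft, Nat.testBit_two_pow,
    decide_eq_true_iff, idx_eq] at hn
  rcases hn with hn | rfl
  · exact h n hn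
  · rwa [show ((x * 8 + y) * 8 + z) / 64 = x by omega,
      show ((x * 8 + y) * 8 + z) / 8 % 8 = y by omega,
      show ((x * 8 + y) * 8 + z) % 8 = z by omega]

lemma orientInv_learn (hb : Bad pos red) {K x y z : ℕ} (h : OrientInv pos K) (hx : x < 8)
    (hy : y < 8) (hz : z < 8) (hp : pos x y z) : OrientInv pos (learn K x y z) :=
  orientInv_bit (orientInv_bit (orientInv_bit h hy hz hp) hz hx (hb.cyc _ _ _ hp)) hx hy
    (hb.cyc _ _ _ (hb.cyc _ _ _ hp))

/-- A triple of increasing labels. -/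
def Inc (t : ℕ × ℕ × ℕ) : Prop := t.1 < t.2.1 ∧ t.2.1 < t.2.2 ∧ t.2.2 < 8

lemma sgn_of_knownS {K : ℕ} {s : Bool} {t : ℕ × ℕ × ℕ} (h : OrientInv pos K) (ht : Inc t)
    (hk : knownS K s t = true) : Sgn pos s t := by
  obtain ⟨h1, h2, h3⟩ := ht
  cases s
  · exact pos_of_known h h3 (h2.trans h3) hk
  · exact pos_of_known h (h2.trans h3) h3 hk

lemma orientInv_learnS (hb : Bad pos red) {K : ℕ} {s : Bool} {t : ℕ × ℕ × ℕ}
    (h : OrientInv pos K) (ht : Inc t) (hk : Sgn pos s t) : OrientInv pos (learnS K s t) := by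
  obtain ⟨h1, h2, h3⟩ := ht
  cases s
  · exact orientInv_learn hb h (by omega) h3 (by omega) hk
  · exact orientInv_learn hb h (by omega) (by omega) h3 hk

lemma sgn_or (hb : Bad pos red) (s : Bool) {t : ℕ × ℕ × ℕ} (ht : Inc t) :
    Sgn pos s t ∨ Sgn pos (!s) t := by
  have := hb.total _ _ _ ht.1 ht.2.1 ht.2.2
  cases s
  · exact this.symm
  · exact this

lemma orientInv_infer (hb : Bad pos red) {K : ℕ} (s : Bool) {X Y Z : ℕ × ℕ × ℕ}
    (h : OrientInv pos K) (hX : Inc X) (hY : Inc Y) (hZ : Inc Z)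
    (hc : NoTwoChanges pos X Y Z) : OrientInv pos (infer K s X Y Z) := by
  have step : ∀ {K : ℕ} {b : Bool} {s : Bool} {t : ℕ × ℕ × ℕ}, OrientInv pos K → Inc t →
      (b = true → Sgn pos s t) → OrientInv pos (cond b (learnS K s t) K) := by
    intro K b s t h ht hs
    cases b
    · exact h
    · exact orientInv_learnS hb h ht (hs rfl)
  unfold infer
  have h1 := step (b := knownS K s X && knownS K (!s) Y) (s := !s) h hZ (by
    intro hk
    rw [Bool.and_eq_true] at hk
    exact (sgn_or hb s hZ).resolve_left
      (hc s (sgn_of_knownS h hX hk.1) (sgn_of_knownS h hY hk.2)))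
  generalize cond (knownS K s X && knownS K (!s) Y) (learnS K (!s) Z) K = K1 at h1 ⊢
  have h2 := step (b := knownS K1 s X && knownS K1 s Z) (s := s) h1 hY (by
    intro hk
    rw [Bool.and_eq_true] at hk
    exact (sgn_or hb s hY).resolve_right fun hY' =>
      hc s (sgn_of_knownS h1 hX hk.1) hY' (sgn_of_knownS h1 hZ hk.2))
  dsimp only
  generalize cond (knownS K1 s X && knownS K1 s Z) (learnS K1 s Y) K1 = K2 at h2 ⊢
  refine step h2 hX ?_
  intro hk
  rw [Bool.and_eq_true] at hk
  exact (sgn_or hb s hX).resolve_left fun hX' =>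
    hc s hX' (sgn_of_knownS h2 hY hk.1) (sgn_of_knownS h2 hZ hk.2)

lemma orientInv_closeQuad (hb : Bad pos red) {K i j k l : ℕ} (h : OrientInv pos K) (hi : 0 < i)
    (hij : i < j) (hjk : j < k) (hkl : k < l) (hl : l < 8) :
    OrientInv pos (closeQuad K i j k l) := by
  have hA : Inc (i, j, k) := ⟨hij, hjk, hkl.trans hl⟩
  have hB : Inc (i, j, l) := ⟨hij, hjk.trans hkl, hl⟩
  have hC : Inc (i, k, l) := ⟨hij.trans hjk, hkl, hl⟩
  have hD : Inc (j, k, l) := ⟨hjk, hkl, hl⟩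
  have both : ∀ {K : ℕ} {X Y Z : ℕ × ℕ × ℕ}, OrientInv pos K → Inc X → Inc Y → Inc Z →
      NoTwoChanges pos X Y Z → OrientInv pos (inferBoth K X Y Z) := fun h hX hY hZ hc =>
    orientInv_infer hb false (orientInv_infer hb true h hX hY hZ hc) hX hY hZ hc
  exact both (both (both (both h hA hB hC (hb.quad₁ i j k l hi hij hjk hkl hl))
    hA hB hD (hb.quad₂ i j k l hi hij hjk hkl hl))
    hA hC hD (hb.quad₃ i j k l hi hij hjk hkl hl))
    hB hC hD (hb.quad₄ i j k l hi hij hjk hkl hl)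

lemma not_outside {K a b c d : ℕ} (h : OrientInv pos K) (ha : a < 8) (hb : b < 8)
    (hc : c < 8) (hd : d < 8) (hi : InTri pos a b c d) : outside K a b c d = false := by
  by_contra ho
  rw [Bool.not_eq_false] at ho
  simp only [outside, Bool.and_eq_true, Bool.or_eq_true, or_assoc] at ho
  refine hi ⟨ho.1.imp ?_ (Or.imp ?_ (Or.imp ?_ ?_)), ho.2.imp ?_ (Or.imp ?_ (Or.imp ?_ ?_))⟩ <;>
  · intro hk
    exact pos_of_known h (by assumption) (by assumption) hk

lemma not_light (hb : Bad pos red) {K a b c : ℕ} (h : OrientInv pos K) (hab : a < b)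
    (hbc : b < c) (hc : c < 8) (hm : isMono red (a, b, c) = true) : light K a b c = false := by
  obtain ⟨d, e, hd, he, hde, ⟨hda, hdb, hdc⟩, ⟨hea, heb, hec⟩, hid, hie⟩ :=
    hb.heavy a b c hab hbc hc hm
  have mem : ∀ d, d < 8 → d ≠ a → d ≠ b → d ≠ c → InTri pos a b c d → d ∈ inner K a b c := by
    intro d hd hda hdb hdc hi
    have ho := not_outside h (by omega) (by omega) hc hd hi
    rw [inner, List.mem_filter]
    refine ⟨by interval_cases d <;> simp, ?_⟩
    simp [ho, ← Bool.not_eq_true, Nat.beq_eq, hda, hdb, hdc]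
  have h1 := mem d hd hda hdb hdc hid
  have h2 := mem e he hea heb hec hie
  rw [← Bool.not_eq_true, light, Nat.ble_eq, not_le]
  match hl : inner K a b c, h1, h2 with
  | [x], h1, h2 =>
    rw [List.mem_singleton] at h1 h2
    exact absurd (h1.trans h2.symm) hde
  | x :: y :: l, _, _ => simp

lemma red_of_isRed {E a b : ℕ} (h : ColInv red E) (ha : a < 8) (hb : b < 8)
    (hr : isRed E a b = true) : red a b = true := by
  rw [isRed, bit_eq] at hr
  have := h _ hr
  simp only [Nat.add_eq, Nat.mul_eq] at this
  rwa [show (8 * a + b) % 64 / 8 = a by omega, show (8 * a + b) % 8 = b by omega,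
    decide_eq_true (by omega)] at this

lemma red_of_isBlue {E a b : ℕ} (h : ColInv red E) (ha : a < 8) (hb : b < 8)
    (hr : isBlue E a b = true) : red a b = false := by
  rw [isBlue, bit_eq] at hr
  have := h _ hr
  simp only [Nat.add_eq, Nat.mul_eq] at this
  rwa [show (64 + (8 * a + b)) % 64 / 8 = a by omega, show (64 + (8 * a + b)) % 8 = b by omega,
    decide_eq_false (by omega)] at this

lemma colInv_red {E a b : ℕ} (h : ColInv red E) (ha : a < 8) (hb : b < 8)
    (hr : red a b = true) : ColInv red (E ||| 1 <<< (8 * a + b)) := by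
  intro n hn
  rw [Nat.testBit_or, Bool.or_eq_true, Nat.one_shiftLeft, Nat.testBit_two_pow,
    decide_eq_true_iff] at hn
  rcases hn with hn | rfl
  · exact h n hn
  · rwa [show (8 * a + b) % 64 / 8 = a by omega, show (8 * a + b) % 8 = b by omega,
      decide_eq_true (by omega)]

lemma colInv_blue {E a b : ℕ} (h : ColInv red E) (ha : a < 8) (hb : b < 8)
    (hr : red a b = false) : ColInv red (E ||| 1 <<< (64 + (8 * a + b))) := by
  intro n hn
  rw [Nat.testBit_or, Bool.or_eq_true, Nat.one_shiftLeft, Nat.testBit_two_pow,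
    decide_eq_true_iff] at hn
  rcases hn with hn | rfl
  · exact h n hn
  · rwa [show (64 + (8 * a + b)) % 64 / 8 = a by omega, show (64 + (8 * a + b)) % 8 = b by omega,
      decide_eq_false (by omega)]

lemma isMono_of_monochrom {E a b c : ℕ} (h : ColInv red E) (ha : a < 8) (hb : b < 8)
    (hc : c < 8) (hm : monochrom E a b c = true) : isMono red (a, b, c) = true := by
  simp only [monochrom, Bool.or_eq_true, Bool.and_eq_true] at hm
  rcases hm with ⟨⟨h1, h2⟩, h3⟩ | ⟨⟨h1, h2⟩, h3⟩
  · simp [isMono, red_of_isRed h ha hb h1, red_of_isRed h ha hc h2, red_of_isRed h hb hc h3]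
  · simp [isMono, red_of_isBlue h ha hb h1, red_of_isBlue h ha hc h2, red_of_isBlue h hb hc h3]

lemma not_bichrom {E a b c : ℕ} (h : ColInv red E) (ha : a < 8) (hb : b < 8)
    (hc : c < 8) (hm : isMono red (a, b, c) = true) : bichrom E a b c = false := by
  simp only [isMono, Bool.and_eq_true, beq_iff_eq] at hm
  by_contra hbi
  rw [Bool.not_eq_false] at hbi
  simp only [bichrom, Bool.and_eq_true, Bool.or_eq_true] at hbi
  have h1 : red a b = true := by
    rcases hbi.1 with (h' | h') | h'
    · exact red_of_isRed h ha hb h'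
    · exact hm.1.trans (red_of_isRed h ha hc h')
    · exact hm.2.trans (red_of_isRed h hb hc h')
  have h2 : red a b = false := by
    rcases hbi.2 with (h' | h') | h'
    · exact red_of_isBlue h ha hb h'
    · exact hm.1.trans (red_of_isBlue h ha hc h')
    · exact hm.2.trans (red_of_isBlue h hb hc h')
  rw [h1] at h2
  exact Bool.noConfusion h2

lemma sixOK_sound (hb : Bad pos red) {K E x y : ℕ} (hK : OrientInv pos K) (hE : ColInv red E) :
    ¬ sixOK K E x y = true := by
  unfold sixOK
  split
  case h_2 => simp
  case h_1 a b c d e f _ =>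
    simp only [incr, Bool.and_eq_true, Nat.blt_eq, Nat.ble_eq, and_true]
    rintro ⟨⟨hab, hbc, hcd, hde, hef, hf⟩, hcount⟩
    have hle : (triplesOf a b c d e f).countP (isMono red) ≤
        (triplesOf a b c d e f).countP fun t =>
          !(bichrom E t.1 t.2.1 t.2.2) && !(light K t.1 t.2.1 t.2.2) := by
      refine List.countP_mono_left fun t ht hm => ?_
      obtain ⟨u, v, w⟩ := t
      have hinc : u < v ∧ v < w ∧ w < 8 := by
        simp only [triplesOf, List.mem_cons, Prod.mk.injEq, List.not_mem_nil, or_false] at ht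
        omega
      obtain ⟨h1, h2, h3⟩ := hinc
      dsimp only
      rw [not_bichrom hE (by omega) (by omega) h3 hm, not_light hb hK h1 h2 h3 hm]
      rfl
    have := two_le_countP_isMono red a b c d e f
    omega

theorem check_sound (hb : Bad pos red) (t : Cert) : ∀ {K E : ℕ}, OrientInv pos K →
    ColInv red E → ¬ check K E t = true := by
  induction t with
  | tri i j k P N ihP ihN =>
    intro K E hK hE h
    simp only [check, incr, Bool.and_eq_true, Nat.blt_eq, and_true] at h
    obtain ⟨⟨hij, hjk, hk⟩, hP, hN⟩ := h
    rcases hb.total i j k hij hjk hk with hp | hp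
    · exact ihP (orientInv_learn hb hK (by omega) (by omega) hk hp) hE hP
    · exact ihN (orientInv_learn hb hK (by omega) hk (by omega) hp) hE hN
  | edge a b R B ihR ihB =>
    intro K E hK hE h
    simp only [check, incr, Bool.and_eq_true, Nat.blt_eq, and_true] at h
    obtain ⟨⟨hab, hb8⟩, hR, hB⟩ := h
    cases hr : red a b
    · exact ihB hK (colInv_blue hE (by omega) hb8 hr) hB
    · exact ihR hK (colInv_red hE (by omega) hb8 hr) hR
  | quad i j k l C ih =>
    intro K E hK hE h
    simp only [check, incr, Bool.and_eq_true, Nat.blt_eq, and_true] at h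
    obtain ⟨⟨hi, hij, hjk, hkl, hl⟩, hC⟩ := h
    exact ih (orientInv_closeQuad hb hK hi hij hjk hkl hl) hE hC
  | six x y => exact fun hK hE => sixOK_sound hb hK hE
  | mono a b c =>
    intro K E hK hE h
    simp only [check, incr, Bool.and_eq_true, Nat.blt_eq, and_true] at h
    obtain ⟨⟨hab, hbc, hc⟩, hm, hl⟩ := h
    rw [not_light hb hK hab hbc hc
      (isMono_of_monochrom hE (by omega) (by omega) hc hm)] at hl
    exact Bool.noConfusion hl

lemma orientInv_K0 (hb : Bad pos red) : OrientInv pos K0 := by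
  have key : ∀ (l : List (ℕ × ℕ)) (K : ℕ), OrientInv pos K →
      (∀ t ∈ l, 0 < t.1 ∧ t.1 < t.2 ∧ t.2 < 8) →
      OrientInv pos (l.foldl (fun K t => learn K 0 t.1 t.2) K) := by
    intro l
    induction l with
    | nil => exact fun K h _ => h
    | cons t l ih =>
      intro K h hl
      obtain ⟨h1, h2, h3⟩ := hl t List.mem_cons_self
      exact ih _ (orientInv_learn hb h (by omega) (by omega) h3 (hb.zero _ _ h1 h2 h3))
        fun u hu => hl u (List.mem_cons_of_mem _ hu)
  refine key pairs 0 (fun n hn => ?_) (by decide)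
  rw [Nat.zero_testBit] at hn
  exact Bool.noConfusion hn

end Soundness

/-! ### The refutation -/

open Cert in
/-- A refutation tree for eight labelled points. -/
def cert : Cert :=
  tri 2 3 5 (tri 3 4 5 (quad 2 3 4 5 (tri 1 3 5 (quad 1 3 4 5 (tri 3 5 6 (quad 1 3 5 6 (quad 1 3
  5 6 (quad 2 3 5 6 (quad 2 3 5 6 (quad 3 4 5 6 (quad 1 3 4 6 (quad 2 3 4 6 (tri 3 5 7 (quad 1 3
  5 7 (quad 1 3 5 7 (quad 2 3 5 7 (quad 2 3 5 7 (quad 3 4 5 7 (quad 2 3 4 7 (tri 1 2 5 (quad 1 2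
  5 6 (quad 1 2 5 7 (six 1 4))) (quad 1 2 3 5 (six 1 4))))))))) (quad 3 5 6 7 (quad 3 5 6 7 (six
  4 7))))))))))) (quad 3 4 5 6 (tri 3 5 7 (quad 1 3 5 7 (quad 1 3 5 7 (quad 2 3 5 7 (quad 2 3 5
  7 (quad 3 4 5 7 (quad 3 5 6 7 (quad 3 5 6 7 (quad 1 3 4 7 (quad 1 3 6 7 (quad 2 3 4 7 (six 4
  6))))))))))) (quad 3 4 5 7 (tri 1 2 4 (quad 1 2 4 5 (tri 2 5 6 (quad 1 2 5 6 (quad 1 2 5 6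
  (quad 2 3 5 6 (quad 2 4 5 6 (quad 1 2 3 6 (quad 1 2 4 6 (tri 2 3 4 (quad 1 2 3 4 (six 6 7))
  (quad 1 2 3 4 (six 6 7))))))))) (tri 2 3 4 (quad 1 2 3 4 (tri 2 4 6 (quad 1 2 4 6 (quad 1 2 4
  6 (quad 2 3 4 6 (quad 1 2 3 6 (six 6 7))))) (quad 2 3 4 6 (tri 1 4 7 (six 6 7) (quad 1 3 4 7
  (six 6 7)))))) (quad 1 2 3 4 (tri 2 4 6 (quad 1 2 4 6 (quad 2 3 4 6 (tri 1 3 4 (quad 1 3 4 6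
  (six 6 7)) (six 6 7)))) (quad 2 3 4 6 (tri 1 4 7 (six 6 7) (quad 1 2 4 7 (six 6 7)))))))))
  (tri 2 3 4 (quad 1 2 3 4 (tri 2 4 6 (quad 2 3 4 6 (tri 2 6 7 (quad 2 3 6 7 (quad 2 4 6 7 (tri
  5 6 7 (tri 2 5 6 (quad 2 5 6 7 (tri 1 5 6 (quad 1 3 5 6 (quad 1 4 5 6 (quad 1 5 6 7 (quad 1 5
  6 7 (quad 1 3 6 7 (six 3 4)))))) (quad 1 2 5 6 (tri 1 3 4 (six 6 7) (tri 1 4 6 (quad 1 3 4 6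
  (six 1 7)) (six 6 7)))))) (tri 1 2 6 (quad 1 2 3 6 (quad 1 2 4 6 (six 1 7))) (quad 1 2 5 6
  (tri 1 3 4 (six 6 7) (tri 1 3 6 (quad 1 3 4 6 (six 1 7)) (six 1 7)))))) (quad 2 5 6 7 (quad 2
  5 6 7 (tri 1 5 6 (quad 1 3 5 6 (quad 1 4 5 6 (tri 1 2 5 (quad 1 2 5 6 (quad 1 2 5 7 (quad 1 2
  5 7 (quad 1 2 6 7 (six 3 4))))) (six 6 7)))) (quad 1 2 5 6 (tri 3 4 6 (six 1 7) (tri 1 3 4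
  (six 6 7) (quad 1 3 4 6 (six 6 7))))))))))) (quad 2 3 6 7 (quad 2 4 6 7 (tri 2 5 6 (tri 3 4 6
  (six 1 7) (quad 3 4 6 7 (tri 1 3 4 (six 6 7) (quad 1 3 4 6 (quad 1 3 4 7 (quad 1 2 3 6 (quad 1
  2 5 6 (six 6 7)))))))) (six 1 7)))))) (quad 1 2 4 6 (quad 1 2 4 6 (quad 2 3 4 6 (quad 2 4 5 6
  (quad 1 2 5 6 (tri 4 6 7 (quad 4 5 6 7 (tri 2 4 7 (quad 2 3 4 7 (quad 2 4 6 7 (tri 2 3 6 (tri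
  3 4 7 (quad 3 4 6 7 (six 1 6)) (tri 1 3 4 (six 0 7) (quad 1 3 4 7 (quad 1 2 3 7 (tri 1 2 5
  (quad 1 2 5 7 (six 1 3)) (six 0 7)))))) (quad 1 2 3 6 (quad 2 3 6 7 (tri 1 2 5 (tri 1 2 7
  (quad 1 2 3 7 (quad 1 2 4 7 (quad 1 2 6 7 (tri 1 3 4 (six 3 6) (quad 1 3 4 7 (six 1 2))))))
  (quad 1 2 5 7 (six 1 6))) (six 6 7))))))) (quad 1 2 4 7 (quad 1 2 4 7 (quad 2 3 4 7 (quad 2 4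
  5 7 (tri 1 3 4 (six 6 7) (quad 1 3 4 6 (quad 1 3 4 7 (tri 2 6 7 (six 0 5) (quad 1 2 6 7 (six 0
  5)))))))))))) (quad 1 4 6 7 (quad 1 4 6 7 (quad 2 4 6 7 (quad 2 4 6 7 (quad 3 4 6 7 (quad 3 4
  6 7 (quad 1 2 4 7 (quad 2 4 5 7 (tri 1 3 4 (six 6 7) (quad 1 3 4 6 (six 0 5)))))))))))))))))))
  (quad 1 2 3 4 (tri 2 4 6 (quad 2 3 4 6 (tri 2 4 7 (quad 2 3 4 7 (tri 2 3 6 (tri 3 6 7 (quad 2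
  3 6 7 (quad 2 3 6 7 (quad 3 5 6 7 (tri 1 2 3 (quad 1 2 3 6 (quad 1 2 3 7 (six 1 4))) (six 1
  7))))) (quad 3 4 6 7 (tri 1 2 3 (quad 1 2 3 5 (quad 1 2 3 6 (six 1 7))) (tri 2 5 6 (tri 1 2 5
  (quad 1 2 5 6 (six 1 7)) (six 1 7)) (six 1 7))))) (quad 2 3 5 6 (tri 3 6 7 (quad 3 5 6 7 (six
  1 2)) (quad 2 3 6 7 (quad 2 3 6 7 (quad 2 3 5 7 (tri 1 2 3 (quad 1 2 3 5 (six 0 1)) (quad 1 2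
  3 6 (six 0 1)))))))))) (quad 2 3 4 7 (quad 2 4 5 7 (quad 2 4 6 7 (tri 2 5 6 (quad 2 3 5 6 (tri
  1 2 3 (quad 1 2 3 6 (six 1 7)) (six 1 7))) (tri 1 2 5 (six 1 7) (quad 1 2 5 6 (six 1
  7))))))))) (quad 1 2 4 6 (quad 1 2 4 6 (quad 2 3 4 6 (quad 2 4 5 6 (quad 1 2 3 6 (quad 1 2 5 6
  (tri 2 4 7 (quad 2 3 4 7 (quad 2 4 6 7 (quad 2 4 6 7 (quad 3 4 6 7 (quad 2 5 6 7 (six 1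
  2)))))) (quad 1 2 4 7 (quad 1 2 4 7 (quad 2 3 4 7 (quad 2 4 5 7 (quad 1 2 3 7 (tri 3 6 7 (quad
  3 5 6 7 (tri 3 4 6 (quad 3 4 6 7 (six 1 2)) (quad 3 4 6 7 (tri 3 4 7 (six 1 2) (six 0 5)))))
  (quad 2 3 6 7 (tri 3 4 7 (quad 3 4 6 7 (edge 0 1 (edge 0 4 (edge 0 7 (edge 0 3 (edge 1 3 (mono
  0 1 3) (edge 3 7 (six 0 5) (six 1 2))) (six 1 2)) (six 1 2)) (six 6 7)) (edge 0 4 (six 6 7)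
  (edge 0 7 (six 1 2) (edge 0 3 (six 1 2) (edge 1 3 (edge 3 7 (six 1 2) (six 0 5)) (mono 0 1
  3))))))) (six 0 5))))))))))))))))))))))))) (quad 1 2 3 5 (quad 1 2 3 5 (quad 1 3 4 5 (quad 1 2
  3 4 (tri 3 5 6 (quad 2 3 5 6 (quad 2 3 5 6 (quad 3 4 5 6 (quad 2 3 4 6 (tri 3 5 7 (quad 2 3 5
  7 (quad 2 3 5 7 (quad 3 4 5 7 (quad 2 3 4 7 (six 1 4))))) (quad 3 4 5 7 (quad 3 5 6 7 (quad 4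
  5 6 7 (six 1 7))))))))) (quad 1 3 5 6 (quad 1 3 5 6 (quad 3 4 5 6 (quad 1 2 3 6 (tri 3 5 7
  (quad 2 3 5 7 (quad 2 3 5 7 (quad 3 4 5 7 (quad 3 5 6 7 (quad 3 5 6 7 (quad 2 3 4 7 (quad 2 3
  6 7 (tri 4 6 7 (six 1 6) (quad 2 4 6 7 (quad 3 4 6 7 (tri 2 3 6 (six 1 4) (quad 2 3 5 6 (six 0
  7))))))))))))) (quad 1 3 5 7 (quad 1 3 5 7 (quad 3 4 5 7 (quad 1 2 3 7 (tri 1 4 6 (quad 1 2 4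
  6 (quad 1 3 4 6 (quad 1 4 5 6 (tri 2 3 6 (tri 2 6 7 (six 1 7) (quad 2 3 6 7 (six 1 7))) (quad
  2 3 4 6 (quad 2 3 5 6 (six 0 7))))))) (tri 1 6 7 (quad 1 2 6 7 (quad 1 3 6 7 (quad 1 4 6 7
  (quad 1 5 6 7 (tri 2 3 6 (quad 2 3 6 7 (six 0 2)) (six 0 2)))))) (quad 1 4 6 7 (tri 5 6 7 (tri
  2 5 6 (quad 2 3 5 6 (quad 2 4 5 6 (quad 2 5 6 7 (quad 2 5 6 7 (quad 2 3 6 7 (quad 2 4 6 7 (tri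
  2 3 4 (tri 1 4 5 (tri 3 4 6 (six 0 7) (tri 3 4 7 (quad 3 4 6 7 (quad 3 4 6 7 (six 0 1))) (edge
  0 1 (edge 0 4 (edge 0 5 (edge 0 7 (edge 1 5 (edge 5 7 (mono 0 5 7) (six 0 2)) (six 6 7)) (six
  1 3)) (six 6 7)) (six 6 7)) (edge 0 4 (six 6 7) (edge 0 5 (six 6 7) (edge 0 7 (six 1 3) (edge
  1 5 (six 6 7) (edge 5 7 (six 0 2) (mono 0 5 7))))))))) (tri 3 4 7 (six 0 2) (six 0 2))) (quad
  2 3 4 6 (six 1 7))))))))) (tri 1 4 5 (tri 2 3 6 (tri 3 4 6 (quad 2 3 4 6 (six 1 7)) (quad 2 3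
  4 6 (tri 2 6 7 (six 0 7) (quad 2 3 6 7 (six 0 7))))) (tri 3 4 6 (quad 2 3 4 6 (tri 2 6 7 (quad
  2 3 6 7 (six 0 7)) (six 0 7))) (quad 2 3 4 6 (tri 2 6 7 (quad 2 4 6 7 (six 0 7)) (six 0 7)))))
  (tri 2 5 7 (quad 2 3 5 7 (quad 2 4 5 7 (quad 2 5 6 7 (tri 3 6 7 (tri 3 4 6 (six 0 2) (quad 3 4
  6 7 (six 0 2))) (quad 2 3 6 7 (tri 2 3 4 (six 0 2) (quad 2 3 4 6 (six 0 2)))))))) (tri 3 4 7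
  (tri 4 6 7 (quad 3 4 6 7 (tri 2 3 6 (quad 2 3 6 7 (quad 2 3 6 7 (six 0 1))) (six 0 2))) (quad
  3 4 6 7 (tri 2 3 4 (quad 2 3 4 6 (quad 2 3 4 6 (quad 2 3 4 7 (six 0 1)))) (six 0 2)))) (tri 4
  6 7 (quad 3 4 6 7 (tri 2 3 4 (six 0 2) (quad 2 3 4 7 (six 0 2)))) (quad 3 4 6 7 (tri 2 3 6
  (six 0 2) (quad 2 3 6 7 (six 0 2))))))))) (quad 3 5 6 7 (quad 4 5 6 7 (tri 2 3 6 (six 0 2)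
  (quad 2 3 6 7 (six 0 2))))))))))))))))))))))))) (quad 2 3 4 5 (tri 1 3 5 (quad 1 3 4 5 (tri 3
  5 6 (quad 1 3 5 6 (quad 1 3 5 6 (quad 2 3 5 6 (quad 2 3 5 6 (quad 3 4 5 6 (tri 3 5 7 (quad 1 3
  5 7 (quad 1 3 5 7 (quad 2 3 5 7 (quad 2 3 5 7 (quad 3 4 5 7 (tri 1 2 5 (quad 1 2 5 6 (quad 1 2
  5 7 (tri 2 6 7 (quad 1 2 6 7 (tri 1 4 5 (six 3 4) (quad 1 2 4 5 (quad 1 2 4 5 (six 3 7)))))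
  (quad 2 3 6 7 (quad 2 5 6 7 (tri 1 4 5 (quad 1 4 5 6 (six 1 7)) (quad 1 2 4 5 (six 1 7))))))))
  (quad 1 2 3 5 (tri 3 6 7 (quad 2 3 6 7 (tri 2 4 6 (six 1 7) (quad 2 3 4 6 (quad 2 4 5 6 (quad
  1 2 4 5 (six 1 2)))))) (quad 3 5 6 7 (tri 2 4 6 (six 1 7) (quad 2 3 4 6 (quad 2 4 5 6 (six 1
  7))))))))))))) (quad 3 4 5 7 (quad 3 5 6 7 (quad 3 5 6 7 (tri 1 2 5 (quad 1 2 5 6 (tri 1 2 4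
  (six 1 7) (quad 1 2 3 4 (quad 1 2 4 6 (six 1 7))))) (quad 1 2 3 5 (tri 1 4 5 (quad 1 2 4 5
  (quad 1 4 5 6 (six 1 7))) (six 1 7))))))))))))) (quad 3 4 5 6 (tri 3 5 7 (quad 1 3 5 7 (quad 1
  3 5 7 (quad 2 3 5 7 (quad 2 3 5 7 (quad 3 4 5 7 (quad 3 5 6 7 (quad 3 5 6 7 (quad 2 3 6 7
  (quad 4 5 6 7 (tri 1 2 5 (quad 1 2 5 7 (tri 1 2 4 (six 1 6) (quad 1 2 3 4 (quad 1 2 4 5 (six 1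
  6))))) (quad 1 2 3 5 (tri 1 2 4 (quad 1 2 4 5 (six 1 6)) (six 1 6))))))))))))) (quad 3 4 5 7
  (tri 1 2 5 (tri 2 4 5 (quad 1 2 4 5 (tri 2 5 6 (quad 1 2 5 6 (quad 1 2 5 6 (quad 2 3 5 6 (quad
  2 4 5 6 (quad 1 2 3 6 (quad 1 2 4 6 (tri 1 5 7 (six 6 7) (quad 1 4 5 7 (quad 1 5 6 7 (quad 4 5
  6 7 (six 3 7))))))))))) (quad 2 4 5 6 (tri 1 5 7 (quad 1 2 5 7 (quad 1 3 5 7 (quad 1 4 5 7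
  (six 6 7)))) (quad 1 2 5 7 (quad 1 4 5 7 (tri 1 2 3 (tri 1 3 6 (six 6 7) (quad 1 2 3 6 (six 6
  7))) (tri 1 3 6 (quad 1 2 3 6 (tri 3 6 7 (quad 1 3 6 7 (quad 2 3 6 7 (quad 2 3 6 7 (quad 3 4 6
  7 (quad 3 5 6 7 (tri 1 2 6 (quad 1 2 6 7 (six 0 1)) (six 0 1))))))) (tri 2 4 6 (tri 1 2 4
  (quad 1 2 4 6 (six 1 7)) (six 1 7)) (tri 1 2 4 (six 6 7) (quad 1 2 4 6 (six 6 7)))))) (quad 1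
  2 3 6 (quad 1 3 4 6 (six 6 7))))))))))) (quad 1 2 4 5 (tri 2 5 6 (quad 1 2 5 6 (quad 1 2 5 6
  (quad 2 3 5 6 (quad 2 4 5 6 (quad 1 2 3 6 (tri 2 6 7 (quad 1 2 6 7 (quad 1 2 6 7 (quad 2 3 6 7
  (quad 2 5 6 7 (quad 1 2 5 7 (quad 2 4 5 7 (tri 1 4 5 (quad 1 4 5 6 (quad 1 4 5 7 (six 0 3)))
  (six 3 7)))))))) (quad 2 5 6 7 (tri 1 4 5 (quad 1 4 5 6 (six 3 7)) (six 3 7))))))))) (quad 2 4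
  5 6 (tri 2 5 7 (quad 1 2 5 7 (quad 1 2 5 7 (quad 2 3 5 7 (quad 2 4 5 7 (quad 2 5 6 7 (quad 2 5
  6 7 (quad 1 2 3 7 (six 3 6)))))))) (tri 1 2 6 (tri 2 3 6 (quad 1 2 3 6 (tri 1 4 5 (tri 1 5 6
  (six 6 7) (quad 1 4 5 6 (six 6 7))) (six 6 7))) (quad 1 2 3 6 (six 6 7))) (quad 1 2 4 6 (quad
  1 2 5 6 (tri 1 3 6 (quad 1 2 3 6 (quad 1 2 3 6 (six 6 7))) (six 6 7)))))))))) (quad 1 2 3 5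
  (tri 1 3 6 (quad 1 2 3 6 (tri 2 4 5 (quad 1 2 4 5 (tri 2 5 6 (quad 2 4 5 6 (tri 2 5 7 (quad 2
  3 5 7 (quad 2 4 5 7 (tri 4 6 7 (quad 2 4 6 7 (tri 4 5 6 (quad 4 5 6 7 (six 1 3)) (quad 4 5 6 7
  (six 1 3)))) (tri 4 5 7 (quad 4 5 6 7 (six 1 3)) (tri 1 4 5 (six 6 7) (quad 1 4 5 7 (six 6
  7))))))) (quad 1 2 5 7 (quad 2 4 5 7 (six 6 7))))) (quad 1 2 5 6 (quad 1 2 5 6 (quad 2 4 5 6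
  (tri 2 6 7 (quad 2 5 6 7 (tri 1 4 5 (six 6 7) (quad 1 4 5 6 (six 0 7)))) (quad 1 2 6 7 (quad 2
  3 6 7 (tri 1 4 5 (six 0 7) (quad 1 4 5 6 (six 0 7))))))))))) (quad 1 2 4 5 (tri 2 5 6 (quad 2
  4 5 6 (tri 1 5 7 (quad 1 2 5 7 (quad 1 4 5 7 (quad 2 3 5 7 (tri 5 6 7 (quad 1 5 6 7 (quad 2 5
  6 7 (quad 4 5 6 7 (tri 1 2 6 (quad 1 2 6 7 (six 1 3)) (six 1 3))))) (quad 1 5 6 7 (quad 3 5 6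
  7 (tri 2 4 6 (tri 1 2 4 (quad 1 2 4 6 (six 6 7)) (six 6 7)) (tri 1 2 4 (six 1 7) (quad 1 2 4 6
  (quad 1 2 4 6 (six 0 7))))))))))) (quad 1 2 5 7 (quad 1 4 5 7 (six 6 7))))) (quad 1 2 5 6
  (quad 1 2 5 6 (quad 2 4 5 6 (quad 1 2 4 6 (tri 1 5 7 (quad 1 4 5 7 (quad 1 5 6 7 (quad 4 5 6 7
  (six 0 7)))) (six 6 7)))))))))) (quad 1 2 3 6 (quad 1 3 4 6 (quad 1 3 5 6 (tri 2 4 5 (quad 1 2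
  4 5 (tri 2 5 7 (six 6 7) (quad 1 2 5 7 (quad 2 4 5 7 (six 6 7))))) (quad 1 2 4 5 (tri 2 5 7
  (quad 2 4 5 7 (six 6 7)) (quad 1 2 5 7 (six 6 7)))))))))))))))) (quad 1 2 3 5 (quad 1 2 3 5
  (quad 1 3 4 5 (tri 3 5 6 (quad 2 3 5 6 (quad 2 3 5 6 (quad 3 4 5 6 (tri 3 6 7 (quad 2 3 6 7
  (quad 3 5 6 7 (quad 2 3 5 7 (tri 2 4 6 (six 1 7) (quad 2 4 6 7 (six 1 7)))))) (quad 3 5 6 7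
  (tri 3 4 6 (quad 2 3 4 6 (quad 3 4 6 7 (six 1 7))) (tri 2 4 5 (quad 1 2 4 5 (quad 2 4 5 6 (six
  1 7))) (six 1 7)))))))) (quad 1 3 5 6 (quad 1 3 5 6 (quad 3 4 5 6 (quad 1 2 3 6 (quad 1 3 4 6
  (tri 3 5 7 (quad 2 3 5 7 (quad 2 3 5 7 (quad 3 4 5 7 (quad 3 5 6 7 (quad 3 5 6 7 (quad 2 3 6 7
  (six 1 6))))))) (quad 1 3 5 7 (quad 1 3 5 7 (quad 3 4 5 7 (quad 1 2 3 7 (quad 1 3 4 7 (tri 1 2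
  4 (quad 1 2 4 5 (quad 1 2 4 6 (quad 1 2 4 7 (tri 2 5 6 (quad 2 3 5 6 (quad 2 4 5 6 (tri 2 5 7
  (quad 2 3 5 7 (quad 2 4 5 7 (six 1 3))) (quad 2 5 6 7 (quad 2 3 6 7 (six 1 7)))))) (tri 2 6 7
  (quad 2 4 6 7 (quad 2 5 6 7 (tri 2 3 6 (quad 2 3 6 7 (tri 2 5 7 (six 1 3) (six 0 1))) (quad 2
  3 6 7 (tri 2 5 7 (quad 2 3 5 7 (six 1 6)) (six 0 4)))))) (quad 1 2 6 7 (quad 2 5 6 7 (six 0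
  4)))))))) (tri 3 6 7 (quad 3 4 6 7 (quad 3 5 6 7 (tri 4 5 6 (quad 4 5 6 7 (tri 2 5 6 (quad 2 3
  5 6 (quad 2 5 6 7 (quad 2 5 6 7 (six 1 3)))) (quad 2 4 5 6 (tri 1 3 4 (six 6 7) (six 0 2)))))
  (tri 2 4 6 (quad 2 4 6 7 (six 0 2)) (six 0 2))))) (quad 1 3 6 7 (tri 1 3 4 (tri 2 3 6 (tri 2 3
  7 (tri 2 4 5 (tri 2 5 6 (quad 2 4 5 6 (tri 2 6 7 (quad 2 4 6 7 (tri 4 5 7 (six 1 3) (tri 4 5 6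
  (quad 4 5 6 7 (six 0 2)) (six 0 2)))) (quad 2 4 6 7 (tri 2 5 7 (quad 2 4 5 7 (six 1 3)) (quad
  2 4 5 7 (six 0 2)))))) (quad 2 4 5 6 (tri 4 5 7 (quad 2 4 5 7 (quad 2 4 5 7 (tri 2 4 6 (six 1
  3) (six 0 7)))) (six 0 2)))) (tri 2 5 6 (quad 2 4 5 6 (six 6 7)) (six 6 7))) (quad 2 3 4 7
  (quad 2 3 5 7 (tri 2 4 5 (quad 2 4 5 7 (tri 2 4 6 (quad 2 4 6 7 (six 0 2)) (quad 2 4 5 6 (six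
  0 2)))) (six 6 7))))) (quad 2 3 4 6 (quad 2 3 5 6 (quad 2 3 6 7 (quad 2 3 6 7 (quad 2 4 6 7
  (quad 2 5 6 7 (tri 2 4 5 (quad 2 4 5 6 (quad 2 4 5 7 (six 0 2))) (six 0 4))))))))) (tri 2 3 7
  (quad 2 3 6 7 (tri 2 4 5 (tri 2 5 6 (quad 2 4 5 6 (tri 2 6 7 (quad 2 4 6 7 (tri 4 5 7 (six 1
  3) (six 0 2))) (quad 2 4 6 7 (six 0 2)))) (quad 2 4 5 6 (tri 4 5 7 (quad 2 4 5 7 (quad 2 4 5 7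
  (tri 2 4 6 (six 1 3) (six 0 7)))) (six 0 2)))) (tri 2 5 6 (quad 2 4 5 6 (tri 2 5 7 (quad 2 4 5
  7 (tri 2 6 7 (six 1 3) (quad 2 5 6 7 (six 1 3)))) (quad 2 4 5 7 (quad 2 5 6 7 (tri 2 4 6 (quad
  2 4 6 7 (six 0 2)) (six 0 4)))))) (quad 2 4 5 6 (six 0 7))))) (quad 2 3 4 7 (quad 2 3 5 7
  (quad 2 3 6 7 (tri 4 5 7 (quad 2 4 5 7 (tri 2 5 6 (tri 2 4 6 (quad 2 4 6 7 (six 0 2)) (six 0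
  7)) (quad 2 4 5 6 (six 0 4)))) (six 0 2)))))))))))))))))))))))))))) (tri 3 5 6 (tri 3 4 5
  (quad 2 3 4 5 (quad 3 4 5 6 (tri 3 5 7 (quad 3 4 5 7 (tri 1 3 5 (quad 1 2 3 5 (quad 1 2 3 5
  (quad 1 3 4 5 (quad 1 3 5 6 (quad 1 3 5 6 (quad 1 3 5 7 (quad 1 3 5 7 (quad 1 2 3 6 (quad 1 2
  3 7 (quad 1 4 5 7 (six 2 4))))))))))) (quad 1 3 4 5 (tri 4 6 7 (quad 3 4 6 7 (tri 2 3 6 (quad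
  2 3 4 6 (quad 2 3 5 6 (quad 2 3 6 7 (quad 2 3 6 7 (quad 2 4 6 7 (quad 2 5 6 7 (tri 4 5 6 (quad
  4 5 6 7 (six 1 2)) (quad 4 5 6 7 (six 1 2))))))))) (tri 4 5 6 (quad 4 5 6 7 (tri 2 4 6 (quad 2
  4 5 6 (quad 2 4 6 7 (quad 2 4 6 7 (quad 2 5 6 7 (six 1 2))))) (quad 2 4 5 6 (tri 1 4 5 (quad 1
  2 4 5 (quad 1 2 4 5 (quad 1 4 5 6 (quad 1 4 5 6 (quad 1 4 5 7 (quad 1 4 5 7 (quad 1 2 4 6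
  (quad 1 4 6 7 (six 0 2))))))))) (six 1 2))))) (quad 4 5 6 7 (tri 2 4 6 (quad 2 4 5 6 (quad 2 4
  6 7 (quad 2 4 6 7 (tri 1 2 6 (quad 1 2 4 6 (quad 1 2 6 7 (quad 1 4 6 7 (six 1 2)))) (quad 1 2
  4 6 (six 1 7)))))) (quad 2 4 5 6 (tri 1 4 6 (quad 1 4 6 7 (six 1 2)) (six 1 2)))))))) (tri 4 5
  6 (quad 4 5 6 7 (tri 2 4 6 (quad 2 4 5 6 (tri 1 2 6 (quad 1 2 4 6 (quad 1 2 5 6 (tri 1 2 3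
  (tri 2 3 6 (quad 1 2 3 6 (tri 2 3 7 (quad 1 2 3 7 (quad 1 2 3 7 (quad 2 3 4 7 (quad 2 3 5 7
  (quad 1 2 4 7 (six 4 5)))))) (quad 2 3 6 7 (quad 2 3 6 7 (tri 1 2 4 (six 5 7) (tri 2 4 5 (six
  1 7) (quad 1 2 4 5 (quad 1 2 4 5 (tri 1 4 7 (quad 1 2 4 7 (quad 2 4 5 7 (six 0 1))) (six 1
  2)))))))))) (tri 2 6 7 (quad 2 4 6 7 (quad 2 5 6 7 (six 1 7))) (tri 1 2 4 (six 5 7) (tri 1 2 5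
  (quad 1 2 4 5 (six 1 7)) (six 1 7))))) (quad 1 2 3 4 (quad 1 2 3 5 (quad 1 2 3 6 (quad 1 2 3 6
  (tri 2 3 7 (quad 2 3 4 7 (quad 2 3 5 7 (tri 1 6 7 (quad 1 2 6 7 (quad 1 3 6 7 (quad 1 4 6 7
  (six 4 5)))) (quad 1 3 6 7 (six 1 2))))) (quad 2 3 6 7 (quad 2 3 6 7 (tri 2 4 5 (six 1 7)
  (quad 1 2 4 5 (tri 1 4 7 (quad 1 2 4 7 (quad 2 4 5 7 (six 0 1))) (six 1 2)))))))))))))) (quad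
  1 2 4 6 (quad 1 2 5 6 (tri 2 3 6 (tri 2 4 5 (six 1 7) (quad 1 2 4 5 (tri 2 4 7 (quad 2 4 5 7
  (six 1 2)) (quad 1 2 4 7 (quad 2 3 4 7 (quad 2 3 6 7 (six 1 2))))))) (six 1 7)))))) (quad 2 3
  4 6 (quad 2 4 5 6 (quad 2 4 6 7 (quad 2 4 6 7 (quad 2 3 6 7 (tri 1 2 4 (quad 1 2 3 4 (tri 1 4
  6 (quad 1 2 4 6 (quad 1 4 5 6 (tri 2 5 6 (tri 1 4 5 (quad 1 2 4 5 (six 2 7)) (tri 4 5 7 (six 0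
  1) (quad 1 4 5 7 (quad 1 3 4 7 (tri 1 3 6 (quad 1 3 6 7 (six 0 1)) (six 5 7)))))) (quad 1 2 5
  6 (tri 1 3 6 (tri 1 3 7 (quad 1 2 3 7 (quad 1 3 4 7 (quad 1 3 5 7 (tri 1 4 5 (six 2 4) (quad 1
  4 5 7 (six 1 2)))))) (quad 1 3 6 7 (six 1 2))) (six 2 7)))))) (quad 1 3 4 6 (quad 1 4 5 6
  (quad 1 4 6 7 (quad 1 4 6 7 (tri 4 5 7 (six 1 2) (quad 1 4 5 7 (quad 2 4 5 7 (tri 1 2 6 (six 0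
  3) (quad 1 2 6 7 (six 0 3)))))))))))) (quad 1 2 4 5 (quad 1 2 4 5 (quad 1 2 4 6 (quad 1 2 4 6
  (quad 1 2 4 7 (quad 1 2 4 7 (quad 1 2 3 6 (quad 1 2 6 7 (tri 1 5 6 (six 0 3) (six 0
  3)))))))))))))))))) (quad 4 5 6 7 (tri 2 4 6 (quad 2 4 5 6 (tri 1 4 6 (quad 1 4 5 6 (tri 2 5 6
  (tri 1 2 5 (quad 1 2 3 5 (quad 1 2 5 6 (quad 1 2 5 6 (tri 1 3 6 (six 6 7) (quad 1 2 3 6 (six 0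
  7)))))) (quad 1 2 4 5 (tri 5 6 7 (quad 2 5 6 7 (quad 3 5 6 7 (six 1 7))) (tri 2 3 6 (tri 1 2 3
  (quad 1 2 3 6 (six 1 7)) (six 1 7)) (six 1 7))))) (quad 2 3 5 6 (tri 1 2 5 (quad 1 2 3 5 (six
  6 7)) (quad 1 2 5 6 (quad 1 2 5 6 (quad 1 2 3 6 (tri 2 6 7 (quad 2 3 6 7 (six 0 7)) (six 0
  7))))))))) (quad 1 2 4 6 (quad 1 3 4 6 (quad 1 4 5 6 (quad 1 4 6 7 (quad 1 4 6 7 (quad 1 3 6 7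
  (quad 1 5 6 7 (tri 2 3 6 (quad 2 3 5 6 (tri 2 6 7 (quad 2 3 6 7 (quad 2 4 6 7 (six 1 4)))
  (quad 2 3 6 7 (six 1 2)))) (tri 2 6 7 (quad 2 3 6 7 (six 1 7)) (six 1 7)))))))))))) (quad 2 3
  4 6 (quad 2 4 5 6 (quad 2 4 6 7 (quad 2 4 6 7 (quad 2 3 6 7 (quad 2 5 6 7 (tri 1 4 6 (quad 1 2
  4 6 (quad 1 4 5 6 (quad 1 2 3 4 (quad 1 2 4 5 (six 6 7))))) (quad 1 3 4 6 (quad 1 4 5 6 (quad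
  1 4 6 7 (quad 1 4 6 7 (quad 1 3 6 7 (quad 1 5 6 7 (tri 1 2 5 (quad 1 2 3 5 (tri 2 4 5 (quad 1
  2 4 5 (six 6 7)) (quad 1 2 4 5 (tri 1 4 5 (six 6 7) (six 0 3))))) (quad 1 2 5 6 (tri 1 4 5
  (quad 1 2 4 5 (quad 1 2 4 5 (edge 0 1 (edge 0 4 (edge 0 5 (edge 0 7 (edge 1 5 (edge 5 7 (mono
  0 5 7) (six 0 3)) (six 6 7)) (six 1 2)) (six 6 7)) (six 6 7)) (edge 0 4 (six 6 7) (edge 0 5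
  (six 6 7) (edge 0 7 (six 1 2) (edge 1 5 (six 6 7) (edge 5 7 (six 0 3) (mono 0 5 7)))))))))
  (six 0 3)))))))))))))))))))))))) (quad 2 3 5 7 (quad 2 3 5 7 (quad 3 4 5 7 (quad 3 5 6 7 (quad
  3 5 6 7 (quad 2 3 6 7 (quad 4 5 6 7 (tri 1 3 5 (quad 1 2 3 5 (quad 1 2 3 5 (quad 1 3 4 5 (quad
  1 3 5 6 (quad 1 3 5 6 (quad 1 2 3 6 (quad 1 4 5 6 (tri 1 2 4 (six 2 7) (quad 1 2 4 5 (quad 1 2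
  4 6 (tri 2 3 6 (six 1 7) (six 1 7)))))))))))) (quad 1 3 4 5 (quad 1 3 5 7 (quad 1 3 5 7 (quad
  1 3 6 7 (tri 2 4 7 (quad 2 3 4 7 (quad 2 4 5 7 (quad 2 4 6 7 (tri 2 5 6 (tri 1 2 5 (quad 1 2 5
  6 (six 1 7)) (six 1 7)) (quad 2 3 5 6 (quad 2 4 5 6 (six 0 1))))))) (tri 1 2 7 (quad 1 2 3 7
  (quad 1 2 4 7 (quad 1 2 5 7 (tri 1 4 5 (six 0 6) (six 0 6))))) (quad 1 2 4 7 (tri 1 2 3 (tri 2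
  3 6 (quad 1 2 3 6 (quad 1 2 3 6 (quad 2 3 4 6 (quad 2 3 5 6 (quad 1 2 4 6 (quad 1 2 5 6 (tri 2
  4 5 (six 1 7) (tri 1 2 4 (six 5 7) (quad 1 2 4 5 (tri 3 4 7 (edge 0 1 (edge 0 4 (edge 0 7
  (edge 0 3 (edge 1 3 (mono 0 1 3) (edge 3 7 (six 0 6) (six 1 2))) (six 1 2)) (six 1 2)) (six 5
  7)) (edge 0 4 (six 5 7) (edge 0 7 (six 1 2) (edge 0 3 (six 1 2) (edge 1 3 (edge 3 7 (six 1 2)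
  (six 0 6)) (mono 0 1 3)))))) (six 0 6))))))))))) (tri 3 4 7 (tri 2 4 6 (tri 4 5 6 (quad 2 4 5
  6 (tri 1 2 5 (quad 1 2 5 6 (six 0 1)) (six 0 1))) (quad 2 4 5 6 (tri 1 2 4 (quad 1 2 4 6 (six
  0 1)) (six 0 1)))) (tri 4 5 6 (quad 2 4 5 6 (tri 1 2 4 (six 0 1) (quad 1 2 4 6 (six 0 1))))
  (quad 2 4 5 6 (tri 1 2 5 (six 0 1) (quad 1 2 5 6 (six 0 1)))))) (tri 1 2 5 (tri 2 4 5 (quad 1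
  2 4 5 (tri 1 5 6 (six 0 6) (quad 1 4 5 6 (six 0 6)))) (quad 1 2 4 5 (tri 1 5 6 (six 0 6) (quad
  1 2 5 6 (six 0 6))))) (tri 2 4 5 (quad 1 2 4 5 (tri 1 5 6 (quad 1 2 5 6 (six 0 6)) (six 0 6)))
  (quad 1 2 4 5 (tri 1 5 6 (quad 1 4 5 6 (six 0 6)) (six 0 6))))))) (quad 1 2 3 4 (quad 1 2 3 5
  (tri 1 4 5 (six 0 6) (six 0 6))))))))))))))))))))))) (quad 2 3 4 5 (quad 3 4 5 6 (tri 3 5 7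
  (quad 3 4 5 7 (tri 1 3 5 (quad 1 2 3 5 (quad 1 2 3 5 (quad 1 3 4 5 (quad 1 3 5 6 (quad 1 3 5 6
  (quad 1 3 5 7 (quad 1 3 5 7 (quad 1 2 3 4 (quad 1 2 3 6 (quad 1 2 3 7 (tri 3 6 7 (quad 1 3 6 7
  (tri 1 4 6 (six 2 7) (quad 1 3 4 6 (quad 1 4 5 6 (six 2 3))))) (quad 3 5 6 7 (tri 1 4 6 (six 2
  7) (quad 1 3 4 6 (six 2 7))))))))))))))) (quad 1 3 4 5 (tri 3 6 7 (tri 3 4 6 (quad 3 4 6 7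
  (tri 2 3 6 (quad 2 3 4 6 (quad 2 3 5 6 (quad 2 3 6 7 (quad 2 3 6 7 (quad 2 4 6 7 (quad 2 5 6 7
  (tri 1 3 4 (quad 1 3 4 7 (six 1 2)) (six 1 2)))))))) (quad 2 3 4 6 (tri 1 3 7 (quad 1 3 4 7
  (quad 1 3 5 7 (quad 1 3 6 7 (six 1 2)))) (quad 1 3 4 7 (quad 1 3 6 7 (tri 5 6 7 (quad 4 5 6 7
  (tri 1 4 6 (quad 1 4 6 7 (six 1 2)) (six 1 2))) (tri 2 5 7 (quad 2 5 6 7 (tri 1 2 5 (quad 1 2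
  3 5 (quad 1 2 4 5 (quad 1 2 5 6 (quad 1 2 5 6 (tri 1 4 6 (six 0 7) (six 0 7)))))) (tri 2 4 6
  (tri 1 2 4 (quad 1 2 4 6 (quad 1 2 4 6 (six 0 7))) (six 1 7)) (tri 2 4 7 (quad 2 4 6 7 (six 1
  2)) (six 1 2))))) (quad 2 4 5 7 (quad 2 5 6 7 (six 1 2))))))))))) (quad 3 4 6 7 (tri 2 3 6
  (quad 2 3 4 6 (quad 2 3 5 6 (quad 2 3 6 7 (quad 2 3 6 7 (quad 2 5 6 7 (tri 1 2 6 (quad 1 2 3 6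
  (quad 1 2 6 7 (quad 1 2 6 7 (quad 1 3 4 6 (quad 1 3 6 7 (tri 1 2 3 (quad 1 2 3 4 (six 1 5))
  (six 1 5))))))) (quad 1 2 3 6 (tri 1 3 6 (quad 1 3 6 7 (six 1 5)) (quad 1 3 4 6 (six 1
  2)))))))))) (quad 2 3 4 6 (tri 1 3 6 (quad 1 3 4 6 (quad 1 3 5 6 (quad 1 3 6 7 (quad 1 3 6 7
  (quad 1 5 6 7 (six 1 2)))))) (tri 2 5 7 (tri 5 6 7 (six 1 2) (quad 2 5 6 7 (tri 3 4 7 (tri 1 3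
  4 (quad 1 3 4 7 (six 1 2)) (six 1 2)) (six 1 2)))) (quad 2 3 5 7 (quad 2 4 5 7 (tri 2 5 6
  (quad 2 5 6 7 (six 1 2)) (six 1 2)))))))))) (quad 3 5 6 7 (tri 2 5 7 (quad 2 5 6 7 (tri 3 4 6
  (quad 3 4 6 7 (tri 2 3 6 (quad 2 3 4 6 (tri 1 3 6 (quad 1 3 4 6 (quad 1 3 5 6 (tri 1 2 4 (quad
  1 2 4 6 (tri 2 3 4 (quad 1 2 3 4 (six 5 7)) (quad 1 2 3 4 (six 5 7)))) (tri 1 3 4 (quad 1 2 3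
  4 (six 5 7)) (tri 1 3 7 (quad 1 3 4 7 (six 1 2)) (six 1 2)))))) (quad 1 3 4 6 (quad 1 3 6 7
  (six 1 2))))) (quad 2 3 4 6 (quad 2 3 6 7 (quad 2 3 6 7 (tri 1 2 6 (quad 1 2 3 6 (tri 2 4 6
  (six 1 7) (quad 2 4 6 7 (six 0 1)))) (quad 1 2 3 6 (quad 1 2 5 6 (quad 1 2 6 7 (quad 1 2 6 7
  (quad 1 3 4 6 (quad 1 3 6 7 (tri 1 2 3 (six 0 1) (quad 1 2 3 4 (six 0 1))))))))))))))) (quad 3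
  4 6 7 (tri 2 3 6 (quad 2 3 4 6 (tri 1 3 7 (quad 1 3 4 7 (quad 1 3 5 7 (quad 1 3 6 7 (quad 1 5
  6 7 (tri 1 2 3 (quad 1 2 3 4 (quad 1 2 3 6 (tri 1 4 6 (six 5 7) (quad 1 2 4 6 (six 1 7)))))
  (quad 1 2 3 5 (tri 2 4 6 (tri 2 4 7 (six 1 2) (quad 2 4 6 7 (six 1 2))) (tri 1 2 4 (six 1 7)
  (quad 1 2 4 6 (quad 1 2 4 6 (six 0 7))))))))))) (quad 1 3 4 7 (quad 1 3 6 7 (six 1 2)))))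
  (quad 2 3 4 6 (quad 2 3 6 7 (quad 2 3 6 7 (quad 2 4 6 7 (tri 1 3 4 (six 1 2) (quad 1 3 4 7
  (six 1 2))))))))))) (quad 2 3 5 7 (quad 2 4 5 7 (quad 2 5 6 7 (tri 3 4 6 (quad 3 4 6 7 (tri 1
  3 6 (six 1 2) (quad 1 3 4 6 (quad 1 3 6 7 (six 1 2))))) (quad 3 4 6 7 (tri 1 3 4 (six 1 2)
  (quad 1 3 4 6 (quad 1 3 4 7 (six 1 2))))))))))))))) (quad 2 3 5 7 (quad 2 3 5 7 (quad 3 4 5 7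
  (quad 3 5 6 7 (quad 3 5 6 7 (quad 2 3 4 7 (quad 2 3 6 7 (tri 1 3 5 (quad 1 2 3 5 (quad 1 2 3 5
  (quad 1 3 4 5 (quad 1 3 5 6 (quad 1 3 5 6 (quad 1 2 3 6 (six 2 7))))))) (quad 1 3 4 5 (quad 1
  3 5 7 (quad 1 3 5 7 (quad 1 4 5 7 (quad 1 3 6 7 (tri 4 6 7 (quad 1 4 6 7 (quad 2 4 6 7 (quad 3
  4 6 7 (tri 2 3 6 (quad 2 3 4 6 (quad 2 3 5 6 (tri 1 2 3 (quad 1 2 3 4 (quad 1 2 3 6 (six 1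
  7))) (quad 1 2 3 5 (six 1 7))))) (tri 1 2 6 (quad 1 2 3 6 (quad 1 2 4 6 (tri 1 2 5 (tri 1 3 6
  (quad 1 3 5 6 (six 2 7)) (six 0 4)) (quad 1 2 5 6 (quad 1 2 5 6 (tri 1 3 6 (six 5 7) (six 0
  4))))))) (quad 1 2 3 6 (quad 1 2 6 7 (six 0 4)))))))) (tri 1 2 5 (quad 1 2 3 5 (quad 1 2 4 5
  (tri 2 3 4 (quad 1 2 3 4 (tri 2 3 6 (quad 1 2 3 6 (quad 1 2 3 6 (quad 2 3 5 6 (six 5 7))))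
  (quad 2 3 4 6 (tri 4 5 7 (six 1 2) (six 0 6))))) (tri 1 4 6 (six 0 6) (quad 1 2 4 6 (six 0
  6)))))) (quad 1 2 5 7 (tri 4 5 7 (tri 2 5 6 (tri 1 5 6 (tri 3 4 6 (tri 2 3 6 (quad 2 3 4 6
  (tri 1 2 6 (quad 1 2 4 6 (tri 1 2 4 (six 5 7) (tri 1 3 4 (six 5 7) (six 0 6)))) (quad 1 2 4 6
  (tri 1 3 4 (quad 1 3 4 6 (six 5 7)) (six 0 6))))) (quad 2 3 4 6 (tri 1 3 4 (quad 1 2 3 4 (tri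
  2 4 6 (six 1 7) (six 0 1))) (six 0 6)))) (tri 1 3 4 (six 1 2) (quad 1 3 4 6 (six 1 2)))) (quad
  1 3 5 6 (quad 1 4 5 6 (tri 1 3 4 (quad 1 3 4 6 (six 1 2)) (tri 1 2 3 (quad 1 2 3 4 (six 0 6))
  (quad 1 2 3 4 (six 0 6))))))) (quad 1 2 5 6 (quad 1 2 5 6 (quad 2 3 5 6 (quad 2 4 5 6 (quad 1
  2 3 6 (quad 1 2 4 6 (tri 3 4 6 (quad 1 3 4 6 (quad 2 3 4 6 (six 0 6))) (six 0 4))))))))) (tri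
  1 5 6 (quad 1 2 5 6 (tri 3 4 6 (tri 2 3 6 (quad 2 3 4 6 (tri 1 2 6 (quad 1 2 3 6 (quad 1 2 4 6
  (tri 1 2 4 (six 5 7) (six 0 6)))) (quad 1 2 4 6 (six 0 6)))) (quad 2 3 4 6 (tri 1 3 4 (quad 1
  2 3 4 (tri 2 4 6 (six 1 7) (six 0 1))) (six 0 6)))) (tri 2 3 6 (quad 2 3 4 6 (tri 1 3 6 (quad
  1 3 4 6 (tri 1 2 6 (six 5 7) (quad 1 2 3 6 (six 5 7)))) (quad 1 2 3 6 (tri 1 2 4 (quad 1 2 4 6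
  (six 0 1)) (six 0 2))))) (quad 2 3 4 6 (six 0 1))))) (quad 1 2 5 6 (quad 1 3 5 6 (quad 1 4 5 6
  (tri 1 3 4 (quad 1 3 4 6 (tri 2 3 6 (tri 1 2 4 (quad 1 2 4 6 (six 0 1)) (six 0 2)) (quad 2 3 4
  6 (six 0 1)))) (six 0 6))))))))))))))))))))))))))) (quad 2 3 5 6 (quad 2 3 5 6 (tri 3 4 5
  (quad 2 3 4 5 (quad 3 4 5 6 (tri 1 3 5 (quad 1 2 3 5 (quad 1 2 3 5 (quad 1 3 4 5 (tri 2 4 5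
  (tri 3 6 7 (quad 3 5 6 7 (tri 3 4 6 (quad 3 4 6 7 (tri 2 5 7 (quad 2 4 5 7 (quad 2 5 6 7 (six
  1 7))) (quad 2 3 5 7 (quad 2 4 5 7 (tri 1 3 7 (quad 1 2 3 7 (quad 1 3 4 7 (tri 1 2 4 (six 6 7)
  (quad 1 2 4 7 (tri 1 2 6 (quad 1 2 4 6 (six 1 7)) (quad 1 2 6 7 (six 0 1))))))) (tri 1 2 4
  (six 6 7) (tri 1 2 6 (quad 1 2 4 6 (six 1 7)) (six 1 7)))))))) (quad 2 3 4 6 (quad 3 4 6 7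
  (tri 3 5 7 (quad 1 3 5 7 (quad 1 3 5 7 (quad 3 4 5 7 (quad 1 2 3 7 (quad 1 3 4 7 (tri 1 2 4
  (six 2 6) (quad 1 2 4 6 (quad 1 2 4 7 (quad 1 2 6 7 (tri 2 3 7 (six 1 6) (six 1 6)))))))))))
  (quad 2 3 5 7 (quad 2 3 5 7 (quad 3 4 5 7 (tri 1 3 4 (six 6 7) (quad 1 3 4 6 (tri 3 4 7 (six 1
  2) (quad 1 3 4 7 (quad 2 3 4 7 (tri 1 2 4 (six 0 1) (quad 1 2 4 7 (six 0 1))))))))))))))))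
  (quad 2 3 6 7 (quad 2 3 6 7 (quad 3 5 6 7 (quad 2 3 5 7 (quad 3 4 5 7 (tri 3 4 6 (quad 3 4 6 7
  (six 1 7)) (quad 2 3 4 6 (quad 3 4 6 7 (quad 2 4 6 7 (tri 1 2 4 (six 6 7) (quad 1 2 3 4 (quad
  1 2 4 6 (quad 1 2 4 6 (quad 1 2 4 7 (quad 1 2 4 7 (quad 1 3 4 6 (quad 1 3 4 7 (six 0
  5))))))))))))))))))) (quad 1 2 4 5 (quad 2 4 5 6 (tri 3 5 7 (quad 1 3 5 7 (quad 1 3 5 7 (quad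
  3 4 5 7 (quad 3 5 6 7 (quad 3 5 6 7 (quad 1 2 3 7 (quad 1 3 4 7 (quad 1 3 6 7 (tri 4 6 7 (six
  2 6) (quad 1 4 6 7 (quad 2 4 6 7 (quad 3 4 6 7 (quad 1 2 4 6 (tri 1 3 6 (six 2 4) (quad 1 3 5
  6 (six 0 7)))))))))))))))) (quad 2 3 5 7 (quad 2 3 5 7 (quad 3 4 5 7 (quad 2 4 5 7 (tri 3 6 7
  (quad 3 5 6 7 (tri 3 4 6 (quad 3 4 6 7 (tri 1 3 4 (quad 1 3 4 7 (six 0 1)) (six 0 1))) (quad 3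
  4 6 7 (tri 1 3 6 (quad 1 3 6 7 (six 0 1)) (six 0 1))))) (quad 2 3 6 7 (tri 3 4 6 (quad 3 4 6 7
  (tri 1 3 6 (six 0 1) (quad 1 3 6 7 (six 0 1)))) (quad 3 4 6 7 (tri 1 3 4 (six 0 1) (quad 1 3 4
  7 (six 0 1)))))))))))))))))) (quad 1 3 4 5 (quad 1 3 5 6 (quad 1 3 5 6 (tri 3 5 7 (quad 3 4 5
  7 (quad 3 5 6 7 (quad 3 5 6 7 (tri 4 6 7 (tri 3 4 6 (tri 2 4 6 (quad 2 4 5 6 (quad 2 4 6 7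
  (six 1 2))) (tri 1 4 6 (quad 1 2 4 6 (quad 1 2 4 6 (quad 1 4 5 6 (quad 1 4 6 7 (quad 1 2 3 4
  (quad 1 2 4 5 (six 0 7))))))) (six 1 2))) (quad 1 3 4 6 (quad 2 3 4 6 (tri 1 2 5 (quad 1 2 3 5
  (tri 2 4 5 (quad 1 2 4 5 (tri 1 5 7 (six 0 7) (quad 1 4 5 7 (six 0 7)))) (quad 1 2 4 5 (tri 1
  5 7 (six 0 7) (quad 1 2 5 7 (six 0 7)))))) (quad 1 2 5 6 (tri 2 4 5 (quad 1 2 4 5 (tri 1 5 7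
  (quad 1 2 5 7 (six 0 7)) (six 0 7))) (quad 1 2 4 5 (tri 1 5 7 (quad 1 4 5 7 (six 0 7)) (six 0
  7))))))))) (quad 3 4 6 7 (quad 4 5 6 7 (tri 2 4 6 (quad 2 4 5 6 (six 1 7)) (quad 2 4 6 7 (quad
  2 4 6 7 (quad 2 4 5 7 (tri 1 2 6 (quad 1 2 3 6 (quad 1 2 4 6 (quad 1 2 5 6 (six 0 7)))) (quad
  1 2 4 6 (quad 1 2 6 7 (quad 1 2 6 7 (quad 1 4 6 7 (quad 1 2 5 7 (tri 1 2 5 (quad 1 2 3 5 (tri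
  2 4 5 (six 1 7) (quad 1 2 4 5 (tri 1 4 5 (six 6 7) (six 0 3))))) (tri 1 4 5 (six 0 7) (six 0
  3))))))))))))))))))) (quad 1 3 5 7 (quad 1 3 5 7 (quad 2 3 5 7 (quad 2 3 5 7 (quad 3 4 5 7
  (tri 2 4 5 (tri 1 4 5 (tri 3 4 6 (tri 3 4 7 (tri 1 2 5 (quad 1 2 3 5 (tri 3 6 7 (quad 3 5 6 7
  (tri 1 2 4 (six 6 7) (tri 1 2 6 (quad 1 2 4 6 (six 0 7)) (six 1 7)))) (quad 2 3 6 7 (quad 3 4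
  6 7 (six 1 7))))) (quad 1 2 4 5 (quad 1 2 5 6 (quad 1 2 5 7 (tri 2 6 7 (quad 2 3 6 7 (quad 2 5
  6 7 (six 0 1))) (six 1 7)))))) (quad 1 3 4 7 (quad 2 3 4 7 (quad 3 4 6 7 (quad 3 4 6 7 (quad 1
  4 6 7 (quad 2 4 6 7 (tri 1 2 5 (quad 1 2 3 5 (six 1 7)) (quad 1 2 5 6 (quad 1 2 5 7 (six 0
  5))))))))))) (quad 1 3 4 6 (quad 2 3 4 6 (tri 3 6 7 (quad 3 4 6 7 (quad 3 5 6 7 (tri 1 2 5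
  (quad 1 2 3 5 (tri 1 4 7 (quad 1 3 4 7 (six 0 7)) (six 0 7))) (quad 1 2 4 5 (quad 1 2 5 6 (six
  0 7)))))) (quad 1 3 6 7 (quad 2 3 6 7 (quad 3 4 6 7 (quad 1 4 6 7 (quad 2 4 6 7 (tri 1 2 4
  (six 0 5) (six 0 5))))))))))) (quad 1 2 4 5 (quad 1 2 4 5 (quad 1 4 5 6 (quad 1 4 5 7 (quad 1
  2 4 6 (quad 1 2 4 7 (tri 2 6 7 (quad 2 3 6 7 (quad 2 5 6 7 (tri 2 4 6 (quad 2 3 4 6 (six 0 1))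
  (six 0 1)))) (quad 1 2 6 7 (tri 2 4 6 (six 0 3) (quad 2 4 6 7 (six 0 3)))))))))))) (quad 2 4 5
  6 (quad 2 4 5 7 (tri 1 2 5 (quad 1 2 3 5 (quad 1 2 4 5 (tri 1 4 6 (quad 1 2 4 6 (quad 1 3 4 6
  (quad 1 4 5 6 (six 2 7)))) (tri 4 6 7 (quad 4 5 6 7 (tri 3 4 7 (quad 3 4 6 7 (six 0 1)) (quad
  3 4 6 7 (six 0 1)))) (quad 1 4 6 7 (quad 1 4 6 7 (tri 1 4 5 (six 6 7) (six 0 3)))))))) (quad 1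
  2 4 5 (quad 1 2 5 6 (quad 1 2 5 7 (quad 1 4 5 6 (quad 1 4 5 7 (tri 1 6 7 (quad 1 2 6 7 (quad 1
  3 6 7 (six 0 1))) (six 0 3))))))))))))))))))))))) (quad 2 3 4 5 (quad 3 4 5 6 (quad 2 4 5 6
  (tri 3 6 7 (quad 3 4 6 7 (quad 3 5 6 7 (tri 3 5 7 (quad 3 4 5 7 (tri 1 3 5 (quad 1 2 3 5 (quad
  1 2 3 5 (quad 1 3 4 5 (quad 1 3 5 7 (quad 1 3 5 7 (quad 1 2 3 4 (quad 1 2 3 7 (six 2 6))))))))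
  (quad 1 3 4 5 (quad 1 3 5 6 (quad 1 3 5 6 (quad 1 4 5 6 (tri 1 2 5 (quad 1 2 3 5 (quad 1 2 4 5
  (tri 2 3 4 (quad 1 2 3 4 (tri 2 3 7 (quad 1 2 3 7 (quad 1 2 3 7 (quad 2 3 5 7 (quad 2 3 6 7
  (quad 1 2 5 7 (six 5 6)))))) (quad 2 3 4 7 (six 1 2)))) (tri 1 4 7 (six 0 7) (quad 1 2 4 7
  (six 0 7)))))) (quad 1 2 5 6 (tri 2 5 7 (quad 2 5 6 7 (tri 1 5 7 (quad 1 5 6 7 (tri 3 4 7 (tri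
  2 3 7 (quad 2 3 4 7 (tri 1 2 7 (quad 1 2 4 7 (tri 1 2 4 (six 5 6) (tri 1 3 4 (six 5 6) (six 0
  7)))) (quad 1 2 4 7 (tri 1 3 4 (quad 1 3 4 7 (six 5 6)) (six 0 7))))) (quad 2 3 4 7 (tri 1 3 4
  (quad 1 2 3 4 (tri 2 4 7 (six 1 6) (six 0 1))) (six 0 7)))) (tri 1 3 4 (six 1 2) (quad 1 3 4 7
  (six 1 2))))) (quad 1 3 5 7 (quad 1 4 5 7 (tri 1 3 4 (quad 1 3 4 7 (six 1 2)) (tri 1 2 3 (quad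
  1 2 3 4 (six 0 7)) (quad 1 2 3 4 (six 0 7)))))))) (quad 1 2 5 7 (quad 2 3 5 7 (quad 2 4 5 7
  (quad 1 2 3 7 (quad 1 2 4 7 (tri 3 4 7 (quad 1 3 4 7 (quad 2 3 4 7 (six 0 7))) (six 1
  2)))))))))))))))) (quad 2 3 5 7 (quad 2 3 5 7 (quad 3 4 5 7 (quad 2 3 4 7 (tri 1 3 7 (quad 1 2
  3 7 (quad 1 2 3 7 (quad 1 3 4 7 (quad 1 3 5 7 (quad 1 3 6 7 (quad 1 2 3 4 (quad 1 2 3 5 (tri 4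
  5 6 (quad 4 5 6 7 (tri 1 4 5 (quad 1 4 5 6 (quad 1 4 5 6 (quad 1 2 4 6 (six 2 3)))) (six 6
  7))) (tri 1 4 6 (quad 1 4 6 7 (six 0 1)) (six 0 1)))))))))) (quad 1 3 4 7 (quad 1 3 5 7 (quad
  1 3 6 7 (quad 1 4 6 7 (quad 1 5 6 7 (tri 1 2 5 (quad 1 2 3 5 (quad 1 2 4 5 (tri 1 4 5 (quad 1
  4 5 6 (six 0 1)) (tri 1 3 5 (six 6 7) (edge 0 1 (edge 1 5 (edge 1 7 (edge 1 3 (edge 0 3 (mono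
  0 1 3) (edge 3 7 (six 1 2) (six 0 4))) (six 0 4)) (six 0 4)) (six 6 7)) (edge 1 5 (six 6 7)
  (edge 1 7 (six 0 4) (edge 1 3 (six 0 4) (edge 0 3 (edge 3 7 (six 0 4) (six 1 2)) (mono 0 1
  3)))))))))) (quad 1 2 3 5 (quad 1 2 4 5 (quad 1 2 5 7 (six 0 4)))))))))))))))))) (quad 2 3 6 7
  (quad 2 3 6 7 (quad 3 4 6 7 (quad 3 5 6 7 (quad 2 3 4 7 (quad 2 3 5 7 (tri 1 3 5 (quad 1 2 3 5
  (quad 1 2 3 5 (quad 1 3 4 5 (quad 1 2 3 4 (tri 1 3 6 (quad 1 2 3 6 (tri 1 3 7 (quad 1 2 3 7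
  (tri 1 4 5 (tri 1 5 6 (quad 1 4 5 6 (tri 1 6 7 (quad 1 4 6 7 (tri 4 5 7 (six 2 3) (tri 4 5 6
  (quad 4 5 6 7 (six 0 1)) (six 0 1)))) (quad 1 4 6 7 (tri 1 5 7 (quad 1 4 5 7 (six 2 3)) (quad
  1 4 5 7 (six 0 1)))))) (quad 1 4 5 6 (tri 4 5 7 (quad 1 4 5 7 (quad 1 4 5 7 (tri 1 4 6 (six 2
  3) (six 0 7)))) (six 0 1)))) (tri 1 5 6 (quad 1 4 5 6 (six 6 7)) (six 6 7)))) (quad 1 3 4 7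
  (quad 1 3 5 7 (tri 1 4 5 (quad 1 4 5 7 (tri 1 4 6 (quad 1 4 6 7 (six 0 1)) (quad 1 4 5 6 (six
  0 1)))) (six 6 7)))))) (quad 1 3 4 6 (quad 1 3 5 6 (quad 1 3 6 7 (quad 1 4 6 7 (tri 1 4 5
  (quad 1 4 5 6 (quad 1 4 5 7 (six 0 1))) (six 6 7))))))))))) (quad 1 3 4 5 (quad 1 3 5 6 (quad
  1 3 5 6 (quad 1 3 5 7 (quad 1 3 5 7 (quad 1 4 5 6 (quad 1 3 6 7 (tri 1 2 5 (six 0 4) (six 0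
  4))))))))))))))))))))))))

set_option maxRecDepth 100000 in
theorem check_cert : check K0 0 cert = true := by
  decide +kernel

theorem not_bad {pos : ℕ → ℕ → ℕ → Prop} {red : ℕ → ℕ → Bool} : ¬ Bad pos red := by
  intro hb
  refine check_sound hb cert (orientInv_K0 hb) (fun n hn => ?_) check_cert
  rw [Nat.zero_testBit] at hn
  exact Bool.noConfusion hn

/-! ### Orientations in the plane -/

lemma cross_rotate (a b c : ℝ × ℝ) : cross b c a = cross a b c := by
  unfold cross; ring

lemma cross_swap (a b c : ℝ × ℝ) : cross a c b = -cross a b c := by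
  unfold cross; ring

lemma collinear_of_cross_eq_zero {a b c : ℝ × ℝ} (hab : a ≠ b) (h : cross a b c = 0) :
    Collinear ℝ ({a, b, c} : Set (ℝ × ℝ)) := by
  rw [collinear_iff_of_mem (p₀ := a) (by simp)]
  obtain ⟨a₁, a₂⟩ := a
  obtain ⟨b₁, b₂⟩ := b
  obtain ⟨c₁, c₂⟩ := c
  simp only [cross] at h
  refine ⟨(b₁ - a₁, b₂ - a₂), ?_⟩
  simp only [Set.mem_insert_iff, Set.mem_singleton_iff, forall_eq_or_imp, forall_eq, vadd_eq_add,
    Prod.smul_mk, smul_eq_mul, Prod.mk_add_mk, Prod.mk.injEq]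
  refine ⟨⟨0, by ring, by ring⟩, ⟨1, by ring, by ring⟩, ?_⟩
  by_cases h₁ : b₁ - a₁ = 0
  · have h₂ : b₂ - a₂ ≠ 0 := fun h₂ =>
      hab (Prod.ext (sub_eq_zero.mp h₁).symm (sub_eq_zero.mp h₂).symm)
    refine ⟨(c₂ - a₂) / (b₂ - a₂), ?_, ?_⟩ <;> field_simp <;> linarith
  · refine ⟨(c₁ - a₁) / (b₁ - a₁), ?_, ?_⟩ <;> field_simp <;> linarith

lemma cross_eq_zero_of_collinear {a b c : ℝ × ℝ}
    (h : Collinear ℝ ({a, b, c} : Set (ℝ × ℝ))) : cross a b c = 0 := by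
  rw [collinear_iff_of_mem (p₀ := a) (by simp)] at h
  obtain ⟨v, hv⟩ := h
  obtain ⟨s, rfl⟩ := hv b (by simp)
  obtain ⟨t, rfl⟩ := hv c (by simp)
  simp only [cross, vadd_eq_add, Prod.fst_add, Prod.snd_add, Prod.smul_fst, Prod.smul_snd,
    smul_eq_mul]
  ring

lemma convex_cross_nonneg (a b : ℝ × ℝ) : Convex ℝ {x | 0 ≤ cross a b x} := by
  intro x hx y hy s t hs ht hst
  simp only [Set.mem_ofPred_eq, cross] at hx hy ⊢
  obtain rfl : s = 1 - t := by linarith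
  simp only [Prod.fst_add, Prod.snd_add, Prod.smul_fst, Prod.smul_snd, smul_eq_mul]
  nlinarith [mul_nonneg hs hx, mul_nonneg ht hy]

/-- A point of a counterclockwise triangle is on the left of its first side. -/
lemma cross_nonneg_of_mem_hull {a b c x : ℝ × ℝ} (h : 0 ≤ cross a b c)
    (hx : x ∈ convexHull ℝ ({a, b, c} : Set (ℝ × ℝ))) : 0 ≤ cross a b x := by
  refine convexHull_min ?_ (convex_cross_nonneg a b) hx
  rintro y (rfl | rfl | rfl)
  · simp [cross]
  · simp [cross, mul_comm]
  · exact h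

/-- A point on the left of all three sides of a counterclockwise triangle is in its hull, the
barycentric coordinates being the ratios of the cross products. -/
lemma mem_hull_of_cross {a b c x : ℝ × ℝ} (h₁ : 0 < cross a b x) (h₂ : 0 < cross b c x)
    (h₃ : 0 < cross c a x) : x ∈ convexHull ℝ ({a, b, c} : Set (ℝ × ℝ)) := by
  have hs : cross a b x + cross b c x + cross c a x = cross a b c := by unfold cross; ring
  have hpos : 0 < cross a b c := by linarith
  have hx : x = (cross b c x / cross a b c) • a + (cross c a x / cross a b c) • b +
      (cross a b x / cross a b c) • c := by
    ext <;> simp only [Prod.fst_add, Prod.snd_add, Prod.smul_fst, Prod.smul_snd, smul_eq_mul] <;>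
      field_simp <;> unfold cross <;> ring
  refine mem_convexHull_of_exists_fintype
    ![cross b c x / cross a b c, cross c a x / cross a b c, cross a b x / cross a b c]
    ![a, b, c] ?_ ?_ ?_ ?_
  · intro i
    fin_cases i
    exacts [(div_pos h₂ hpos).le, (div_pos h₃ hpos).le, (div_pos h₁ hpos).le]
  · simp only [Fin.sum_univ_three, Matrix.cons_val]
    field_simp
    linarith
  · intro i
    fin_cases i <;> simp
  · simp only [Fin.sum_univ_three, Matrix.cons_val]
    exact hx.symm

/-! ### Labelling eight points by angle -/

lemma exists_equiv_of_strictTotalOrder {α : Type*} [Fintype α] (r : α → α → Prop)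
    [IsStrictTotalOrder α r] {n : ℕ} (h : Fintype.card α = n) :
    ∃ e : Fin n ≃ α, ∀ i j, i < j → r (e i) (e j) := by
  classical
  let _ : LinearOrder α := linearOrderOfSTO r
  let e : Fin n ≃o α := Fintype.orderIsoFinOfCardEq α h
  exact ⟨e.toEquiv, fun i j hij => e.lt_iff_lt.mpr hij⟩

/-- The vertex `0` is the lexicographically smallest point of `X`. The other points then lie in a
half-plane bounded by a line through it, so the orientation with respect to it is a linear order
on them. -/
lemma exists_labelling {X : Finset (ℝ × ℝ)} (hX : X.card = 8) (hG : GenPos X) :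
    ∃ p : ℕ → ℝ × ℝ, (∀ i < 8, p i ∈ X) ∧ (∀ i < 8, ∀ j < 8, p i = p j → i = j) ∧
      (∀ x ∈ X, ∃ i < 8, p i = x) ∧
      ∀ j k, 0 < j → j < k → k < 8 → 0 < cross (p 0) (p j) (p k) := by
  obtain ⟨m, hm, hmin⟩ := Finset.exists_min_image X (fun x => toLex x)
    (Finset.card_pos.mp (by omega))
  have half : ∀ x ∈ X.erase m, 0 < x.1 - m.1 ∨ x.1 - m.1 = 0 ∧ 0 < x.2 - m.2 := by
    intro x hx
    rw [Finset.mem_erase] at hx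
    have hlt : toLex m < toLex x := lt_of_le_of_ne (hmin x hx.2) fun h =>
      hx.1 (toLex.injective h).symm
    rw [Prod.Lex.toLex_lt_toLex] at hlt
    rcases hlt with h | ⟨h, h'⟩
    · exact Or.inl (by linarith)
    · exact Or.inr ⟨by linarith, by linarith⟩
  have hne : ∀ x ∈ X.erase m, ∀ y ∈ X.erase m, x ≠ y → cross m x y ≠ 0 := by
    intro x hx y hy hxy h
    rw [Finset.mem_erase] at hx hy
    exact hG m hm x hx.2 y hy.2 hx.1.symm hy.1.symm hxy (collinear_of_cross_eq_zero hx.1.symm h)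
  let r : X.erase m → X.erase m → Prop := fun x y => 0 < cross m x y
  have asym : ∀ x y, r x y → ¬ r y x := by
    intro x y h h'
    simp only [r] at h h'
    rw [cross_swap] at h'
    linarith
  have trans : ∀ x y z, r x y → r y z → r x z := by
    intro x y z hxy hyz
    have hxz : x ≠ z := fun h => asym x y hxy (h ▸ hyz)
    have h0 := hne x x.2 z z.2 fun h => hxz (Subtype.ext h)
    refine lt_of_le_of_ne ?_ h0.symm
    have hx := half x x.2
    have hy := half y y.2
    have hz := half z z.2
    simp only [r] at hxy hyz
    have key : ((y : ℝ × ℝ).1 - m.1) * cross m x z =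
        ((x : ℝ × ℝ).1 - m.1) * cross m y z + ((z : ℝ × ℝ).1 - m.1) * cross m x y := by
      unfold cross; ring
    have hx0 : 0 ≤ (x : ℝ × ℝ).1 - m.1 := hx.elim le_of_lt fun h => h.1.ge
    have hz0 : 0 ≤ (z : ℝ × ℝ).1 - m.1 := hz.elim le_of_lt fun h => h.1.ge
    rcases hy with hy | ⟨hy, hy'⟩
    · refine nonneg_of_mul_nonneg_right ?_ hy
      rw [key]
      positivity
    -- Otherwise `y` is vertically above `m`, and nothing can follow it.
    · unfold cross at hyz
      rw [hy] at hyz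
      nlinarith [mul_nonneg hy'.le hz0]
  have : IsStrictTotalOrder (X.erase m) r :=
    { trichotomous := fun x y h h' => by
        by_contra hxy
        have h0 := hne x x.2 y y.2 fun h => hxy (Subtype.ext h)
        rcases lt_or_gt_of_ne h0 with h1 | h1
        · exact h' (by simp only [r]; rw [cross_swap]; linarith)
        · exact h h1
      irrefl := fun x h => asym x x h h
      trans := trans }
  have hcard : Fintype.card (X.erase m) = 7 := by
    rw [Fintype.card_coe, Finset.card_erase_of_mem hm, hX]
  obtain ⟨e, he⟩ := exists_equiv_of_strictTotalOrder r hcard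
  let p : ℕ → ℝ × ℝ := fun i => if h : 0 < i ∧ i < 8 then e ⟨i - 1, by omega⟩ else m
  have p0 : p 0 = m := dif_neg (by simp)
  have pe : ∀ i (h0 : 0 < i) (h8 : i < 8), p i = e ⟨i - 1, by omega⟩ := fun i h0 h8 =>
    dif_pos ⟨h0, h8⟩
  have pm : ∀ i, 0 < i → i < 8 → p i ≠ m ∧ p i ∈ X := by
    intro i h0 h8
    rw [pe i h0 h8]
    exact Finset.mem_erase.mp (e ⟨i - 1, by omega⟩).2
  refine ⟨p, ?_, ?_, ?_, ?_⟩
  · intro i hi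
    rcases Nat.eq_zero_or_pos i with rfl | h0
    · rwa [p0]
    · exact (pm i h0 hi).2
  · intro i hi j hj hij
    rcases Nat.eq_zero_or_pos i with rfl | hi0 <;> rcases Nat.eq_zero_or_pos j with rfl | hj0
    · rfl
    · exact absurd (hij.symm.trans p0) (pm j hj0 hj).1
    · exact absurd (hij.trans p0) (pm i hi0 hi).1
    · rw [pe i hi0 hi, pe j hj0 hj] at hij
      have := e.injective (Subtype.ext hij)
      rw [Fin.mk.injEq] at this
      omega
  · intro x hx
    by_cases hxm : x = m
    · exact ⟨0, by norm_num, p0.trans hxm.symm⟩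
    · obtain ⟨i, hi⟩ := e.surjective ⟨x, Finset.mem_erase.mpr ⟨hxm, hx⟩⟩
      refine ⟨i + 1, by omega, ?_⟩
      rw [pe _ (by omega) (by omega)]
      simp [hi]
  · intro j k hj hjk hk
    rw [p0, pe j hj (by omega), pe k (by omega) hk]
    have hlt : (⟨j - 1, by omega⟩ : Fin 7) < ⟨k - 1, by omega⟩ := by
      rw [Fin.mk_lt_mk]; omega
    exact he _ _ hlt

/-! ### From point sets to labelled counterexamples -/

/-- In a linear relation `Y u = Z v + X w` with positive coefficients, `Y` cannot be negative when
`X` and `Z` are positive, nor positive when they are negative. -/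
lemma noTwoChanges_of_relation {p : ℕ → ℝ × ℝ} {X Y Z : ℕ × ℕ × ℕ} {u v w : ℝ} (hu : 0 < u)
    (hv : 0 < v) (hw : 0 < w)
    (h : cross (p Y.1) (p Y.2.1) (p Y.2.2) * u =
      cross (p Z.1) (p Z.2.1) (p Z.2.2) * v + cross (p X.1) (p X.2.1) (p X.2.2) * w) :
    NoTwoChanges (fun x y z => 0 < cross (p x) (p y) (p z)) X Y Z := by
  intro s hX hY hZ
  cases s <;> simp only [Sgn, Bool.not_true, Bool.not_false] at hX hY hZ
  · rw [cross_swap] at hX hZ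
    nlinarith [mul_pos hX hw, mul_pos hY hu, mul_pos hZ hv]
  · rw [cross_swap] at hY
    nlinarith [mul_pos hX hw, mul_pos hY hu, mul_pos hZ hv]

lemma inTri_of_mem_hull {p : ℕ → ℝ × ℝ} {a b c d : ℕ}
    (h : p d ∈ convexHull ℝ ({p a, p b, p c} : Set (ℝ × ℝ))) :
    InTri (fun x y z => 0 < cross (p x) (p y) (p z)) a b c d := by
  have main : ∀ {a b c x : ℝ × ℝ}, 0 ≤ cross a b c →
      x ∈ convexHull ℝ ({a, b, c} : Set (ℝ × ℝ)) →
      0 ≤ cross a b x ∧ 0 ≤ cross b c x ∧ 0 ≤ cross c a x := by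
    intro a b c x hs hx
    have h₁ : ({a, b, c} : Set (ℝ × ℝ)) = {b, c, a} := by ext; simp; tauto
    have h₂ : ({a, b, c} : Set (ℝ × ℝ)) = {c, a, b} := by ext; simp; tauto
    exact ⟨cross_nonneg_of_mem_hull hs hx,
      cross_nonneg_of_mem_hull (by rwa [cross_rotate]) (h₁ ▸ hx),
      cross_nonneg_of_mem_hull (by rwa [← cross_rotate]) (h₂ ▸ hx)⟩
  have e₀ := cross_swap (p a) (p b) (p c)
  have e₁ : cross (p b) (p a) (p d) = -cross (p a) (p b) (p d) := by unfold cross; ring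
  have e₂ : cross (p c) (p b) (p d) = -cross (p b) (p c) (p d) := by unfold cross; ring
  have e₃ : cross (p a) (p c) (p d) = -cross (p c) (p a) (p d) := by unfold cross; ring
  rintro ⟨hp, hn⟩
  rcases le_total 0 (cross (p a) (p b) (p c)) with hs | hs
  · obtain ⟨h₁, h₂, h₃⟩ := main hs h
    rcases hn with hn | hn | hn | hn <;> linarith
  · rw [show ({p a, p b, p c} : Set (ℝ × ℝ)) = {p a, p c, p b} by
      rw [Set.pair_comm (p b) (p c)]] at h
    obtain ⟨h₁, h₂, h₃⟩ := main (by linarith) h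
    rcases hp with hp | hp | hp | hp <;> linarith

theorem bad_of_counterexample {X : Finset (ℝ × ℝ)} (hX : X.card = 8) (hG : GenPos X)
    {χ : ℝ × ℝ → ℝ × ℝ → Fin 2}
    (hχ : ¬ ∃ p ∈ X, ∃ q ∈ X, ∃ r ∈ X, p ≠ q ∧ p ≠ r ∧ q ≠ r ∧
      χ p q = χ p r ∧ χ p q = χ q r ∧ intCount X {p, q, r} ≤ 1) :
    ∃ pos red, Bad pos red := by
  obtain ⟨p, hmem, hinj, hsurj, hzero⟩ := exists_labelling hX hG
  refine ⟨fun x y z => 0 < cross (p x) (p y) (p z), fun a b => decide (χ (p a) (p b) = 1),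
    ⟨?_, ?_, ?_, hzero, ?_, ?_, ?_, ?_, ?_⟩⟩
  · intro x y z h
    rwa [cross_rotate]
  · intro x y z h h'
    rw [cross_swap] at h'
    linarith
  · intro i j k hij hjk hk
    have ne : ∀ i j, i < j → j < 8 → p i ≠ p j := fun i j hij hj h =>
      hij.ne (hinj i (by omega) j hj h)
    rcases lt_trichotomy (cross (p i) (p j) (p k)) 0 with h | h | h
    · right
      rw [cross_swap]
      linarith
    · exact absurd (collinear_of_cross_eq_zero (ne i j hij (by omega)) h)
        (hG _ (hmem i (by omega)) _ (hmem j (by omega)) _ (hmem k hk) (ne i j hij (by omega))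
          (ne i k (by omega) hk) (ne j k hjk hk))
    · exact Or.inl h
  · intro i j k l hi hij hjk hkl hl
    refine noTwoChanges_of_relation (hzero i k hi (by omega) (by omega))
      (hzero i j hi hij (by omega)) (hzero i l hi (by omega) hl) ?_
    dsimp only; unfold cross; ring
  · intro i j k l hi hij hjk hkl hl
    refine noTwoChanges_of_relation (hzero j k (by omega) hjk (by omega))
      (hzero i j hi hij (by omega)) (hzero j l (by omega) (by omega) hl) ?_
    dsimp only; unfold cross; ring
  · intro i j k l hi hij hjk hkl hl
    refine noTwoChanges_of_relation (hzero j k (by omega) hjk (by omega))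
      (hzero i k hi (by omega) (by omega)) (hzero k l (by omega) hkl hl) ?_
    dsimp only; unfold cross; ring
  · intro i j k l hi hij hjk hkl hl
    refine noTwoChanges_of_relation (hzero j l (by omega) (by omega) hl)
      (hzero i l hi (by omega) hl) (hzero k l (by omega) hkl hl) ?_
    dsimp only; unfold cross; ring
  · intro a b c hab hbc hc hm
    have two : ∀ u v : Fin 2, decide (u = 1) = decide (v = 1) → u = v := by decide
    simp only [isMono, Bool.and_eq_true, beq_iff_eq] at hm
    have hcount : 1 < intCount X {p a, p b, p c} := by
      by_contra hle
      exact hχ ⟨p a, hmem a (by omega), p b, hmem b (by omega), p c, hmem c hc,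
        fun h => hab.ne (hinj a (by omega) b (by omega) h),
        fun h => (hab.trans hbc).ne (hinj a (by omega) c hc h),
        fun h => hbc.ne (hinj b (by omega) c hc h),
        two _ _ hm.1, two _ _ hm.2, not_lt.mp hle⟩
    rw [intCount, Set.one_lt_ncard (((Finset.finite_toSet X).inter_of_left _).subset
      Set.sdiff_subset)] at hcount
    obtain ⟨x, ⟨⟨hxX, hx⟩, hxn⟩, y, ⟨⟨hyX, hy⟩, hyn⟩, hxy⟩ := hcount
    obtain ⟨d, hd, rfl⟩ := hsurj x hxX
    obtain ⟨e, he, rfl⟩ := hsurj y hyX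
    simp only [Finset.coe_insert, Finset.coe_singleton] at hx hxn hy hyn
    simp only [Set.mem_insert_iff, Set.mem_singleton_iff, not_or] at hxn hyn
    exact ⟨d, e, hd, he, fun h => hxy (congrArg p h),
      ⟨fun h => hxn.1 (congrArg p h), fun h => hxn.2.1 (congrArg p h),
        fun h => hxn.2.2 (congrArg p h)⟩,
      ⟨fun h => hyn.1 (congrArg p h), fun h => hyn.2.1 (congrArg p h),
        fun h => hyn.2.2 (congrArg p h)⟩, inTri_of_mem_hull hx, inTri_of_mem_hull hy⟩

/-! ### Seven points without a light monochromatic triangle -/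

/-- The integer coordinates of the seven points. -/
def ptZ : Fin 7 → ℤ × ℤ := ![(2, 3), (1, 5), (0, 0), (6, 2), (0, 6), (1, 1), (5, 2)]

/-- The seven points. -/
def pt (i : Fin 7) : ℝ × ℝ := (((ptZ i).1 : ℝ), ((ptZ i).2 : ℝ))

/-- The orientation determinant of three of the seven points. -/
def crossZ (i j k : Fin 7) : ℤ :=
  ((ptZ j).1 - (ptZ i).1) * ((ptZ k).2 - (ptZ i).2) -
    ((ptZ j).2 - (ptZ i).2) * ((ptZ k).1 - (ptZ i).1)

lemma cross_pt (i j k : Fin 7) : cross (pt i) (pt j) (pt k) = crossZ i j k := by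
  simp only [cross, pt, crossZ]
  push_cast
  ring

/-- The red edges. The monochromatic triangles are `023`, `126`, `135`, `456`. -/
def redEdges : List (Fin 7 × Fin 7) :=
  [(0, 4), (0, 5), (0, 6), (1, 2), (1, 3), (1, 5), (1, 6), (2, 4), (2, 6), (3, 4), (3, 5)]

/-- The edge joining two of the seven points is red. -/
def edgeRed (i j : Fin 7) : Bool := redEdges.contains (i, j) || redEdges.contains (j, i)

/-- The point `l` is strictly inside the triangle `i j k`. -/
def Inside (i j k l : Fin 7) : Prop :=
  (0 < crossZ i j l ∧ 0 < crossZ j k l ∧ 0 < crossZ k i l) ∨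
    (0 < crossZ i k l ∧ 0 < crossZ k j l ∧ 0 < crossZ j i l)

instance (i j k l : Fin 7) : Decidable (Inside i j k l) :=
  inferInstanceAs (Decidable (_ ∨ _))

lemma pt_injective : Function.Injective pt := by
  have h : ∀ i j, ptZ i = ptZ j → i = j := by decide
  intro i j hij
  simp only [pt, Prod.mk.injEq, Int.cast_inj] at hij
  exact h i j (Prod.ext hij.1 hij.2)

lemma crossZ_ne_zero : ∀ i j k, i ≠ j → i ≠ k → j ≠ k → crossZ i j k ≠ 0 := by
  decide +kernel

lemma exists_two_inside : ∀ i j k, i ≠ j → i ≠ k → j ≠ k → edgeRed i j = edgeRed i k →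
    edgeRed i j = edgeRed j k → ∃ d e, d ≠ e ∧ (d ≠ i ∧ d ≠ j ∧ d ≠ k) ∧
      (e ≠ i ∧ e ≠ j ∧ e ≠ k) ∧ Inside i j k d ∧ Inside i j k e := by
  decide +kernel

lemma mem_hull_of_inside {i j k l : Fin 7} (h : Inside i j k l) :
    pt l ∈ convexHull ℝ ({pt i, pt j, pt k} : Set (ℝ × ℝ)) := by
  have hc : ∀ {i j k}, 0 < crossZ i j k → 0 < cross (pt i) (pt j) (pt k) := by
    intro i j k h
    rw [cross_pt]
    exact_mod_cast h
  rcases h with ⟨h₁, h₂, h₃⟩ | ⟨h₁, h₂, h₃⟩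
  · exact mem_hull_of_cross (hc h₁) (hc h₂) (hc h₃)
  · rw [Set.pair_comm (pt j) (pt k)]
    exact mem_hull_of_cross (hc h₁) (hc h₂) (hc h₃)

open Classical in
theorem exists_seven : ∃ X : Finset (ℝ × ℝ), X.card = 7 ∧ GenPos X ∧
    ∃ χ : ℝ × ℝ → ℝ × ℝ → Fin 2, (∀ p q, χ p q = χ q p) ∧
      ¬ ∃ p ∈ X, ∃ q ∈ X, ∃ r ∈ X, p ≠ q ∧ p ≠ r ∧ q ≠ r ∧
        χ p q = χ p r ∧ χ p q = χ q r ∧ intCount X {p, q, r} ≤ 1 := by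
  let χ : ℝ × ℝ → ℝ × ℝ → Fin 2 := fun u v =>
    if ∃ i j, u = pt i ∧ v = pt j ∧ edgeRed i j = true then 1 else 0
  have hχ : ∀ i j, χ (pt i) (pt j) = if edgeRed i j = true then 1 else 0 := by
    intro i j
    refine if_congr ⟨?_, fun h => ⟨i, j, rfl, rfl, h⟩⟩ rfl rfl
    rintro ⟨i', j', hi, hj, h⟩
    rwa [pt_injective hi, pt_injective hj]
  have hcol : ∀ a b : Bool, (if a = true then (1 : Fin 2) else 0) =
      (if b = true then 1 else 0) → a = b := by decide
  have hmem : ∀ x, x ∈ Finset.univ.image pt → ∃ i, pt i = x := by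
    intro x hx
    simpa using hx
  refine ⟨Finset.univ.image pt, ?_, ?_, χ, ?_, ?_⟩
  · rw [Finset.card_image_of_injective _ pt_injective, Finset.card_univ, Fintype.card_fin]
  · intro p hp q hq r hr hpq hpr hqr hcoll
    obtain ⟨i, rfl⟩ := hmem p hp
    obtain ⟨j, rfl⟩ := hmem q hq
    obtain ⟨k, rfl⟩ := hmem r hr
    have h := cross_eq_zero_of_collinear hcoll
    rw [cross_pt] at h
    exact crossZ_ne_zero i j k (ne_of_apply_ne pt hpq) (ne_of_apply_ne pt hpr)
      (ne_of_apply_ne pt hqr) (by exact_mod_cast h)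
  · intro p q
    have hsymm : ∀ i j, edgeRed i j = edgeRed j i := fun i j => Bool.or_comm _ _
    refine if_congr ⟨?_, ?_⟩ rfl rfl <;>
    · rintro ⟨i, j, hi, hj, h⟩
      exact ⟨j, i, hj, hi, (hsymm j i).trans h⟩
  · rintro ⟨p, hp, q, hq, r, hr, hpq, hpr, hqr, h₁, h₂, hle⟩
    obtain ⟨i, rfl⟩ := hmem p hp
    obtain ⟨j, rfl⟩ := hmem q hq
    obtain ⟨k, rfl⟩ := hmem r hr
    rw [hχ, hχ] at h₁ h₂
    obtain ⟨d, e, hde, hd, he, hid, hie⟩ := exists_two_inside i j k (ne_of_apply_ne pt hpq)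
      (ne_of_apply_ne pt hpr) (ne_of_apply_ne pt hqr) (hcol _ _ h₁) (hcol _ _ h₂)
    refine absurd hle (not_le.mpr ?_)
    rw [intCount, Set.one_lt_ncard (((Finset.finite_toSet _).inter_of_left _).subset
      Set.sdiff_subset)]
    have key : ∀ d, (d ≠ i ∧ d ≠ j ∧ d ≠ k) → Inside i j k d →
        pt d ∈ (((Finset.univ.image pt : Finset (ℝ × ℝ)) : Set (ℝ × ℝ)) ∩
          convexHull ℝ (({pt i, pt j, pt k} : Finset (ℝ × ℝ)) : Set (ℝ × ℝ))) \
          (({pt i, pt j, pt k} : Finset (ℝ × ℝ)) : Set (ℝ × ℝ)) := by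
      intro d hd hin
      simp only [Finset.coe_insert, Finset.coe_singleton]
      refine ⟨⟨by simp, mem_hull_of_inside hin⟩, ?_⟩
      simp only [Set.mem_insert_iff, Set.mem_singleton_iff, pt_injective.eq_iff, not_or]
      exact hd
    exact ⟨pt d, key d hd hid, pt e, key e he hie, pt_injective.ne hde⟩

end RamseyEC

/-- R_EC(3,1;3,1) = 8. -/
theorem R_EC_3131_eq_8 :
    (∀ X : Finset (ℝ × ℝ), X.card = 8 → GenPos X →
      ∀ χ : ℝ × ℝ → ℝ × ℝ → Fin 2, (∀ p q, χ p q = χ q p) →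
        ∃ p ∈ X, ∃ q ∈ X, ∃ r ∈ X, p ≠ q ∧ p ≠ r ∧ q ≠ r ∧
          χ p q = χ p r ∧ χ p q = χ q r ∧ intCount X {p, q, r} ≤ 1) ∧
    (∃ X : Finset (ℝ × ℝ), X.card = 7 ∧ GenPos X ∧
      ∃ χ : ℝ × ℝ → ℝ × ℝ → Fin 2, (∀ p q, χ p q = χ q p) ∧
        ¬ ∃ p ∈ X, ∃ q ∈ X, ∃ r ∈ X, p ≠ q ∧ p ≠ r ∧ q ≠ r ∧
          χ p q = χ p r ∧ χ p q = χ q r ∧ intCount X {p, q, r} ≤ 1) := by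
  refine ⟨fun X hX hG χ _ => ?_, RamseyEC.exists_seven⟩
  by_contra hχ
  obtain ⟨pos, red, hb⟩ := RamseyEC.bad_of_counterexample hX hG hχ
  exact RamseyEC.not_bad hb
end

section
/- h(3,0;3,0;3,3) = 23. That is: (a) for every set X of 23 points in the plane in general position and every 3-coloring of X, there exist three points of color 1 whose convex hull contains no other point of X, or three points of color 2 whose convex hull contains no other point of X, or three points of color 3 whose interior-point count with respect to X is at most 3; and (b) there exists a set of 22 points in the plane in general position with a 3-coloring admitting none of these. -/
/-- `X` with coloring `χ` contains three points of color `i` with at most `k`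
interior points. -/
def HasTri {c : ℕ} (X : Finset (ℝ × ℝ)) (χ : ℝ × ℝ → Fin c) (i : Fin c) (k : ℕ) : Prop :=
  ∃ C ⊆ X, C.card = 3 ∧ (∀ p ∈ C, χ p = i) ∧ intCount X C ≤ k

/-! ### Orientation and triangles -/
open Classical in
/-- The points of `S` lying in the region `K`. -/
noncomputable def cut (S : Finset (ℝ × ℝ)) (K : Set (ℝ × ℝ)) : Finset (ℝ × ℝ) :=
  S.filter (· ∈ K)

open Classical in
/-- The points of `T` that are not vertices of its convex hull. -/
noncomputable def nonext (T : Finset (ℝ × ℝ)) : Finset (ℝ × ℝ) :=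
  T.filter (fun x => x ∈ convexHull ℝ ((T : Set (ℝ × ℝ)) \ {x}))

theorem mem_cut {S : Finset (ℝ × ℝ)} {K : Set (ℝ × ℝ)} {x : ℝ × ℝ} :
    x ∈ cut S K ↔ x ∈ S ∧ x ∈ K := by
  simp [cut]

theorem mem_nonext {T : Finset (ℝ × ℝ)} {x : ℝ × ℝ} :
    x ∈ nonext T ↔ x ∈ T ∧ x ∈ convexHull ℝ ((T : Set (ℝ × ℝ)) \ {x}) := by
  simp [nonext]

/-- General position in terms of the orientation determinant. -/
def CrossPos (X : Finset (ℝ × ℝ)) : Prop :=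
  ∀ p ∈ X, ∀ q ∈ X, ∀ r ∈ X, p ≠ q → p ≠ r → q ≠ r → cross p q r ≠ 0

theorem collinear_iff_cross {p q r : ℝ × ℝ} (hpq : p ≠ q) :
    Collinear ℝ ({p, q, r} : Set (ℝ × ℝ)) ↔ cross p q r = 0 := by
  rw [collinear_iff_of_mem (p₀ := p) (by simp)]
  constructor
  · rintro ⟨v, hv⟩
    obtain ⟨s, hs⟩ := hv q (by simp)
    obtain ⟨t, ht⟩ := hv r (by simp)
    subst hs ht
    simp [cross]
    ring
  · intro h
    have hd : 0 < (q.1 - p.1) ^ 2 + (q.2 - p.2) ^ 2 := by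
      by_contra hn
      apply hpq
      have h1 : q.1 - p.1 = 0 := by nlinarith [sq_nonneg (q.1 - p.1), sq_nonneg (q.2 - p.2)]
      have h2 : q.2 - p.2 = 0 := by nlinarith [sq_nonneg (q.1 - p.1), sq_nonneg (q.2 - p.2)]
      ext <;> linarith
    refine ⟨q - p, ?_⟩
    intro x hx
    simp only [Set.mem_insert_iff, Set.mem_singleton_iff] at hx
    rcases hx with rfl | rfl | rfl
    · exact ⟨0, by simp⟩
    · exact ⟨1, by simp⟩
    · refine ⟨((q.1 - p.1) * (x.1 - p.1) + (q.2 - p.2) * (x.2 - p.2)) /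
        ((q.1 - p.1) ^ 2 + (q.2 - p.2) ^ 2), ?_⟩
      unfold cross at h
      ext
      · simp
        field_simp
        linear_combination (-(q.2 - p.2)) * h
      · simp
        field_simp
        linear_combination (q.1 - p.1) * h

theorem GenPos.crossPos {X : Finset (ℝ × ℝ)} (h : GenPos X) : CrossPos X :=
  fun p hp q hq r hr h1 h2 h3 h0 =>
    h p hp q hq r hr h1 h2 h3 ((collinear_iff_cross h1).2 h0)

theorem cross_rot (a b c : ℝ × ℝ) : cross b c a = cross a b c := by
  unfold cross; ring

theorem cross_swap (a b c : ℝ × ℝ) : cross b a c = -cross a b c := by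
  unfold cross; ring

theorem cross_combo (p q u v : ℝ × ℝ) {s t : ℝ} (h : s + t = 1) :
    cross p q (s • u + t • v) = s * cross p q u + t * cross p q v := by
  obtain rfl : s = 1 - t := by linarith
  simp [cross]; ring

theorem convex_cross_nonneg (p q : ℝ × ℝ) : Convex ℝ {x | 0 ≤ cross p q x} := by
  intro u hu v hv s t hs ht hst
  simp only [Set.mem_ofPred_eq] at *
  rw [cross_combo p q u v hst]
  positivity

theorem convex_cross_nonpos (p q : ℝ × ℝ) : Convex ℝ {x | cross p q x ≤ 0} := by
  intro u hu v hv s t hs ht hst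
  simp only [Set.mem_ofPred_eq] at *
  rw [cross_combo p q u v hst]
  nlinarith [mul_nonneg hs (neg_nonneg.2 hu), mul_nonneg ht (neg_nonneg.2 hv)]

theorem mem_tri_iff {a b c x : ℝ × ℝ} (h : 0 < cross a b c) :
    x ∈ convexHull ℝ ({a, b, c} : Set (ℝ × ℝ)) ↔
      0 ≤ cross a b x ∧ 0 ≤ cross b c x ∧ 0 ≤ cross c a x := by
  constructor
  · intro hx
    refine ⟨?_, ?_, ?_⟩
    · refine convexHull_min ?_ (convex_cross_nonneg a b) hx
      rintro y (rfl | rfl | rfl)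
      · simp [cross]
      · simp [cross, mul_comm]
      · exact h.le
    · refine convexHull_min ?_ (convex_cross_nonneg b c) hx
      rintro y (rfl | rfl | rfl)
      · simpa [cross_rot] using h.le
      · simp [cross]
      · simp [cross, mul_comm]
    · refine convexHull_min ?_ (convex_cross_nonneg c a) hx
      rintro y (rfl | rfl | rfl)
      · simp [cross, mul_comm]
      · simpa [← cross_rot] using h.le
      · simp [cross]
  · rintro ⟨h1, h2, h3⟩
    have hsum : cross b c x + cross c a x + cross a b x = cross a b c := by unfold cross; ring
    have hx : x = (cross b c x / cross a b c) • a + (cross c a x / cross a b c) • b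
        + (cross a b x / cross a b c) • c := by
      have := h.ne'
      ext
      · simp
        field_simp
        unfold cross; ring
      · simp
        field_simp
        unfold cross; ring
    rw [hx]
    have hc := convex_convexHull ℝ ({a, b, c} : Set (ℝ × ℝ))
    have := hc.sum_mem (t := Finset.univ)
      (w := ![cross b c x / cross a b c, cross c a x / cross a b c, cross a b x / cross a b c])
      (z := ![a, b, c]) ?_ ?_ ?_
    · simpa [Fin.sum_univ_three] using this
    · intro i _
      fin_cases i <;> simp <;> positivity
    · simp only [Fin.sum_univ_three, Matrix.cons_val]
      rw [← add_div, ← add_div, hsum, div_self h.ne']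
    · intro i _
      apply subset_convexHull
      fin_cases i <;> simp

theorem convexHull_extreme {T : Set (ℝ × ℝ)} (hT : T.Finite) :
    convexHull ℝ ((convexHull ℝ T).extremePoints ℝ) = convexHull ℝ T := by
  have h := closure_convexHull_extremePoints (hT.isCompact_convexHull ℝ) (convex_convexHull ℝ T)
  rwa [IsClosed.closure_eq] at h
  exact ((hT.subset extremePoints_convexHull_subset).isCompact_convexHull ℝ).isClosed

/-- A point of `T` outside the hull of the other points of `T` is an extreme point. -/
theorem extreme_of_notMem {T : Set (ℝ × ℝ)} (hT : T.Finite) {x : ℝ × ℝ} (hx : x ∈ T)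
    (h : x ∉ convexHull ℝ (T \ {x})) : x ∈ (convexHull ℝ T).extremePoints ℝ := by
  by_contra hn
  apply h
  refine convexHull_mono (s := (convexHull ℝ T).extremePoints ℝ) ?_ ?_
  · exact fun y hy => ⟨extremePoints_convexHull_subset hy, fun hyx => hn (hyx ▸ hy)⟩
  · rw [convexHull_extreme hT]
    exact subset_convexHull ℝ _ hx

theorem notMem_of_extreme {T : Set (ℝ × ℝ)} {x : ℝ × ℝ}
    (h : x ∈ (convexHull ℝ T).extremePoints ℝ) : x ∉ convexHull ℝ (T \ {x}) := by
  intro hx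
  have := inter_extremePoints_subset_extremePoints_of_subset
    (convexHull_mono (Set.sdiff_subset : T \ {x} ⊆ T)) ⟨hx, h⟩
  exact (extremePoints_convexHull_subset this).2 rfl

/-- `nonext` points of `T` are recognised by any point set `Z` inside the hull of `T`. -/
theorem mem_nonext_of {T : Finset (ℝ × ℝ)} {Z : Set (ℝ × ℝ)} {x : ℝ × ℝ} (hx : x ∈ T)
    (hZ : Z ⊆ convexHull ℝ (T : Set (ℝ × ℝ))) (hxZ : x ∈ convexHull ℝ Z) (hn : x ∉ Z) :
    x ∈ nonext T := by
  rw [mem_nonext]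
  refine ⟨hx, ?_⟩
  by_contra h
  have h1 := extreme_of_notMem T.finite_toSet (by exact_mod_cast hx) h
  have h2 := inter_extremePoints_subset_extremePoints_of_subset
    (convexHull_min hZ (convex_convexHull ℝ _)) ⟨hxZ, h1⟩
  exact hn (extremePoints_convexHull_subset h2)

/-- `x` is strictly inside the positively oriented triangle `abc`. -/
def In3 (a b c x : ℝ × ℝ) : Prop := 0 < cross a b x ∧ 0 < cross b c x ∧ 0 < cross c a x

theorem mem_tri_iff_in3 {X : Finset (ℝ × ℝ)} (hX : CrossPos X) {a b c x : ℝ × ℝ}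
    (ha : a ∈ X) (hb : b ∈ X) (hc : c ∈ X) (hx : x ∈ X) (h : 0 < cross a b c)
    (hxa : x ≠ a) (hxb : x ≠ b) (hxc : x ≠ c) :
    x ∈ convexHull ℝ ({a, b, c} : Set (ℝ × ℝ)) ↔ In3 a b c x := by
  have hab : a ≠ b := by rintro rfl; simp [cross] at h
  have hbc : b ≠ c := by rintro rfl; simp [cross, mul_comm] at h
  have hca : c ≠ a := by rintro rfl; simp [cross] at h
  have h1 := hX a ha b hb x hx hab hxa.symm hxb.symm
  have h2 := hX b hb c hc x hx hbc hxb.symm hxc.symm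
  have h3 := hX c hc a ha x hx hca hxc.symm hxa.symm
  rw [mem_tri_iff h, In3]
  exact ⟨fun ⟨h4, h5, h6⟩ => ⟨h4.lt_of_ne' h1, h5.lt_of_ne' h2, h6.lt_of_ne' h3⟩,
    fun ⟨h4, h5, h6⟩ => ⟨h4.le, h5.le, h6.le⟩⟩

theorem In3.rot {a b c x : ℝ × ℝ} (h : In3 a b c x) : In3 b c a x := ⟨h.2.1, h.2.2, h.1⟩

theorem In3.area {a b c x : ℝ × ℝ} (h : In3 a b c x) : 0 < cross a b c := by
  have hsum : cross b c x + cross c a x + cross a b x = cross a b c := by unfold cross; ring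
  obtain ⟨h1, h2, h3⟩ := h
  linarith

theorem In3.ne {a b c x : ℝ × ℝ} (h : In3 a b c x) : x ≠ a ∧ x ≠ b ∧ x ≠ c := by
  obtain ⟨h1, h2, h3⟩ := h
  refine ⟨?_, ?_, ?_⟩ <;> rintro rfl
  · simp [cross] at h1
  · simp [cross] at h2
  · simp [cross] at h3

/-- The sub-triangle `abp` of `abc` with `p` inside lies inside `abc`. -/
theorem In3.trans {a b c p x : ℝ × ℝ} (hp : In3 a b c p) (h : In3 a b p x) : In3 a b c x := by
  have h0 := hp.area
  obtain ⟨p1, p2, p3⟩ := hp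
  obtain ⟨h1, h2, h3⟩ := h
  have e1 : cross a b p * cross b c x = cross b p x * cross a b c + cross a b x * cross b c p := by
    unfold cross; ring
  have e2 : cross a b p * cross c a x = cross p a x * cross a b c + cross a b x * cross c a p := by
    unfold cross; ring
  refine ⟨h1, ?_, ?_⟩
  · refine pos_of_mul_pos_right (a := cross a b p) ?_ p1.le
    rw [e1]; positivity
  · refine pos_of_mul_pos_right (a := cross a b p) ?_ p1.le
    rw [e2]; positivity

/-- A point `p` inside `abc` cuts the triangle into `abp`, `bcp`, `cap`. -/
theorem In3.cover {X : Finset (ℝ × ℝ)} (hX : CrossPos X) {a b c p x : ℝ × ℝ}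
    (ha : a ∈ X) (hb : b ∈ X) (hc : c ∈ X) (hpX : p ∈ X) (hx : x ∈ X)
    (hp : In3 a b c p) (h : In3 a b c x) (hxp : x ≠ p) :
    In3 a b p x ∨ In3 b c p x ∨ In3 c a p x := by
  have h1 := hX p hpX a ha x hx hp.ne.1 hxp.symm h.ne.1.symm
  have h2 := hX p hpX b hb x hx hp.ne.2.1 hxp.symm h.ne.2.1.symm
  have h3 := hX p hpX c hc x hx hp.ne.2.2 hxp.symm h.ne.2.2.symm
  have e : cross b c p * cross p a x + cross c a p * cross p b x + cross a b p * cross p c x = 0 := by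
    unfold cross; ring
  obtain ⟨p1, p2, p3⟩ := hp
  obtain ⟨x1, x2, x3⟩ := h
  simp only [In3]
  have s1 : cross a p x = -cross p a x := by unfold cross; ring
  have s2 : cross b p x = -cross p b x := by unfold cross; ring
  have s3 : cross c p x = -cross p c x := by unfold cross; ring
  rw [s1, s2, s3]
  rcases lt_or_gt_of_ne h1 with g1 | g1 <;> rcases lt_or_gt_of_ne h2 with g2 | g2 <;>
    rcases lt_or_gt_of_ne h3 with g3 | g3
  · exfalso
    nlinarith [mul_pos p2 (neg_pos.2 g1), mul_pos p3 (neg_pos.2 g2), mul_pos p1 (neg_pos.2 g3)]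
  all_goals first
    | (left; exact ⟨x1, by linarith, by linarith⟩)
    | (right; left; exact ⟨x2, by linarith, by linarith⟩)
    | (right; right; exact ⟨x3, by linarith, by linarith⟩)
    | (exfalso
       nlinarith [mul_pos p2 g1, mul_pos p3 g2, mul_pos p1 g3])

open Classical in
/-- Lower bound for the number of points of `Y` in a triangle spanned by points of `T`:
the points of `T` inside it cut it into `2 n + 1` triangles. -/
theorem tri_count {X T Y : Finset (ℝ × ℝ)} (hX : CrossPos X) (hTX : T ⊆ X)
    {m : ℕ} (hm : ∀ a ∈ T, ∀ b ∈ T, ∀ c ∈ T, 0 < cross a b c →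
      (∀ t ∈ T, ¬ In3 a b c t) → m ≤ (Y.filter (In3 a b c)).card) (n : ℕ) :
    ∀ a ∈ T, ∀ b ∈ T, ∀ c ∈ T, 0 < cross a b c → (T.filter (In3 a b c)).card = n →
      m * (2 * n + 1) ≤ (Y.filter (In3 a b c)).card := by
  induction n using Nat.strong_induction_on with
  | _ n ih =>
    intro a ha b hb c hc h hn
    rcases Nat.eq_zero_or_pos n with rfl | hpos
    · rw [Finset.card_eq_zero, Finset.filter_eq_empty_iff] at hn
      simpa using hm a ha b hb c hc h hn
    · obtain ⟨p, hp⟩ := Finset.card_pos.1 (hn ▸ hpos)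
      rw [Finset.mem_filter] at hp
      obtain ⟨hpT, hp⟩ := hp
      have t1 : ∀ x, In3 a b p x → In3 a b c x := fun x hx => hp.trans hx
      have t2 : ∀ x, In3 b c p x → In3 a b c x := fun x hx => (hp.rot.trans hx).rot.rot
      have t3 : ∀ x, In3 c a p x → In3 a b c x := fun x hx => (hp.rot.rot.trans hx).rot
      have d : ∀ a b c x, In3 a b p x → ¬ In3 b c p x := by
        intro a b c x h1 h2
        have := cross_swap p b x
        linarith [h1.2.1, h2.2.2]
      -- points of `T`: `p` itself, and those in the three smaller triangles
      have hcov : T.filter (In3 a b c) ⊆ insert p (T.filter (In3 a b p) ∪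
          (T.filter (In3 b c p) ∪ T.filter (In3 c a p))) := by
        intro x hx
        simp only [Finset.mem_insert, Finset.mem_union, Finset.mem_filter] at hx ⊢
        by_cases hxp : x = p
        · exact Or.inl hxp
        · right
          have := In3.cover hX (hTX ha) (hTX hb) (hTX hc) (hTX hpT) (hTX hx.1) hp hx.2 hxp
          tauto
      have hlt : ∀ u v w, (∀ x, In3 u v w x → In3 a b c x) → ¬ In3 u v w p →
          (T.filter (In3 u v w)).card < n := by
        intro u v w hs hnp
        rw [← hn]
        apply Finset.card_lt_card
        rw [Finset.ssubset_iff_of_subset]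
        · exact ⟨p, by simp [hpT, hp], by simp [hnp]⟩
        · intro x hx
          rw [Finset.mem_filter] at hx ⊢
          exact ⟨hx.1, hs x hx.2⟩
      have np : ∀ u v, ¬ In3 u v p p := fun u v hh => hh.ne.2.2 rfl
      have i1 := ih _ (hlt a b p t1 (np a b)) a ha b hb p hpT hp.1 rfl
      have i2 := ih _ (hlt b c p t2 (np b c)) b hb c hc p hpT hp.2.1 rfl
      have i3 := ih _ (hlt c a p t3 (np c a)) c hc a ha p hpT hp.2.2 rfl
      have hc1 := Finset.card_le_card hcov
      have hc2 := Finset.card_insert_le p (T.filter (In3 a b p) ∪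
          (T.filter (In3 b c p) ∪ T.filter (In3 c a p)))
      have hc3 := Finset.card_union_le (T.filter (In3 a b p))
          (T.filter (In3 b c p) ∪ T.filter (In3 c a p))
      have hc4 := Finset.card_union_le (T.filter (In3 b c p)) (T.filter (In3 c a p))
      have hY : Y.filter (In3 a b p) ∪ (Y.filter (In3 b c p) ∪ Y.filter (In3 c a p)) ⊆
          Y.filter (In3 a b c) := by
        intro x hx
        simp only [Finset.mem_union, Finset.mem_filter] at hx ⊢
        rcases hx with hx | hx | hx
        · exact ⟨hx.1, t1 x hx.2⟩
        · exact ⟨hx.1, t2 x hx.2⟩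
        · exact ⟨hx.1, t3 x hx.2⟩
      have hY1 := Finset.card_le_card hY
      rw [Finset.card_union_of_disjoint, Finset.card_union_of_disjoint] at hY1
      · rw [hn] at hc1
        generalize (T.filter (In3 a b p)).card = n1 at *
        generalize (T.filter (In3 b c p)).card = n2 at *
        generalize (T.filter (In3 c a p)).card = n3 at *
        have : n ≤ n1 + n2 + n3 + 1 := by omega
        calc m * (2 * n + 1) ≤ m * (2 * (n1 + n2 + n3 + 1) + 1) := by gcongr
          _ = m * (2 * n1 + 1) + (m * (2 * n2 + 1) + m * (2 * n3 + 1)) := by ring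
          _ ≤ _ := by omega
      · rw [Finset.disjoint_filter]
        exact fun x _ h1 h2 => d b c a x h1 h2
      · rw [Finset.disjoint_union_right, Finset.disjoint_filter, Finset.disjoint_filter]
        exact ⟨fun x _ h1 h2 => d a b c x h1 h2, fun x _ h1 h2 => d c a b x h2 h1⟩

/-! ### Convex polygons -/

theorem ConvexPos.mono {H H' : Finset (ℝ × ℝ)} (h : ConvexPos H) (hs : H' ⊆ H) : ConvexPos H' :=
  fun q hq hq' => h q (hs hq) (convexHull_mono
    (Set.sdiff_subset_sdiff_left (by exact_mod_cast hs)) hq')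

theorem eq_lineMap_of_cross {p q z : ℝ × ℝ} (hpq : p ≠ q) (h : cross p q z = 0) :
    ∃ s : ℝ, z = p + s • (q - p) := by
  have := (collinear_iff_cross hpq).2 h
  rw [collinear_iff_of_mem (p₀ := p) (by simp)] at this
  obtain ⟨v, hv⟩ := this
  obtain ⟨s, hs⟩ := hv q (by simp)
  obtain ⟨t, ht⟩ := hv z (by simp)
  subst hs ht
  have hs0 : s ≠ 0 := by rintro rfl; simp at hpq
  refine ⟨t / s, ?_⟩
  simp [smul_smul, hs0, add_comm]

/-- A line through two vertices `p`, `q` of a convex polygon meets it in the segment `pq`. -/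
theorem chord {H : Finset (ℝ × ℝ)} (hH : ConvexPos H) {p q z : ℝ × ℝ} (hp : p ∈ H) (hq : q ∈ H)
    (hpq : p ≠ q) (hz : z ∈ convexHull ℝ (H : Set (ℝ × ℝ))) (h : cross p q z = 0) :
    z ∈ segment ℝ p q := by
  obtain ⟨s, rfl⟩ := eq_lineMap_of_cross hpq h
  have ep := mem_extremePoints.1 (extreme_of_notMem H.finite_toSet (by exact_mod_cast hp) (hH p hp))
  have eq := mem_extremePoints.1 (extreme_of_notMem H.finite_toSet (by exact_mod_cast hq) (hH q hq))
  rcases lt_or_ge s 0 with h0 | h0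
  · exfalso
    refine hpq (ep.2 _ hz q eq.1 ?_).2.symm
    have : 0 < 1 - s := by linarith
    refine ⟨1 / (1 - s), -s / (1 - s), by positivity, div_pos (by linarith) this, ?_, ?_⟩
    · field_simp; ring
    · ext <;> simp <;> field_simp <;> ring
  rcases lt_or_ge 1 s with h1 | h1
  · exfalso
    refine hpq (eq.2 _ hz p ep.1 ?_).2
    refine ⟨1 / s, (s - 1) / s, by positivity, div_pos (by linarith) (by linarith), ?_, ?_⟩
    · field_simp; ring
    · ext <;> simp <;> field_simp <;> ring
  · exact ⟨1 - s, s, by linarith, h0, by ring, by ext <;> simp <;> ring⟩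

open Classical in
/-- A diagonal `pq` cuts a convex polygon into the polygons on its two sides. -/
theorem hull_split {H : Finset (ℝ × ℝ)} (hH : ConvexPos H) {p q : ℝ × ℝ} (hp : p ∈ H) (hq : q ∈ H)
    (hpq : p ≠ q) :
    convexHull ℝ (H : Set (ℝ × ℝ)) ⊆
      convexHull ℝ (H.filter (fun x => 0 ≤ cross p q x) : Set (ℝ × ℝ)) ∪
      convexHull ℝ (H.filter (fun x => cross p q x ≤ 0) : Set (ℝ × ℝ)) := by
  set H1 := H.filter (fun x => 0 ≤ cross p q x) with hH1
  set H2 := H.filter (fun x => cross p q x ≤ 0) with hH2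
  have cp : cross p q p = 0 := by simp [cross]
  have cq : cross p q q = 0 := by simp [cross, mul_comm]
  have p1 : p ∈ H1 := by simp [hH1, hp, cp]
  have q1 : q ∈ H1 := by simp [hH1, hq, cq]
  have p2 : p ∈ H2 := by simp [hH2, hp, cp]
  have q2 : q ∈ H2 := by simp [hH2, hq, cq]
  have s1 : convexHull ℝ (H1 : Set (ℝ × ℝ)) ⊆ convexHull ℝ (H : Set (ℝ × ℝ)) :=
    convexHull_mono (by exact_mod_cast Finset.filter_subset _ _)
  have s2 : convexHull ℝ (H2 : Set (ℝ × ℝ)) ⊆ convexHull ℝ (H : Set (ℝ × ℝ)) :=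
    convexHull_mono (by exact_mod_cast Finset.filter_subset _ _)
  have c1 := convex_convexHull ℝ (H1 : Set (ℝ × ℝ))
  have c2 := convex_convexHull ℝ (H2 : Set (ℝ × ℝ))
  have n1 : convexHull ℝ (H1 : Set (ℝ × ℝ)) ⊆ {x | 0 ≤ cross p q x} :=
    convexHull_min (fun x hx => (Finset.mem_filter.1 hx).2) (convex_cross_nonneg p q)
  have n2 : convexHull ℝ (H2 : Set (ℝ × ℝ)) ⊆ {x | cross p q x ≤ 0} :=
    convexHull_min (fun x hx => (Finset.mem_filter.1 hx).2) (convex_cross_nonpos p q)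
  -- on the line `pq` both parts contain the whole chord
  have hch : ∀ z ∈ convexHull ℝ (H : Set (ℝ × ℝ)), cross p q z = 0 →
      z ∈ convexHull ℝ (H1 : Set (ℝ × ℝ)) ∧ z ∈ convexHull ℝ (H2 : Set (ℝ × ℝ)) := by
    intro z hz h0
    have := chord hH hp hq hpq hz h0
    exact ⟨c1.segment_subset (subset_convexHull ℝ _ p1) (subset_convexHull ℝ _ q1) this,
      c2.segment_subset (subset_convexHull ℝ _ p2) (subset_convexHull ℝ _ q2) this⟩
  have hU : (H : Set (ℝ × ℝ)) = (H1 : Set (ℝ × ℝ)) ∪ H2 := by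
    ext x
    simp only [hH1, hH2, Set.mem_union, Finset.mem_coe, Finset.mem_filter]
    have := le_total 0 (cross p q x)
    tauto
  intro x hx
  have hx' := hx
  rw [hU, convexHull_union ⟨p, p1⟩ ⟨p, p2⟩, mem_convexJoin] at hx'
  obtain ⟨u, hu, v, hv, hxs⟩ := hx'
  have fu : 0 ≤ cross p q u := n1 hu
  have fv : cross p q v ≤ 0 := n2 hv
  obtain ⟨a, b, ha, hb, hab, rfl⟩ := hxs
  have fx := cross_combo p q u v hab
  by_cases hz : cross p q u - cross p q v = 0
  · exact Or.inl (hch _ hx (by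
      have h1 : cross p q u = 0 := by linarith
      have h2 : cross p q v = 0 := by linarith
      rw [fx, h1, h2]; ring)).1
  · have hpos : 0 < cross p q u - cross p q v := lt_of_le_of_ne (by linarith) (Ne.symm hz)
    -- `z` is the point where the segment `uv` crosses the line `pq`
    obtain ⟨z, hzdef⟩ : ∃ z, z = (-cross p q v / (cross p q u - cross p q v)) • u +
      (cross p q u / (cross p q u - cross p q v)) • v := ⟨_, rfl⟩
    have w1 : 0 ≤ -cross p q v / (cross p q u - cross p q v) :=
      div_nonneg (by linarith) hpos.le
    have w2 : 0 ≤ cross p q u / (cross p q u - cross p q v) := div_nonneg fu hpos.le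
    have w3 : -cross p q v / (cross p q u - cross p q v) +
        cross p q u / (cross p q u - cross p q v) = 1 := by
      field_simp; ring
    have hzH : z ∈ convexHull ℝ (H : Set (ℝ × ℝ)) := by
      rw [hzdef]
      exact convex_convexHull ℝ _ (s1 hu) (s2 hv) w1 w2 w3
    have hz0 : cross p q z = 0 := by
      rw [hzdef, cross_combo p q u v w3]
      field_simp; ring
    obtain ⟨z1, z2⟩ := hch z hzH hz0
    obtain rfl : a = 1 - b := by linarith
    rcases le_total 0 (cross p q ((1 - b) • u + b • v)) with h0 | h0
    · left
      rw [fx] at h0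
      rcases fu.eq_or_lt with fu0 | fu0
      · exact (hch _ hx (by rw [fx]; nlinarith [mul_nonneg hb (neg_nonneg.2 fv)])).1
      refine c1.segment_subset hu z1 ⟨((1 - b) * cross p q u + b * cross p q v) / cross p q u,
        b * (cross p q u - cross p q v) / cross p q u, by positivity, by positivity, ?_, ?_⟩
      · field_simp; ring
      · rw [hzdef]; ext <;> simp <;> field_simp <;> ring
    · right
      rw [fx] at h0
      rcases fv.eq_or_lt with fv0 | fv0
      · exact (hch _ hx (by rw [fx]; nlinarith [mul_nonneg ha fu])).2
      have fv1 : 0 < -cross p q v := by linarith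
      refine c2.segment_subset hv z2 ⟨-((1 - b) * cross p q u + b * cross p q v) / -cross p q v,
        (1 - b) * (cross p q u - cross p q v) / -cross p q v,
        div_nonneg (by linarith) fv1.le, by positivity, ?_, ?_⟩
      · have := fv0.ne
        field_simp; ring
      · have := fv0.ne
        rw [hzdef]; ext <;> simp <;> field_simp <;> ring

/-- Among four points in general position there is a line through two of them, one being `p`,
that separates the other two. -/
theorem exists_diagonal {X : Finset (ℝ × ℝ)} (hX : CrossPos X) {p a b c : ℝ × ℝ}
    (hp : p ∈ X) (ha : a ∈ X) (hb : b ∈ X) (hc : c ∈ X) (hpa : p ≠ a) (hpb : p ≠ b) (hpc : p ≠ c)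
    (hab : a ≠ b) (hac : a ≠ c) (hbc : b ≠ c) :
    ∃ q ∈ ({a, b, c} : Set (ℝ × ℝ)), ∃ u ∈ ({a, b, c} : Set (ℝ × ℝ)),
      ∃ v ∈ ({a, b, c} : Set (ℝ × ℝ)), 0 < cross p q u ∧ cross p q v < 0 := by
  have h1 := hX p hp a ha b hb hpa hpb hab
  have h2 := hX p hp b hb c hc hpb hpc hbc
  have h3 := hX p hp c hc a ha hpc hpa hac.symm
  have s : ∀ u v, cross p v u = - cross p u v := fun u v => by unfold cross; ring
  have key : ∀ x y z : ℝ × ℝ, 0 < cross p x y * cross p y z →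
      (0 < cross p y z ∧ cross p y x < 0) ∨ (0 < cross p y x ∧ cross p y z < 0) := by
    intro x y z h
    rw [s x y]
    rcases pos_and_pos_or_neg_and_neg_of_mul_pos h with ⟨g1, g2⟩ | ⟨g1, g2⟩
    · left; constructor <;> linarith
    · right; constructor <;> linarith
  have : 0 < cross p a b * cross p b c ∨ 0 < cross p b c * cross p c a ∨
      0 < cross p c a * cross p a b := by
    rcases lt_or_gt_of_ne h1 with g1 | g1 <;> rcases lt_or_gt_of_ne h2 with g2 | g2 <;>
      rcases lt_or_gt_of_ne h3 with g3 | g3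
    all_goals first
      | exact Or.inl (mul_pos g1 g2)
      | exact Or.inl (mul_pos_of_neg_of_neg g1 g2)
      | exact Or.inr (Or.inl (mul_pos g2 g3))
      | exact Or.inr (Or.inl (mul_pos_of_neg_of_neg g2 g3))
      | exact Or.inr (Or.inr (mul_pos g3 g1))
      | exact Or.inr (Or.inr (mul_pos_of_neg_of_neg g3 g1))
  rcases this with h | h | h
  · rcases key _ _ _ h with h | h
    · exact ⟨b, by simp, c, by simp, a, by simp, h⟩
    · exact ⟨b, by simp, a, by simp, c, by simp, h⟩
  · rcases key _ _ _ h with h | h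
    · exact ⟨c, by simp, a, by simp, b, by simp, h⟩
    · exact ⟨c, by simp, b, by simp, a, by simp, h⟩
  · rcases key _ _ _ h with h | h
    · exact ⟨a, by simp, b, by simp, c, by simp, h⟩
    · exact ⟨a, by simp, c, by simp, b, by simp, h⟩

open Classical in
/-- The count for a convex polygon `H` with vertices in `T`: cutting along diagonals and at
interior points of `T` gives `2 n + |H| - 2` triangles, `n` being the number of those points. -/
theorem poly_count {X T Y : Finset (ℝ × ℝ)} (hX : CrossPos X) (hTX : T ⊆ X) (hYX : Y ⊆ X)
    (hTY : Disjoint T Y)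
    {m : ℕ} (hm : ∀ a ∈ T, ∀ b ∈ T, ∀ c ∈ T, 0 < cross a b c →
      (∀ t ∈ T, ¬ In3 a b c t) → m ≤ (Y.filter (In3 a b c)).card) (n : ℕ) :
    ∀ H ⊆ T, ConvexPos H → 3 ≤ H.card → H.card = n →
      m * (2 * (cut T (convexHull ℝ (H : Set (ℝ × ℝ))) \ H).card + H.card) ≤
        (cut Y (convexHull ℝ (H : Set (ℝ × ℝ)))).card + 2 * m := by
  induction n using Nat.strong_induction_on with
  | _ n ih =>
    intro H hHT hH h3 hn
    rcases h3.eq_or_lt with h3 | h4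
    · obtain ⟨a, b, c, hab, hac, hbc, rfl⟩ := Finset.card_eq_three.1 h3.symm
      have key : ∀ a b c : ℝ × ℝ, a ∈ T → b ∈ T → c ∈ T → ({a, b, c} : Finset (ℝ × ℝ)).card = 3 →
          0 < cross a b c →
          m * (2 * (cut T (convexHull ℝ (({a, b, c} : Finset (ℝ × ℝ)) : Set (ℝ × ℝ))) \
            {a, b, c}).card + ({a, b, c} : Finset (ℝ × ℝ)).card) ≤
            (cut Y (convexHull ℝ (({a, b, c} : Finset (ℝ × ℝ)) : Set (ℝ × ℝ)))).card + 2 * m := by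
        intro a b c ha hb hc h3 h
        have := tri_count hX hTX hm _ a ha b hb c hc h rfl
        have e1 : cut T (convexHull ℝ (({a, b, c} : Finset (ℝ × ℝ)) : Set (ℝ × ℝ))) \ {a, b, c} =
            T.filter (In3 a b c) := by
          ext x
          simp only [Finset.coe_insert, Finset.coe_singleton, Finset.mem_sdiff, mem_cut,
            Finset.mem_insert, Finset.mem_singleton, not_or, Finset.mem_filter]
          constructor
          · rintro ⟨⟨hx, hx'⟩, n1, n2, n3⟩
            exact ⟨hx, (mem_tri_iff_in3 hX (hTX ha) (hTX hb) (hTX hc) (hTX hx) h n1 n2 n3).1 hx'⟩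
          · rintro ⟨hx, hx'⟩
            obtain ⟨n1, n2, n3⟩ := hx'.ne
            exact ⟨⟨hx, (mem_tri_iff_in3 hX (hTX ha) (hTX hb) (hTX hc) (hTX hx)
              h n1 n2 n3).2 hx'⟩, n1, n2, n3⟩
        have e2 : Y.filter (In3 a b c) ⊆
            cut Y (convexHull ℝ (({a, b, c} : Finset (ℝ × ℝ)) : Set (ℝ × ℝ))) := by
          intro x hx
          rw [Finset.mem_filter] at hx
          obtain ⟨n1, n2, n3⟩ := hx.2.ne
          rw [mem_cut]
          push_cast
          exact ⟨hx.1, (mem_tri_iff_in3 hX (hTX ha) (hTX hb) (hTX hc) (hYX hx.1)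
              h n1 n2 n3).2 hx.2⟩
        have e3 := Finset.card_le_card e2
        rw [e1, h3]
        linarith
      have ha : a ∈ T := hHT (by simp)
      have hb : b ∈ T := hHT (by simp)
      have hc : c ∈ T := hHT (by simp)
      rcases lt_or_gt_of_ne (hX a (hTX ha) b (hTX hb) c (hTX hc) hab hac hbc) with h | h
      · have h' : 0 < cross b a c := by rw [cross_swap]; linarith
        have := key b a c hb ha hc (by rw [Finset.insert_comm]; exact h3.symm) h'
        rwa [Finset.insert_comm b a] at this
      · exact key a b c ha hb hc h3.symm h
    · -- a diagonal `pq` with vertices `u`, `v` on its two sides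
      obtain ⟨A, hAH, hA⟩ := Finset.exists_subset_card_eq (show 4 ≤ H.card from h4)
      obtain ⟨p, a, b, c, hpa, hpb, hpc, hab, hac, hbc, rfl⟩ := Finset.card_eq_four.1 hA
      have hp : p ∈ H := hAH (by simp)
      have hsub : ∀ x ∈ ({a, b, c} : Set (ℝ × ℝ)), x ∈ H := by
        rintro x (rfl | rfl | rfl) <;> exact hAH (by simp)
      obtain ⟨q, hq, u, hu, v, hv, hpu, hpv⟩ := exists_diagonal hX (hTX (hHT hp))
        (hTX (hHT (hsub a (by simp)))) (hTX (hHT (hsub b (by simp))))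
        (hTX (hHT (hsub c (by simp)))) hpa hpb hpc hab hac hbc
      replace hq := hsub q hq
      replace hu := hsub u hu
      replace hv := hsub v hv
      have hpq : p ≠ q := by rintro rfl; simp [cross] at hpu
      have cp : cross p q p = 0 := by simp [cross]
      have cq : cross p q q = 0 := by simp [cross, mul_comm]
      have hzero : ∀ x ∈ X, cross p q x = 0 → x = p ∨ x = q := by
        intro x hx h0
        by_contra hne
        rw [not_or] at hne
        exact hX p (hTX (hHT hp)) q (hTX (hHT hq)) x hx hpq (Ne.symm hne.1) (Ne.symm hne.2) h0
      have hsp := hull_split hH hp hq hpq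
      set H1 := H.filter (fun x => 0 ≤ cross p q x) with hH1
      set H2 := H.filter (fun x => cross p q x ≤ 0) with hH2
      have s1 : H1 ⊆ H := Finset.filter_subset _ _
      have s2 : H2 ⊆ H := Finset.filter_subset _ _
      have l1 : H1.card < H.card := Finset.card_lt_card
        ((Finset.ssubset_iff_of_subset s1).2 ⟨v, hv, by simp [hH1, hpv]⟩)
      have l2 : H2.card < H.card := Finset.card_lt_card
        ((Finset.ssubset_iff_of_subset s2).2 ⟨u, hu, by simp [hH2, hpu]⟩)
      have hU : H1 ∪ H2 = H := by
        ext x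
        simp only [hH1, hH2, Finset.mem_union, Finset.mem_filter]
        have := le_total 0 (cross p q x)
        tauto
      have hI : H1 ∩ H2 = {p, q} := by
        ext x
        simp only [hH1, hH2, Finset.mem_inter, Finset.mem_filter, Finset.mem_insert,
          Finset.mem_singleton]
        constructor
        · rintro ⟨⟨h1, h2⟩, -, h3⟩
          exact hzero x (hTX (hHT h1)) (le_antisymm h3 h2)
        · rintro (rfl | rfl)
          · simp [hp, cp]
          · simp [hq, cq]
      have hcard := Finset.card_union_add_card_inter H1 H2
      rw [hU, hI, Finset.card_pair hpq] at hcard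
      have i1 := ih _ (hn ▸ l1) H1 (s1.trans hHT) (hH.mono s1) (by omega) rfl
      have i2 := ih _ (hn ▸ l2) H2 (s2.trans hHT) (hH.mono s2) (by omega) rfl
      have hT : cut T (convexHull ℝ (H : Set (ℝ × ℝ))) \ H ⊆
          (cut T (convexHull ℝ (H1 : Set (ℝ × ℝ))) \ H1) ∪
          (cut T (convexHull ℝ (H2 : Set (ℝ × ℝ))) \ H2) := by
        intro x hx
        simp only [Finset.mem_sdiff, mem_cut, Finset.mem_union] at hx ⊢
        have h1 : x ∉ H1 := fun h => hx.2 (s1 h)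
        have h2 : x ∉ H2 := fun h => hx.2 (s2 h)
        rcases hsp hx.1.2 with h | h
        · exact Or.inl ⟨⟨hx.1.1, h⟩, h1⟩
        · exact Or.inr ⟨⟨hx.1.1, h⟩, h2⟩
      have hY : cut Y (convexHull ℝ (H1 : Set (ℝ × ℝ))) ∪ cut Y (convexHull ℝ (H2 : Set (ℝ × ℝ)))
          ⊆ cut Y (convexHull ℝ (H : Set (ℝ × ℝ))) := by
        intro x hx
        simp only [mem_cut, Finset.mem_union] at hx ⊢
        rcases hx with hx | hx
        · exact ⟨hx.1, convexHull_mono (by exact_mod_cast s1) hx.2⟩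
        · exact ⟨hx.1, convexHull_mono (by exact_mod_cast s2) hx.2⟩
      have hdisj : Disjoint (cut Y (convexHull ℝ (H1 : Set (ℝ × ℝ))))
          (cut Y (convexHull ℝ (H2 : Set (ℝ × ℝ)))) := by
        rw [Finset.disjoint_left]
        intro x h1 h2
        rw [mem_cut] at h1 h2
        have n1 : 0 ≤ cross p q x := convexHull_min (t := {x | 0 ≤ cross p q x})
          (fun x hx => (Finset.mem_filter.1 hx).2) (convex_cross_nonneg p q) h1.2
        have n2 : cross p q x ≤ 0 := convexHull_min (t := {x | cross p q x ≤ 0})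
          (fun x hx => (Finset.mem_filter.1 hx).2) (convex_cross_nonpos p q) h2.2
        rcases hzero x (hYX h1.1) (le_antisymm n2 n1) with rfl | rfl
        · exact Finset.disjoint_left.1 hTY (hHT hp) h1.1
        · exact Finset.disjoint_left.1 hTY (hHT hq) h1.1
      have c1 := (Finset.card_le_card hT).trans (Finset.card_union_le _ _)
      have c2 := Finset.card_le_card hY
      rw [Finset.card_union_of_disjoint hdisj] at c2
      generalize (cut T (convexHull ℝ (H1 : Set (ℝ × ℝ))) \ H1).card = n1 at *
      generalize (cut T (convexHull ℝ (H2 : Set (ℝ × ℝ))) \ H2).card = n2 at *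
      generalize (cut T (convexHull ℝ (H : Set (ℝ × ℝ))) \ H).card = n0 at *
      have e : m * (2 * n0 + H.card) + 2 * m ≤ m * (2 * n1 + H1.card) + m * (2 * n2 + H2.card) := by
        calc m * (2 * n0 + H.card) + 2 * m ≤ m * (2 * (n1 + n2) + H.card) + 2 * m := by gcongr
          _ = m * (2 * (n1 + n2) + (H.card + 2)) := by ring
          _ = m * (2 * (n1 + n2) + (H1.card + H2.card)) := by rw [hcard]
          _ = _ := by ring
      linarith

/-! ### Counting in the hull of a point set and the upper bound -/

theorem nonext_subset (T : Finset (ℝ × ℝ)) : nonext T ⊆ T := fun _ hx => (mem_nonext.1 hx).1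

theorem nonext_of_card_le_two {T : Finset (ℝ × ℝ)} (h : T.card ≤ 2) : nonext T = ∅ := by
  classical
  rw [Finset.eq_empty_iff_forall_notMem]
  intro x hx
  rw [mem_nonext, ← Finset.coe_erase] at hx
  obtain ⟨hx, hx'⟩ := hx
  have hc : (T.erase x).card ≤ 1 := by rw [Finset.card_erase_of_mem hx]; omega
  obtain ⟨y, hy⟩ := Finset.card_le_one_iff_subset_singleton.1 hc
  rcases Finset.subset_singleton_iff.1 hy with h0 | h0
  · rw [h0] at hx'; simp at hx'
  · rw [h0] at hx'
    simp only [Finset.coe_singleton, convexHull_singleton, Set.mem_singleton_iff] at hx'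
    have : y ∈ T.erase x := by rw [h0]; simp
    exact (Finset.mem_erase.1 this).1 hx'.symm

open Classical in
theorem hull_vertices (T : Finset (ℝ × ℝ)) :
    convexHull ℝ ((T \ nonext T : Finset (ℝ × ℝ)) : Set (ℝ × ℝ)) =
      convexHull ℝ (T : Set (ℝ × ℝ)) := by
  apply (convexHull_mono (by exact_mod_cast Finset.sdiff_subset)).antisymm
  rw [← convexHull_extreme T.finite_toSet]
  apply convexHull_mono
  intro x hx
  have h1 : x ∈ T := by exact_mod_cast extremePoints_convexHull_subset hx
  have h2 := notMem_of_extreme hx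
  simp [mem_nonext, h1, h2]

/-- If every triangle with vertices in `T` contains at least `m` further points of `X`, then the
hull of `T` contains at least `m (|T| + i - 2)` points outside `T`, where `i` is the number of
points of `T` that are not vertices of the hull: a triangulation of `T` has `|T| + i - 2`
triangles. -/
theorem hull_count {X T : Finset (ℝ × ℝ)} (hX : CrossPos X) (hTX : T ⊆ X) {m : ℕ}
    (hm : ∀ C ⊆ T, C.card = 3 → m ≤ intCount X C) :
    m * (T.card + (nonext T).card) ≤
      ((cut X (convexHull ℝ (T : Set (ℝ × ℝ)))).filter (· ∉ T)).card + 2 * m := by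
  classical
  rcases le_or_gt T.card 2 with h2 | h3
  · rw [nonext_of_card_le_two h2, Finset.card_empty, add_zero]
    nlinarith
  have hYX : X \ T ⊆ X := Finset.sdiff_subset
  have hTY : Disjoint T (X \ T) := Finset.disjoint_sdiff
  have hsub : T \ nonext T ⊆ T := Finset.sdiff_subset
  have hm' : ∀ a ∈ T, ∀ b ∈ T, ∀ c ∈ T, 0 < cross a b c →
      (∀ t ∈ T, ¬ In3 a b c t) → m ≤ ((X \ T).filter (In3 a b c)).card := by
    intro a ha b hb c hc h hno
    have hab : a ≠ b := by rintro rfl; simp [cross] at h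
    have hbc : b ≠ c := by rintro rfl; simp [cross, mul_comm] at h
    have hac : a ≠ c := by rintro rfl; simp [cross] at h
    have hC : ({a, b, c} : Finset (ℝ × ℝ)) ⊆ T := by
      intro x hx
      simp only [Finset.mem_insert, Finset.mem_singleton] at hx
      rcases hx with rfl | rfl | rfl <;> assumption
    refine (hm {a, b, c} hC (Finset.card_eq_three.2 ⟨a, b, c, hab, hac, hbc, rfl⟩)).trans ?_
    rw [intCount, ← Set.ncard_coe_finset]
    refine Set.ncard_le_ncard ?_ (Finset.finite_toSet _)
    rintro x ⟨⟨hx, hx'⟩, hn⟩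
    simp only [Finset.coe_insert, Finset.coe_singleton, Set.mem_insert_iff,
      Set.mem_singleton_iff, not_or, Finset.mem_coe] at hx hx' hn
    have hin := (mem_tri_iff_in3 hX (hTX ha) (hTX hb) (hTX hc) hx h hn.1 hn.2.1 hn.2.2).1 hx'
    simp only [Finset.coe_filter, Finset.mem_sdiff, Set.mem_ofPred_eq]
    exact ⟨⟨hx, fun hxT => hno x hxT hin⟩, hin⟩
  have hCP : ConvexPos (T \ nonext T) := by
    intro q hq hq'
    rw [Finset.mem_sdiff] at hq
    exact hq.2 (mem_nonext.2 ⟨hq.1, convexHull_mono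
      (Set.sdiff_subset_sdiff_left (by exact_mod_cast hsub)) hq'⟩)
  have hcard : 3 ≤ (T \ nonext T).card := by
    by_contra hlt
    obtain ⟨u, v, huv⟩ : ∃ u v, ((T \ nonext T : Finset (ℝ × ℝ)) : Set (ℝ × ℝ)) ⊆ {u, v} := by
      have : (T \ nonext T).card = 0 ∨ (T \ nonext T).card = 1 ∨ (T \ nonext T).card = 2 := by
        omega
      rcases this with h | h | h
      · rw [Finset.card_eq_zero] at h
        exact ⟨0, 0, by simp [h]⟩
      · obtain ⟨a, h⟩ := Finset.card_eq_one.1 h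
        exact ⟨a, a, by simp [h]⟩
      · obtain ⟨a, b, -, h⟩ := Finset.card_eq_two.1 h
        exact ⟨a, b, by simp [h]⟩
    have hl : ∀ x ∈ T, x ∈ affineSpan ℝ ({u, v} : Set (ℝ × ℝ)) := by
      intro x hx
      apply convexHull_subset_affineSpan
      apply convexHull_mono huv
      rw [hull_vertices]
      exact subset_convexHull ℝ _ hx
    obtain ⟨A, hAT, hA⟩ := Finset.exists_subset_card_eq (show 3 ≤ T.card from h3)
    obtain ⟨a, b, c, hab, hac, hbc, rfl⟩ := Finset.card_eq_three.1 hA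
    have ha : a ∈ T := hAT (by simp)
    have hb : b ∈ T := hAT (by simp)
    have hc : c ∈ T := hAT (by simp)
    exact hX a (hTX ha) b (hTX hb) c (hTX hc) hab hac hbc ((collinear_iff_cross hab).1
      (collinear_triple_of_mem_affineSpan_pair (hl a ha) (hl b hb) (hl c hc)))
  have key := poly_count hX hTX hYX hTY hm' _ (T \ nonext T) hsub hCP hcard rfl
  rw [hull_vertices] at key
  have e1 : cut T (convexHull ℝ (T : Set (ℝ × ℝ))) \ (T \ nonext T) = nonext T := by
    ext x
    simp only [Finset.mem_sdiff, mem_cut, not_and, not_not]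
    constructor
    · rintro ⟨⟨h1, -⟩, h2⟩
      exact h2 h1
    · intro h
      exact ⟨⟨nonext_subset T h, subset_convexHull ℝ _ (nonext_subset T h)⟩, fun _ => h⟩
  have e2 : cut (X \ T) (convexHull ℝ (T : Set (ℝ × ℝ))) =
      (cut X (convexHull ℝ (T : Set (ℝ × ℝ)))).filter (· ∉ T) := by
    ext x
    simp only [mem_cut, Finset.mem_sdiff, Finset.mem_filter]
    tauto
  rw [e1, e2] at key
  have e3 := Finset.card_sdiff_add_card_eq_card (nonext_subset T)
  have e4 : T.card + (nonext T).card = 2 * (nonext T).card + (T \ nonext T).card := by omega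
  rw [e4]
  exact key

/-- A set `X` in general position, split into classes `P`, `Q` without empty triangles and a
class `W` all of whose triangles contain at least four points. -/
structure Cfg (X P Q W : Finset (ℝ × ℝ)) : Prop where
  gp : CrossPos X
  sP : P ⊆ X
  sQ : Q ⊆ X
  sW : W ⊆ X
  cov : ∀ x ∈ X, x ∈ P ∨ x ∈ Q ∨ x ∈ W
  dPQ : Disjoint P Q
  dPW : Disjoint P W
  dQW : Disjoint Q W
  tP : ∀ C ⊆ P, C.card = 3 → 1 ≤ intCount X C
  tQ : ∀ C ⊆ Q, C.card = 3 → 1 ≤ intCount X C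
  tW : ∀ C ⊆ W, C.card = 3 → 4 ≤ intCount X C

namespace Cfg

variable {X P Q W : Finset (ℝ × ℝ)}

theorem symm (h : Cfg X P Q W) : Cfg X Q P W :=
  ⟨h.gp, h.sQ, h.sP, h.sW, fun x hx => by have := h.cov x hx; tauto,
    h.dPQ.symm, h.dQW, h.dPW, h.tQ, h.tP, h.tW⟩

/-- `hull_count` for the points of one class in a convex region, with the points counted by the
bound sorted by class. -/
theorem class_count {A B D X : Finset (ℝ × ℝ)} (hX : CrossPos X) (hA : A ⊆ X)
    (hcov : ∀ x ∈ X, x ∈ A ∨ x ∈ B ∨ x ∈ D) {m : ℕ}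
    (hm : ∀ C ⊆ A, C.card = 3 → m ≤ intCount X C) {K : Set (ℝ × ℝ)} (hK : Convex ℝ K)
    {S : Finset (ℝ × ℝ)} (hS : S = cut A K) :
    m * (S.card + (nonext S).card) ≤ (cut B (convexHull ℝ (S : Set (ℝ × ℝ)))).card +
      (cut D (convexHull ℝ (S : Set (ℝ × ℝ)))).card + 2 * m := by
  classical
  have hSA : S ⊆ A := by
    rw [hS]; exact fun x hx => (mem_cut.1 hx).1
  have hSK : convexHull ℝ (S : Set (ℝ × ℝ)) ⊆ K := by
    refine convexHull_min ?_ hK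
    intro x hx
    rw [hS] at hx
    exact (mem_cut.1 hx).2
  have h := hull_count hX (hSA.trans hA) (fun C hC => hm C (hC.trans hSA))
  have hs : (cut X (convexHull ℝ (S : Set (ℝ × ℝ)))).filter (· ∉ S) ⊆
      cut B (convexHull ℝ (S : Set (ℝ × ℝ))) ∪ cut D (convexHull ℝ (S : Set (ℝ × ℝ))) := by
    intro x hx
    simp only [Finset.mem_filter, mem_cut, Finset.mem_union] at hx ⊢
    rcases hcov x hx.1.1 with h1 | h1 | h1
    · exact absurd (hS ▸ mem_cut.2 ⟨h1, hSK hx.1.2⟩) hx.2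
    · exact Or.inl ⟨h1, hx.1.2⟩
    · exact Or.inr ⟨h1, hx.1.2⟩
  have h1 := (Finset.card_le_card hs).trans (Finset.card_union_le _ _)
  omega

theorem countP (h : Cfg X P Q W) {K : Set (ℝ × ℝ)} (hK : Convex ℝ K) {S : Finset (ℝ × ℝ)}
    (hS : S = cut P K) : S.card + (nonext S).card ≤ (cut Q (convexHull ℝ (S : Set (ℝ × ℝ)))).card +
      (cut W (convexHull ℝ (S : Set (ℝ × ℝ)))).card + 2 := by
  have := class_count h.gp h.sP h.cov h.tP hK hS
  omega

theorem countW (h : Cfg X P Q W) {K : Set (ℝ × ℝ)} (hK : Convex ℝ K) {S : Finset (ℝ × ℝ)}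
    (hS : S = cut W K) :
    4 * (S.card + (nonext S).card) ≤ (cut P (convexHull ℝ (S : Set (ℝ × ℝ)))).card +
      (cut Q (convexHull ℝ (S : Set (ℝ × ℝ)))).card + 8 := by
  have := class_count (A := W) (B := P) (D := Q) h.gp h.sW
    (fun x hx => by have := h.cov x hx; tauto) h.tW hK hS
  omega

theorem hull_cut_subset {A : Finset (ℝ × ℝ)} {K : Set (ℝ × ℝ)} (hK : Convex ℝ K) :
    convexHull ℝ (cut A K : Set (ℝ × ℝ)) ⊆ K :=
  convexHull_min (fun _ hx => (mem_cut.1 hx).2) hK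

/-- Let `S` be a convex piece of a class `A`, and let `Z` be points of another class in its hull.
Then the points of `A` in the hull of `Z` are inner points of `S`. -/
theorem cut_subset_nonext {A S Z : Finset (ℝ × ℝ)} {K : Set (ℝ × ℝ)} (hK : Convex ℝ K)
    (hS : S = cut A K) (hAZ : Disjoint A Z)
    (hZ : (Z : Set (ℝ × ℝ)) ⊆ convexHull ℝ (S : Set (ℝ × ℝ))) :
    cut A (convexHull ℝ (Z : Set (ℝ × ℝ))) ⊆ nonext S := by
  intro x hx
  rw [mem_cut] at hx
  refine mem_nonext_of ?_ hZ hx.2 (fun hxZ => Finset.disjoint_left.1 hAZ hx.1 hxZ)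
  have h1 : convexHull ℝ (S : Set (ℝ × ℝ)) ⊆ K := hS ▸ hull_cut_subset hK
  rw [hS, mem_cut]
  exact ⟨hx.1, h1 (convexHull_min hZ (convex_convexHull ℝ _) hx.2)⟩

theorem cut_le (A : Finset (ℝ × ℝ)) (K : Set (ℝ × ℝ)) : cut A K ⊆ A :=
  fun _ hx => (mem_cut.1 hx).1

theorem coe_cut_subset (A : Finset (ℝ × ℝ)) (K : Set (ℝ × ℝ)) : (cut A K : Set (ℝ × ℝ)) ⊆ K :=
  fun _ hx => (mem_cut.1 hx).2

/-- Two rounds of counting: first in the hull of `S ⊆ P`, then in the hull of the points of `Q`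
found there. -/
theorem two_step (h : Cfg X P Q W) {K : Set (ℝ × ℝ)} (hK : Convex ℝ K) {S Q' : Finset (ℝ × ℝ)}
    (hS : S = cut P K) (hQ : Q' = cut Q (convexHull ℝ (S : Set (ℝ × ℝ)))) :
    S.card + (nonext S).card ≤ Q'.card + (cut W (convexHull ℝ (S : Set (ℝ × ℝ)))).card + 2 ∧
    Q'.card + (nonext Q').card ≤ (cut P (convexHull ℝ (Q' : Set (ℝ × ℝ)))).card +
      (cut W (convexHull ℝ (Q' : Set (ℝ × ℝ)))).card + 2 ∧
    cut P (convexHull ℝ (Q' : Set (ℝ × ℝ))) ⊆ nonext S := by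
  refine ⟨?_, h.symm.countP (convex_convexHull ℝ _) hQ, ?_⟩
  · rw [hQ]; exact h.countP hK hS
  · exact cut_subset_nonext hK hS (hQ ▸ h.dPQ.mono_right (cut_le _ _)) (hQ ▸ coe_cut_subset _ _)

/-- A class has at most `4 + 2 i` points in the hull of `W`, with `i` the number of inner points
of `W`. -/
theorem inner_bound (h : Cfg X P Q W) :
    (cut P (convexHull ℝ (W : Set (ℝ × ℝ)))).card ≤ 4 + 2 * (nonext W).card := by
  have hWu : W = cut W Set.univ := by ext; simp [mem_cut]
  obtain ⟨S, hS⟩ : ∃ S, S = cut P (convexHull ℝ (W : Set (ℝ × ℝ))) := ⟨_, rfl⟩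
  obtain ⟨Q', hQ'⟩ : ∃ Q', Q' = cut Q (convexHull ℝ (S : Set (ℝ × ℝ))) := ⟨_, rfl⟩
  obtain ⟨h1, h2, h3⟩ := h.two_step (convex_convexHull ℝ (W : Set (ℝ × ℝ))) hS hQ'
  have h4 := Finset.card_le_card h3
  have hSW : (S : Set (ℝ × ℝ)) ⊆ convexHull ℝ (W : Set (ℝ × ℝ)) := hS ▸ coe_cut_subset _ _
  have hQS : (Q' : Set (ℝ × ℝ)) ⊆ convexHull ℝ (S : Set (ℝ × ℝ)) := hQ' ▸ coe_cut_subset _ _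
  have hQW : (Q' : Set (ℝ × ℝ)) ⊆ convexHull ℝ (W : Set (ℝ × ℝ)) :=
    hQS.trans (convexHull_min hSW (convex_convexHull ℝ _))
  have h5 := Finset.card_le_card (cut_subset_nonext convex_univ hWu
    (h.dPW.symm.mono_right (hS ▸ cut_le P _)) hSW)
  have h6 := Finset.card_le_card (cut_subset_nonext convex_univ hWu
    (h.dQW.symm.mono_right (hQ' ▸ cut_le Q _)) hQW)
  rw [← hS]
  omega

/-- With at most four points in `W`, a class without empty triangles has at most nine points. -/
theorem card_le_nine (h : Cfg X P Q W) (hW4 : W.card ≤ 4) : P.card ≤ 9 := by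
  by_contra hP
  have hPu : P = cut P Set.univ := by ext; simp [mem_cut]
  have hWu : W = cut W Set.univ := by ext; simp [mem_cut]
  obtain ⟨Q', hQ'⟩ : ∃ Q', Q' = cut Q (convexHull ℝ (P : Set (ℝ × ℝ))) := ⟨_, rfl⟩
  obtain ⟨W', hW'⟩ : ∃ W', W' = cut W (convexHull ℝ (P : Set (ℝ × ℝ))) := ⟨_, rfl⟩
  obtain ⟨W'', hW''⟩ : ∃ W'', W'' = cut W (convexHull ℝ (Q' : Set (ℝ × ℝ))) := ⟨_, rfl⟩
  obtain ⟨a1, a2, a3⟩ := h.two_step convex_univ hPu hQ'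
  rw [← hW'] at a1
  rw [← hW''] at a2
  have a3' := Finset.card_le_card a3
  have hW'W : W'.card ≤ W.card := Finset.card_le_card (hW' ▸ cut_le _ _)
  have hQP : (Q' : Set (ℝ × ℝ)) ⊆ convexHull ℝ (P : Set (ℝ × ℝ)) := hQ' ▸ coe_cut_subset _ _
  have hQP' := convexHull_min hQP (convex_convexHull ℝ _)
  have hWQ : (W'' : Set (ℝ × ℝ)) ⊆ convexHull ℝ (Q' : Set (ℝ × ℝ)) := hW'' ▸ coe_cut_subset _ _
  -- points of `Q` in the hull of `W''` are inner points of `Q'`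
  have b1 := Finset.card_le_card (cut_subset_nonext (convex_convexHull ℝ _) hQ'
    (h.dQW.mono_right (hW'' ▸ cut_le W _)) hWQ)
  -- many points of `W''` force many points of `Q` in the hull of `W''`
  obtain ⟨S, hS⟩ : ∃ S, S = cut P (convexHull ℝ (W'' : Set (ℝ × ℝ))) := ⟨_, rfl⟩
  have hSW : (S : Set (ℝ × ℝ)) ⊆ convexHull ℝ (W'' : Set (ℝ × ℝ)) := hS ▸ coe_cut_subset _ _
  have b2 := h.countW (convex_convexHull ℝ _) hW''
  have b3 := h.countP (convex_convexHull ℝ _) hS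
  rw [← hS] at b2
  have b4 := Finset.card_le_card (cut_subset_nonext (convex_convexHull ℝ _) hW''
    (h.dPW.symm.mono_right (hS ▸ cut_le P _)) hSW)
  have b5 : (cut Q (convexHull ℝ (S : Set (ℝ × ℝ)))).card ≤
      (cut Q (convexHull ℝ (W'' : Set (ℝ × ℝ)))).card := by
    apply Finset.card_le_card
    intro x hx
    rw [mem_cut] at hx ⊢
    exact ⟨hx.1, convexHull_min hSW (convex_convexHull ℝ _) hx.2⟩
  have hW''W' : W''.card ≤ W'.card := by
    apply Finset.card_le_card
    intro x hx
    rw [hW'', mem_cut] at hx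
    rw [hW', mem_cut]
    exact ⟨hx.1, hQP' hx.2⟩
  have c1 : W'.card = 4 := by omega
  have c2 : (nonext Q').card + 2 = W''.card := by omega
  have c3 : W''.card ≤ 3 := by omega
  have c4 : W.card = 4 := by omega
  have c5 : W' = W := Finset.eq_of_subset_of_card_le (hW' ▸ cut_le _ _) (by omega)
  -- the counts are tight, so the hull of `Q'` contains all inner points of `P`
  have c6 : cut P (convexHull ℝ (Q' : Set (ℝ × ℝ))) = nonext P :=
    Finset.eq_of_subset_of_card_le a3 (by omega)
  have hWP : (W : Set (ℝ × ℝ)) ⊆ convexHull ℝ (P : Set (ℝ × ℝ)) := by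
    rw [← c5, hW']; exact coe_cut_subset _ _
  have hWP' := convexHull_min hWP (convex_convexHull ℝ _)
  obtain ⟨R, hR⟩ : ∃ R, R = cut P (convexHull ℝ (W : Set (ℝ × ℝ))) := ⟨_, rfl⟩
  have hRW : (R : Set (ℝ × ℝ)) ⊆ convexHull ℝ (W : Set (ℝ × ℝ)) := hR ▸ coe_cut_subset _ _
  have hRP : R ⊆ nonext P := hR ▸ cut_subset_nonext convex_univ hPu h.dPW hWP
  have hRQ : (R : Set (ℝ × ℝ)) ⊆ convexHull ℝ (Q' : Set (ℝ × ℝ)) := by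
    intro x hx
    have := hRP hx
    rw [← c6, mem_cut] at this
    exact this.2
  have d1 := h.countP (convex_convexHull ℝ _) hR
  have d2 := h.countW convex_univ hWu
  rw [← hR] at d2
  have d3 := h.symm.inner_bound
  have d4 := Finset.card_le_card (cut_subset_nonext convex_univ hWu
    (h.dPW.symm.mono_right (hR ▸ cut_le P _)) hRW)
  have d5 := Finset.card_le_card (cut_subset_nonext (convex_convexHull ℝ _) hQ'
    (h.dPQ.symm.mono_right (hR ▸ cut_le P _)) hRQ)
  omega

theorem card_le (h : Cfg X P Q W) : P.card + Q.card + W.card ≤ 22 := by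
  have hWu : W = cut W Set.univ := by ext; simp [mem_cut]
  have h1 := h.countW convex_univ hWu
  have h2 := h.inner_bound
  have h3 := h.symm.inner_bound
  have h4 : W.card ≤ 4 := by omega
  have h5 := h.card_le_nine h4
  have h6 := h.symm.card_le_nine h4
  omega

end Cfg

/-! ### A configuration of 22 points -/

/-- Abscissas of the example. Points `2k` and `2k+1` are antipodal. -/
def exX : Fin 22 → ℤ := ![1489, -1489, -41537, 41537, 4156, -4156, 4447, -4447, -31701, 31701,
  -1651, 1651, -20088, 20088, -62372, 62372, -1080, 1080, -3085, 3085, 1583, -1583]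

/-- Ordinates of the example. -/
def exY : Fin 22 → ℤ := ![-7015, 7015, -31299, 31299, 362, -362, -11714, 11714, -2898, 2898,
  13803, -13803, -69602, 69602, -49254, 49254, -7499, 7499, 664, -664, 8563, -8563]

/-- Colors of the example: four points of color `2`, and antipodal pairs of colors `0`, `1`. -/
def exCol : Fin 22 → Fin 3 := ![2, 2, 2, 2, 0, 1, 0, 1, 0, 1, 0, 1, 0, 1, 0, 1, 0, 1, 0, 1, 0, 1]

/-- The orientation determinant of three points of the example, over `ℤ`. -/
def exCross (i j k : Fin 22) : ℤ :=
  (exX j - exX i) * (exY k - exY i) - (exY j - exY i) * (exX k - exX i)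

/-- The points of the example inside the positively oriented triangle `ijk`. -/
def exIn (i j k : Fin 22) : Finset (Fin 22) :=
  Finset.univ.filter fun l => 0 < exCross i j l ∧ 0 < exCross j k l ∧ 0 < exCross k i l

/-- The number of interior points that triangles of each color need. -/
def exNeed : Fin 3 → ℕ := ![1, 1, 4]

theorem ex_gp : ∀ i j k : Fin 22, i < j → j < k → exCross i j k ≠ 0 := by
  decide +kernel

theorem ex_tri : ∀ i j k : Fin 22, exCol i = exCol j → exCol i = exCol k → 0 < exCross i j k →
    exNeed (exCol i) ≤ (exIn i j k).card := by
  decide +kernel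

/-- The points of the example in the plane. -/
def exPt (i : Fin 22) : ℝ × ℝ := (exX i, exY i)

theorem exCross_cast (i j k : Fin 22) : cross (exPt i) (exPt j) (exPt k) = (exCross i j k : ℝ) := by
  simp [cross, exPt, exCross]

theorem exCross_ne {i j k : Fin 22} (hij : i ≠ j) (hik : i ≠ k) (hjk : j ≠ k) :
    exCross i j k ≠ 0 := by
  have s1 : ∀ a b c, exCross b a c = - exCross a b c := fun a b c => by unfold exCross; ring
  have s2 : ∀ a b c, exCross a c b = - exCross a b c := fun a b c => by unfold exCross; ring
  rcases lt_or_gt_of_ne hij with h1 | h1 <;> rcases lt_or_gt_of_ne hik with h2 | h2 <;>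
    rcases lt_or_gt_of_ne hjk with h3 | h3
  · exact ex_gp _ _ _ h1 h3
  · rw [s2, neg_ne_zero]; exact ex_gp _ _ _ h2 h3
  · omega
  · rw [s2, s1, neg_neg]; exact ex_gp _ _ _ h2 h1
  · rw [s1, neg_ne_zero]; exact ex_gp _ _ _ h1 h2
  · omega
  · rw [s1, s2, neg_neg]; exact ex_gp _ _ _ h3 h2
  · rw [s1, s2, s1, neg_neg, neg_ne_zero]; exact ex_gp _ _ _ h3 h1

theorem exPt_inj : Function.Injective exPt := by
  have h : ∀ i j : Fin 22, exX i = exX j → i = j := by decide +kernel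
  intro i j hij
  apply h
  have := congrArg Prod.fst hij
  simpa [exPt] using this

/-- The point set of the example. -/
noncomputable def exSet : Finset (ℝ × ℝ) := Finset.univ.map ⟨exPt, exPt_inj⟩

theorem exPt_mem (i : Fin 22) : exPt i ∈ exSet := by
  simp [exSet]

theorem ex_int_pos {i j k : Fin 22} (h1 : exCol i = exCol j) (h2 : exCol i = exCol k)
    (h : 0 < exCross i j k) :
    exNeed (exCol i) ≤ intCount exSet {exPt i, exPt j, exPt k} := by
  refine (ex_tri i j k h1 h2 h).trans ?_
  have hc : (0 : ℝ) < cross (exPt i) (exPt j) (exPt k) := by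
    rw [exCross_cast]; exact_mod_cast h
  rw [intCount, ← Finset.card_map ⟨exPt, exPt_inj⟩, ← Set.ncard_coe_finset]
  refine Set.ncard_le_ncard ?_ ((Finset.finite_toSet exSet).subset
    (Set.sdiff_subset.trans Set.inter_subset_left))
  intro x hx
  simp only [exIn, Finset.coe_map, Set.mem_image, Finset.mem_coe, Finset.mem_filter,
    Function.Embedding.coeFn_mk] at hx
  obtain ⟨l, ⟨-, l1, l2, l3⟩, rfl⟩ := hx
  have hin : In3 (exPt i) (exPt j) (exPt k) (exPt l) := by
    simp only [In3, exCross_cast]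
    exact ⟨by exact_mod_cast l1, by exact_mod_cast l2, by exact_mod_cast l3⟩
  simp only [Finset.coe_insert, Finset.coe_singleton]
  refine ⟨⟨exPt_mem l, (mem_tri_iff hc).2 ⟨hin.1.le, hin.2.1.le, hin.2.2.le⟩⟩, ?_⟩
  simpa using hin.ne

/-- The coloring of the example. -/
noncomputable def exChi : ℝ × ℝ → Fin 3 := fun x => exCol (Function.invFun exPt x)

theorem exChi_pt (i : Fin 22) : exChi (exPt i) = exCol i := by
  rw [exChi, Function.leftInverse_invFun exPt_inj]

theorem ex_no (c : Fin 3) (m : ℕ) (hm : m < exNeed c) : ¬ HasTri exSet exChi c m := by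
  rintro ⟨C, hC, h3, hcol, hle⟩
  obtain ⟨a, b, d, hab, had, hbd, rfl⟩ := Finset.card_eq_three.1 h3
  have pt : ∀ x ∈ ({a, b, d} : Finset (ℝ × ℝ)), ∃ i, exPt i = x ∧ exCol i = c := by
    intro x hx
    have h1 := hC hx
    simp only [exSet, Finset.mem_map, Finset.mem_univ, true_and,
      Function.Embedding.coeFn_mk] at h1
    obtain ⟨i, rfl⟩ := h1
    exact ⟨i, rfl, exChi_pt i ▸ hcol _ hx⟩
  obtain ⟨i, rfl, hi⟩ := pt a (by simp)
  obtain ⟨j, rfl, hj⟩ := pt b (by simp)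
  obtain ⟨k, rfl, hk⟩ := pt d (by simp)
  have hij : i ≠ j := fun h => hab (congrArg _ h)
  have hik : i ≠ k := fun h => had (congrArg _ h)
  have hjk : j ≠ k := fun h => hbd (congrArg _ h)
  rcases lt_or_gt_of_ne (exCross_ne hij hik hjk) with h | h
  · have h' : 0 < exCross j i k := by
      have : exCross j i k = - exCross i j k := by unfold exCross; ring
      omega
    have := ex_int_pos (hj.trans hi.symm) (hj.trans hk.symm) h'
    rw [Finset.insert_comm, hj] at this
    omega
  · have := ex_int_pos (hi.trans hj.symm) (hi.trans hk.symm) h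
    rw [hi] at this
    omega

theorem ex_genPos : GenPos exSet := by
  have mem : ∀ x ∈ exSet, ∃ i, exPt i = x := by
    intro x hx
    simpa [exSet] using hx
  intro p hp q hq r hr hpq hpr hqr hcol
  obtain ⟨i, rfl⟩ := mem p hp
  obtain ⟨j, rfl⟩ := mem q hq
  obtain ⟨k, rfl⟩ := mem r hr
  rw [collinear_iff_cross hpq, exCross_cast] at hcol
  exact exCross_ne (fun h => hpq (congrArg _ h)) (fun h => hpr (congrArg _ h))
    (fun h => hqr (congrArg _ h)) (by exact_mod_cast hcol)

theorem upper_bound (X : Finset (ℝ × ℝ)) (hcard : X.card = 23) (hX : GenPos X)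
    (χ : ℝ × ℝ → Fin 3) : HasTri X χ 0 0 ∨ HasTri X χ 1 0 ∨ HasTri X χ 2 3 := by
  by_contra hno
  simp only [not_or] at hno
  obtain ⟨h0, h1, h2⟩ := hno
  have tri : ∀ (c : Fin 3) (m : ℕ), ¬ HasTri X χ c m →
      ∀ C ⊆ X.filter (fun x => χ x = c), C.card = 3 → m + 1 ≤ intCount X C := by
    intro c m h C hC h3
    by_contra hlt
    exact h ⟨C, hC.trans (Finset.filter_subset _ _), h3,
      fun p hp => (Finset.mem_filter.1 (hC hp)).2, by omega⟩
  have hd : ∀ c d : Fin 3, c ≠ d →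
      Disjoint (X.filter (fun x => χ x = c)) (X.filter (fun x => χ x = d)) := by
    intro c d hcd
    rw [Finset.disjoint_filter]
    exact fun x _ hc hd => hcd (hc.symm.trans hd)
  have hcfg : Cfg X (X.filter (fun x => χ x = 0)) (X.filter (fun x => χ x = 1))
      (X.filter (fun x => χ x = 2)) := by
    refine ⟨hX.crossPos, Finset.filter_subset _ _, Finset.filter_subset _ _,
      Finset.filter_subset _ _, ?_, hd _ _ (by decide), hd _ _ (by decide), hd _ _ (by decide),
      tri 0 0 h0, tri 1 0 h1, tri 2 3 h2⟩
    intro x hx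
    simp only [Finset.mem_filter, hx, true_and]
    generalize χ x = c
    fin_cases c <;> simp
  have hle := hcfg.card_le
  have hsum := Finset.card_eq_sum_card_fiberwise (s := X) (t := Finset.univ) (f := χ)
    (fun _ _ => by simp)
  rw [Fin.sum_univ_three] at hsum
  omega

/-- h(3,0;3,0;3,3) = 23. -/
theorem h_303033_eq_23 :
    (∀ X : Finset (ℝ × ℝ), X.card = 23 → GenPos X →
      ∀ χ : ℝ × ℝ → Fin 3, HasTri X χ 0 0 ∨ HasTri X χ 1 0 ∨ HasTri X χ 2 3) ∧
    (∃ X : Finset (ℝ × ℝ), X.card = 22 ∧ GenPos X ∧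
      ∃ χ : ℝ × ℝ → Fin 3, ¬ HasTri X χ 0 0 ∧ ¬ HasTri X χ 1 0 ∧ ¬ HasTri X χ 2 3) := by
  refine ⟨upper_bound, exSet, ?_, ex_genPos, exChi, ?_, ?_, ?_⟩
  · simp [exSet]
  · exact ex_no 0 0 (by decide)
  · exact ex_no 1 0 (by decide)
  · exact ex_no 2 3 (by decide)
end
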